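/- The Poincaré polynomial of the real Grassmannian Gr(2j, 2m) over ℚ equals the q-binomial coefficient [m choose j]_{t^4}; that is, Σ_i dim_ℚ H^i(Gr(2j,2m); ℚ) t^i = [m choose j]_{t^4}. -/

import Mathlib

/-!
Order the Plücker charts of the Grassmannian by the weight of their pivot set. Each union of the
first charts is open, and adding the next chart changes its homology by the homology of `ℝ^d`
relative to the vectors that are nonzero somewhere on a set of `c` coordinates; this has rank one,
in degree `c`, the dimension of the Schubert cell.

Changing the signs of paired coordinates is isotopic to the identity in the rotation group, so the
finite group of these changes acts trivially on the homology, and when `2` is invertible the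
homology is computed by invariant chains. In the invariant homology a cell counts only if the group
acts trivially on its local homology, which forces the pivot set to consist of whole coordinate
pairs. The remaining cells have dimension `4 * inversions J` for a `j`-subset `J` of `range m`; as
all these degrees are even nothing cancels, and counting subsets by inversions gives the Gaussian
binomial coefficient.
-/

open CategoryTheory Polynomial

/-- The singular chain complex of a topological space `X` with coefficients in `R`,
i.e. the alternating face map complex of the free simplicial `R`-module on the
singular simplicial set of `X`. -/
noncomputable def singularChainComplex (R : Type) [CommRing R] (X : TopCat) :
    ChainComplex (ModuleCat R) ℕ :=
  (AlgebraicTopology.alternatingFaceMapComplex (ModuleCat R)).obj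
    (TopCat.toSSet.obj X ⋙ ModuleCat.free R)

/-- Singular cohomology of `X` with coefficients in `R`, the homology of the dual
cochain complex `Hom(C_•(X; R), R)`. -/
noncomputable def singularCohomology (R : Type) [CommRing R] (X : TopCat) (n : ℕ) :
    ModuleCat R :=
  (((((linearYoneda R (ModuleCat R)).obj (ModuleCat.of R R)).mapHomologicalComplex _).obj
    (singularChainComplex R X).op)).homology n


/-- The setoid on linearly independent `k`-frames in `ℝⁿ` identifying frames with the
same span. -/
def grassSetoid (k n : ℕ) :
    Setoid {A : Fin k → (Fin n → ℝ) // LinearIndependent ℝ A} :=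
  Setoid.ker fun A => Submodule.span ℝ (Set.range (A.1))

/-- The real Grassmann manifold `Gr(k, n)` of `k`-dimensional linear subspaces of `ℝⁿ`,
topologized as the quotient of the space of linearly independent `k`-frames. -/
def Grassmannian (k n : ℕ) : Type := _root_.Quotient (grassSetoid k n)

noncomputable instance (k n : ℕ) : TopologicalSpace (Grassmannian k n) :=
  inferInstanceAs (TopologicalSpace (_root_.Quotient _))

/-- The `q`-integer `[r]_q = 1 + q + ⋯ + q^(r-1)` as a polynomial in `q`. -/
noncomputable def qInt (r : ℕ) : Polynomial ℤ := ∑ i ∈ Finset.range r, X ^ i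

/-- The `q`-factorial `[r]_q! = [r]_q [r-1]_q ⋯ [1]_q`. -/
noncomputable def qFact : ℕ → Polynomial ℤ
  | 0 => 1
  | r + 1 => qInt (r + 1) * qFact r

section OrderedChains

variable {R K K' K'' L M : Type*} [CommRing R] [AddCommGroup M] [Module R M]

variable (R K) in
/-- The module of ordered chains of `K`: formal linear combinations of finite sequences of points,
of all lengths at once. Sequences of length `n` stand for simplices of dimension `n - 1`, so that
the empty sequence provides an augmentation. -/
abbrev SeqChain : Type _ := (Σ n : ℕ, Fin n → K) →₀ R

variable (R) in
/-- The basis element of `SeqChain R K` given by a sequence. -/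
noncomputable abbrev ofSeq {n : ℕ} (w : Fin n → K) : SeqChain R K := Finsupp.single ⟨n, w⟩ 1

/-- Extension by linearity of a function on finite sequences. -/
noncomputable def seqLift (φ : ∀ n : ℕ, (Fin n → K) → M) : SeqChain R K →ₗ[R] M :=
  Finsupp.linearCombination R fun s ↦ φ s.1 s.2

lemma seqLift_ofSeq (φ : ∀ n : ℕ, (Fin n → K) → M) {n : ℕ} (w : Fin n → K) :
    seqLift φ (ofSeq R w) = φ n w := by
  rw [seqLift, Finsupp.linearCombination_single, one_smul]

lemma SeqChain.hom_congr {f g : SeqChain R K →ₗ[R] M}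
    (h : ∀ (n : ℕ) (w : Fin n → K), f (ofSeq R w) = g (ofSeq R w)) (x : SeqChain R K) :
    f x = g x :=
  LinearMap.congr_fun (Finsupp.lhom_ext' fun s ↦ LinearMap.ext_ring (h s.1 s.2)) x

/-- The boundary operator of ordered chains, in which the boundary of a point is the empty
sequence. -/
noncomputable def seqBoundary : SeqChain R K →ₗ[R] SeqChain R K :=
  seqLift fun
    | 0, _ => 0
    | n + 1, w => ∑ i : Fin (n + 1), (-1 : R) ^ (i : ℕ) • ofSeq R (w ∘ i.succAbove)

/-- The cone with apex `v`. -/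
noncomputable def seqCone (v : K) : SeqChain R K →ₗ[R] SeqChain R K :=
  seqLift fun _ w ↦ ofSeq R (Fin.cons v w : Fin _ → K)

/-- The map of ordered chains induced by a map of point sets. -/
noncomputable def seqMap (f : K → K') : SeqChain R K →ₗ[R] SeqChain R K' :=
  seqLift fun _ w ↦ ofSeq R (f ∘ w)

lemma seqBoundary_ofSeq_zero (w : Fin 0 → K) : seqBoundary (ofSeq R w) = 0 := by
  rw [seqBoundary, seqLift_ofSeq]

lemma seqBoundary_ofSeq_succ {n : ℕ} (w : Fin (n + 1) → K) :
    seqBoundary (ofSeq R w) =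
      ∑ i : Fin (n + 1), (-1 : R) ^ (i : ℕ) • ofSeq R (w ∘ i.succAbove) := by
  rw [seqBoundary, seqLift_ofSeq]

lemma seqCone_ofSeq (v : K) {n : ℕ} (w : Fin n → K) :
    seqCone v (ofSeq R w) = ofSeq R (Fin.cons v w : Fin (n + 1) → K) := by
  rw [seqCone, seqLift_ofSeq]

lemma ofSeq_eq_seqCone {n : ℕ} (w : Fin (n + 1) → K) :
    ofSeq R w = seqCone (w 0) (ofSeq R (Fin.tail w)) := by
  rw [seqCone_ofSeq, Fin.cons_self_tail]

lemma seqMap_ofSeq (f : K → K') {n : ℕ} (w : Fin n → K) :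
    seqMap f (ofSeq R w) = ofSeq R (f ∘ w) := by
  rw [seqMap, seqLift_ofSeq]

lemma seqMap_seqMap (g : K' → K'') (f : K → K') (x : SeqChain R K) :
    seqMap g (seqMap f x) = seqMap (g ∘ f) x := by
  refine SeqChain.hom_congr (f := seqMap g ∘ₗ seqMap f) (g := seqMap (g ∘ f)) (fun n w ↦ ?_) x
  simp only [LinearMap.comp_apply, seqMap_ofSeq, Function.comp_assoc]

lemma seqBoundary_seqCone (v : K) (x : SeqChain R K) :
    seqBoundary (seqCone v x) = x - seqCone v (seqBoundary x) := by
  refine SeqChain.hom_congr (f := seqBoundary ∘ₗ seqCone v)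
    (g := LinearMap.id - seqCone v ∘ₗ seqBoundary) (fun n w ↦ ?_) x
  simp only [LinearMap.comp_apply, LinearMap.sub_apply, LinearMap.id_apply, seqCone_ofSeq,
    seqBoundary_ofSeq_succ, Fin.sum_univ_succ, sub_eq_add_neg]
  congr 1
  · rw [Fin.val_zero, pow_zero, one_smul, Fin.succAbove_zero]
    rfl
  · cases n with
    | zero => simp [seqBoundary_ofSeq_zero]
    | succ n =>
      rw [seqBoundary_ofSeq_succ, map_sum, ← Finset.sum_neg_distrib]
      refine Finset.sum_congr rfl fun i _ ↦ ?_
      have face : (Fin.cons v w : Fin (n + 2) → K) ∘ i.succ.succAbove =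
          Fin.cons v (w ∘ i.succAbove) := by
        funext j
        refine Fin.cases ?_ (fun j ↦ ?_) j <;> simp
      rw [map_smul, seqCone_ofSeq, Fin.val_succ, pow_succ, mul_neg_one, neg_smul, face]

lemma seqBoundary_seqBoundary (x : SeqChain R K) : seqBoundary (seqBoundary x) = 0 := by
  refine SeqChain.hom_congr (f := seqBoundary ∘ₗ seqBoundary) (g := 0) (fun n w ↦ ?_) x
  rw [LinearMap.comp_apply, LinearMap.zero_apply]
  induction n with
  | zero => rw [seqBoundary_ofSeq_zero, map_zero]
  | succ n ih =>
    rw [ofSeq_eq_seqCone, seqBoundary_seqCone, map_sub, seqBoundary_seqCone, ih, map_zero,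
      sub_zero, sub_self]

lemma seqBoundary_seqMap (f : K → K') (x : SeqChain R K) :
    seqBoundary (seqMap f x) = seqMap f (seqBoundary x) := by
  refine SeqChain.hom_congr (f := seqBoundary ∘ₗ seqMap f) (g := seqMap f ∘ₗ seqBoundary)
    (fun n w ↦ ?_) x
  cases n with
  | zero => simp only [LinearMap.comp_apply, seqMap_ofSeq, seqBoundary_ofSeq_zero, map_zero]
  | succ n =>
    simp only [LinearMap.comp_apply, seqMap_ofSeq, seqBoundary_ofSeq_succ, map_sum, map_smul,
      Function.comp_assoc]

lemma seqMap_seqCone (f : K → K') (v : K) (x : SeqChain R K) :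
    seqMap f (seqCone v x) = seqCone (f v) (seqMap f x) := by
  refine SeqChain.hom_congr (f := seqMap f ∘ₗ seqCone v) (g := seqCone (f v) ∘ₗ seqMap f)
    (fun n w ↦ ?_) x
  simp only [LinearMap.comp_apply, seqMap_ofSeq, seqCone_ofSeq, Fin.comp_cons]

/-- The subdivision of a sequence with respect to a choice `b` of centers: the cone over the
subdivided boundary with apex the center. -/
noncomputable def seqSubdivAux (b : ∀ n : ℕ, (Fin (n + 1) → K) → K) :
    ∀ n : ℕ, (Fin n → K) → SeqChain R K
  | 0, w => ofSeq R w
  | n + 1, w =>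
    seqCone (b n w) (∑ i : Fin (n + 1), (-1 : R) ^ (i : ℕ) • seqSubdivAux b n (w ∘ i.succAbove))

/-- The subdivision operator of ordered chains with respect to a choice `b` of centers. -/
noncomputable def seqSubdiv (b : ∀ n : ℕ, (Fin (n + 1) → K) → K) :
    SeqChain R K →ₗ[R] SeqChain R K :=
  seqLift (seqSubdivAux b)

/-- The value of `seqSubdivHomotopy` on a sequence. -/
noncomputable def seqSubdivHomotopyAux (b : ∀ n : ℕ, (Fin (n + 1) → K) → K) :
    ∀ n : ℕ, (Fin n → K) → SeqChain R K
  | 0, _ => 0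
  | n + 1, w => seqCone (b n w) (ofSeq R w - seqSubdiv b (ofSeq R w)
      - ∑ i : Fin (n + 1), (-1 : R) ^ (i : ℕ) • seqSubdivHomotopyAux b n (w ∘ i.succAbove))

/-- The chain homotopy between the identity and `seqSubdiv`. -/
noncomputable def seqSubdivHomotopy (b : ∀ n : ℕ, (Fin (n + 1) → K) → K) :
    SeqChain R K →ₗ[R] SeqChain R K :=
  seqLift (seqSubdivHomotopyAux b)

section Subdivision

variable (b : ∀ n : ℕ, (Fin (n + 1) → K) → K)

lemma seqSubdiv_ofSeq_zero (w : Fin 0 → K) : seqSubdiv b (ofSeq R w) = ofSeq R w := by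
  rw [seqSubdiv, seqLift_ofSeq, seqSubdivAux]

lemma seqSubdiv_ofSeq_succ {n : ℕ} (w : Fin (n + 1) → K) :
    seqSubdiv b (ofSeq R w) = seqCone (b n w) (seqSubdiv b (seqBoundary (ofSeq R w))) := by
  simp only [seqBoundary_ofSeq_succ, map_sum, map_smul, seqSubdiv, seqLift_ofSeq, seqSubdivAux]

lemma seqSubdivHomotopy_ofSeq_zero (w : Fin 0 → K) : seqSubdivHomotopy b (ofSeq R w) = 0 := by
  rw [seqSubdivHomotopy, seqLift_ofSeq, seqSubdivHomotopyAux]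

lemma seqSubdivHomotopy_ofSeq_succ {n : ℕ} (w : Fin (n + 1) → K) :
    seqSubdivHomotopy b (ofSeq R w) = seqCone (b n w)
      (ofSeq R w - seqSubdiv b (ofSeq R w) - seqSubdivHomotopy b (seqBoundary (ofSeq R w))) := by
  simp only [seqBoundary_ofSeq_succ, map_sum, map_smul, seqSubdivHomotopy, seqLift_ofSeq,
    seqSubdivHomotopyAux]

lemma seqBoundary_seqSubdiv (x : SeqChain R K) :
    seqBoundary (seqSubdiv b x) = seqSubdiv b (seqBoundary x) := by
  refine SeqChain.hom_congr (f := seqBoundary ∘ₗ seqSubdiv b) (g := seqSubdiv b ∘ₗ seqBoundary)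
    (fun n w ↦ ?_) x
  simp only [LinearMap.comp_apply]
  induction n with
  | zero => rw [seqSubdiv_ofSeq_zero, seqBoundary_ofSeq_zero, map_zero]
  | succ n ih =>
    have cycle : seqBoundary (seqSubdiv b (seqBoundary (ofSeq R w))) = 0 := by
      rw [← map_zero (seqSubdiv b), ← seqBoundary_seqBoundary (ofSeq R w), seqBoundary_ofSeq_succ]
      simp only [map_sum, map_smul, ih]
    rw [seqSubdiv_ofSeq_succ, seqBoundary_seqCone, cycle, map_zero, sub_zero]

lemma seqBoundary_seqSubdivHomotopy (x : SeqChain R K) :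
    seqBoundary (seqSubdivHomotopy b x) =
      x - seqSubdiv b x - seqSubdivHomotopy b (seqBoundary x) := by
  refine SeqChain.hom_congr (f := seqBoundary ∘ₗ seqSubdivHomotopy b)
    (g := LinearMap.id - seqSubdiv b - seqSubdivHomotopy b ∘ₗ seqBoundary) (fun n w ↦ ?_) x
  simp only [LinearMap.comp_apply, LinearMap.sub_apply, LinearMap.id_apply]
  induction n with
  | zero =>
    rw [seqSubdivHomotopy_ofSeq_zero, seqSubdiv_ofSeq_zero, seqBoundary_ofSeq_zero, map_zero,
      map_zero, sub_self, sub_zero]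
  | succ n ih =>
    have boundary_faces : seqBoundary (seqSubdivHomotopy b (seqBoundary (ofSeq R w))) =
        seqBoundary (ofSeq R w) - seqSubdiv b (seqBoundary (ofSeq R w)) := by
      rw [← sub_zero (seqBoundary (ofSeq R w) - _), ← map_zero (seqSubdivHomotopy b),
        ← seqBoundary_seqBoundary (ofSeq R w), seqBoundary_ofSeq_succ]
      simp only [map_sum, map_smul, ih, smul_sub, Finset.sum_sub_distrib]
    rw [seqSubdivHomotopy_ofSeq_succ, seqBoundary_seqCone, map_sub,
      map_sub seqBoundary (ofSeq R w), boundary_faces, seqBoundary_seqSubdiv, sub_self,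
      map_zero, sub_zero]

variable {b} {b' : ∀ n : ℕ, (Fin (n + 1) → K') → K'} {f : K → K'}

lemma seqMap_seqSubdiv (hf : ∀ n w, f (b n w) = b' n (f ∘ w)) (x : SeqChain R K) :
    seqMap f (seqSubdiv b x) = seqSubdiv b' (seqMap f x) := by
  refine SeqChain.hom_congr (f := seqMap f ∘ₗ seqSubdiv b) (g := seqSubdiv b' ∘ₗ seqMap f)
    (fun n w ↦ ?_) x
  simp only [LinearMap.comp_apply]
  induction n with
  | zero => rw [seqSubdiv_ofSeq_zero, seqMap_ofSeq, seqSubdiv_ofSeq_zero]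
  | succ n ih =>
    have faces : seqMap f (seqSubdiv b (seqBoundary (ofSeq R w))) =
        seqSubdiv b' (seqMap f (seqBoundary (ofSeq R w))) := by
      rw [seqBoundary_ofSeq_succ]
      simp only [map_sum, map_smul, ih]
    rw [seqSubdiv_ofSeq_succ, seqMap_seqCone, faces, ← seqBoundary_seqMap, seqMap_ofSeq,
      seqSubdiv_ofSeq_succ, hf]

lemma seqMap_seqSubdivHomotopy (hf : ∀ n w, f (b n w) = b' n (f ∘ w)) (x : SeqChain R K) :
    seqMap f (seqSubdivHomotopy b x) = seqSubdivHomotopy b' (seqMap f x) := by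
  refine SeqChain.hom_congr (f := seqMap f ∘ₗ seqSubdivHomotopy b)
    (g := seqSubdivHomotopy b' ∘ₗ seqMap f) (fun n w ↦ ?_) x
  simp only [LinearMap.comp_apply]
  induction n with
  | zero =>
    rw [seqSubdivHomotopy_ofSeq_zero, seqMap_ofSeq, seqSubdivHomotopy_ofSeq_zero, map_zero]
  | succ n ih =>
    have faces : seqMap f (seqSubdivHomotopy b (seqBoundary (ofSeq R w))) =
        seqSubdivHomotopy b' (seqMap f (seqBoundary (ofSeq R w))) := by
      rw [seqBoundary_ofSeq_succ]
      simp only [map_sum, map_smul, ih]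
    rw [seqSubdivHomotopy_ofSeq_succ, seqMap_seqCone, map_sub, map_sub (seqMap f) (ofSeq R w),
      faces, ← seqBoundary_seqMap, seqMap_seqSubdiv hf, seqMap_ofSeq,
      seqSubdivHomotopy_ofSeq_succ, hf]

end Subdivision

/-- The value of `seqPrism` on a sequence. -/
noncomputable def seqPrismAux (p q : L) : ∀ n : ℕ, (Fin n → K) → SeqChain R (K × L)
  | 0, _ => 0
  | n + 1, w => ofSeq R (Fin.cons (w 0, p) fun i ↦ (w i, q) : Fin (n + 2) → K × L)
      - seqCone (w 0, p) (seqPrismAux p q n (Fin.tail w))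

/-- The prism operator from ordered chains of `K` to those of `K × L`, between the bottom `p` and
the top `q`. -/
noncomputable def seqPrism (p q : L) : SeqChain R K →ₗ[R] SeqChain R (K × L) :=
  seqLift (seqPrismAux p q)

variable (p q : L)

lemma seqPrism_ofSeq_zero (w : Fin 0 → K) : seqPrism p q (ofSeq R w) = 0 := by
  rw [seqPrism, seqLift_ofSeq, seqPrismAux]

lemma seqPrism_seqCone (v : K) (x : SeqChain R K) :
    seqPrism p q (seqCone v x) =
      seqCone (v, p) (seqCone (v, q) (seqMap (·, q) x) - seqPrism p q x) := by
  refine SeqChain.hom_congr (f := seqPrism p q ∘ₗ seqCone v)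
    (g := seqCone (v, p) ∘ₗ (seqCone (v, q) ∘ₗ seqMap (·, q) - seqPrism p q)) (fun n w ↦ ?_) x
  simp only [LinearMap.comp_apply, LinearMap.sub_apply, map_sub, seqCone_ofSeq, seqMap_ofSeq,
    seqPrism, seqLift_ofSeq, seqPrismAux, Fin.cons_zero, Fin.tail_cons]
  congr 4
  funext j
  refine Fin.cases ?_ (fun j ↦ ?_) j <;> simp

lemma seqBoundary_seqPrism (x : SeqChain R K) :
    seqBoundary (seqPrism p q x) =
      seqMap (·, q) x - seqMap (·, p) x - seqPrism p q (seqBoundary x) := by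
  refine SeqChain.hom_congr (f := seqBoundary ∘ₗ seqPrism p q)
    (g := seqMap (·, q) - seqMap (·, p) - seqPrism p q ∘ₗ seqBoundary) (fun n w ↦ ?_) x
  simp only [LinearMap.comp_apply, LinearMap.sub_apply]
  induction n with
  | zero =>
    rw [seqPrism_ofSeq_zero, seqBoundary_ofSeq_zero, seqMap_ofSeq, seqMap_ofSeq,
      Subsingleton.elim ((·, q) ∘ w) ((·, p) ∘ w), map_zero, map_zero, sub_self, sub_zero]
  | succ n ih =>
    rw [ofSeq_eq_seqCone, seqPrism_seqCone, seqBoundary_seqCone, map_sub, map_sub, ih,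
      seqBoundary_seqCone, seqBoundary_seqCone, map_sub (seqPrism p q) (ofSeq R _),
      seqPrism_seqCone, seqBoundary_seqMap, seqMap_seqCone, seqMap_seqCone]
    simp only [map_sub]
    abel

lemma seqMap_seqPrism (f : K → K') (x : SeqChain R K) :
    seqMap (Prod.map f id) (seqPrism p q x) = seqPrism p q (seqMap f x) := by
  refine SeqChain.hom_congr (f := seqMap (Prod.map f id) ∘ₗ seqPrism p q)
    (g := seqPrism p q ∘ₗ seqMap f) (fun n w ↦ ?_) x
  simp only [LinearMap.comp_apply]
  induction n with
  | zero => rw [seqPrism_ofSeq_zero, seqMap_ofSeq, seqPrism_ofSeq_zero, map_zero]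
  | succ n ih =>
    rw [ofSeq_eq_seqCone, seqPrism_seqCone, seqMap_seqCone, seqMap_seqCone, map_sub, ih,
      seqMap_seqCone, seqPrism_seqCone, seqMap_seqMap, seqMap_seqMap]
    rfl

end OrderedChains

section AffineSimplices

variable {E : Type*} [AddCommGroup E] [Module ℝ E] [TopologicalSpace E] [ContinuousAdd E]
  [ContinuousSMul ℝ E] {s : Set E}

/-- The affine simplex in a convex set spanned by a sequence of points. -/
noncomputable def convexComb (hs : Convex ℝ s) {n : ℕ} (w : Fin (n + 1) → s) :
    C(stdSimplex ℝ (Fin (n + 1)), s) where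
  toFun t := ⟨∑ i, t.1 i • (w i : E), hs.sum_mem (fun i _ ↦ t.2.1 i) t.2.2 fun i _ ↦ (w i).2⟩
  continuous_toFun := by
    refine Continuous.subtype_mk (continuous_finsetSum _ fun i _ ↦ ?_) _
    exact ((continuous_apply i).comp continuous_subtype_val).smul continuous_const

/-- The affine simplex in a standard simplex spanned by a sequence of points. -/
noncomputable abbrev stdComb {m n : ℕ} (w : Fin (m + 1) → stdSimplex ℝ (Fin (n + 1))) :
    C(stdSimplex ℝ (Fin (m + 1)), stdSimplex ℝ (Fin (n + 1))) :=
  convexComb (convex_stdSimplex ℝ (Fin (n + 1))) w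

lemma convexComb_stdComb (hs : Convex ℝ s) {m n : ℕ} (w : Fin (n + 1) → s)
    (v : Fin (m + 1) → stdSimplex ℝ (Fin (n + 1))) (t : stdSimplex ℝ (Fin (m + 1))) :
    convexComb hs w (stdComb v t) = convexComb hs (convexComb hs w ∘ v) t := by
  apply Subtype.ext
  simp only [convexComb, ContinuousMap.coe_mk, Finset.sum_apply, Pi.smul_apply, Finset.sum_smul,
    Function.comp_apply, Finset.smul_sum, smul_eq_mul, mul_smul]
  exact Finset.sum_comm

lemma vertex_val_apply {n : ℕ} (i j : Fin (n + 1)) :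
    (stdSimplex.vertex (S := ℝ) i).1 j = if j = i then 1 else 0 := by
  change stdSimplex.vertex (S := ℝ) i j = _
  rw [stdSimplex.vertex_coe, Pi.single_apply]

lemma convexComb_vertex (hs : Convex ℝ s) {n : ℕ} (w : Fin (n + 1) → s) (i : Fin (n + 1)) :
    convexComb hs w (stdSimplex.vertex i) = w i := by
  apply Subtype.ext
  change ∑ j, (stdSimplex.vertex (S := ℝ) i).1 j • (w j : E) = w i
  simp only [Pi.single_apply, ite_smul, one_smul, zero_smul, Finset.sum_ite_eq',
    Finset.mem_univ, if_true]

lemma stdComb_vertex_comp {m n : ℕ} (f : Fin (m + 1) → Fin (n + 1)) :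
    stdComb (fun i ↦ stdSimplex.vertex (f i)) = ⟨_, stdSimplex.continuous_map f⟩ := by
  ext t j
  change (∑ k, t.1 k • (stdSimplex.vertex (S := ℝ) (f k)).1) j = stdSimplex.map f t j
  rw [congrFun (stdSimplex.map_coe f t) j, FunOnFinite.linearMap_apply_apply, Finset.sum_apply,
    Finset.sum_filter]
  refine Finset.sum_congr rfl fun k _ ↦ ?_
  rw [Pi.smul_apply, vertex_val_apply, smul_eq_mul, mul_ite, mul_one, mul_zero]
  simp only [eq_comm]
  rfl

lemma stdComb_vertex_eq_id (n : ℕ) :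
    stdComb (fun i : Fin (n + 1) ↦ stdSimplex.vertex i) = ContinuousMap.id _ :=
  (stdComb_vertex_comp id).trans (ContinuousMap.ext fun t ↦ stdSimplex.map_id_apply t)

/-- A space in which every finite sequence of points spans a singular simplex, compatibly with
affine maps between standard simplices. It abstracts the convex sets, so that products of such
spaces are again of this kind. -/
class AffineSpan (K : Type*) [TopologicalSpace K] where
  /-- The simplex spanned by a sequence of points. -/
  comb : ∀ {n : ℕ}, (Fin (n + 1) → K) → C(stdSimplex ℝ (Fin (n + 1)), K)
  comb_vertex : ∀ {n : ℕ} (w : Fin (n + 1) → K) (i), comb w (stdSimplex.vertex i) = w i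
  comb_stdComb : ∀ {m n : ℕ} (w : Fin (n + 1) → K)
    (v : Fin (m + 1) → stdSimplex ℝ (Fin (n + 1))) (t), comb w (stdComb v t) = comb (comb w ∘ v) t

open AffineSpan

noncomputable instance (n : ℕ) : AffineSpan (stdSimplex ℝ (Fin (n + 1))) where
  comb := stdComb
  comb_vertex := convexComb_vertex _
  comb_stdComb := convexComb_stdComb _

noncomputable instance : AffineSpan unitInterval where
  comb := convexComb (convex_Icc 0 1)
  comb_vertex := convexComb_vertex _
  comb_stdComb := convexComb_stdComb _

noncomputable instance {K L : Type*} [TopologicalSpace K] [TopologicalSpace L] [AffineSpan K]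
    [AffineSpan L] : AffineSpan (K × L) where
  comb w := (comb fun i ↦ (w i).1).prodMk (comb fun i ↦ (w i).2)
  comb_vertex w i := by simp [comb_vertex]
  comb_stdComb w v t := Prod.ext (comb_stdComb _ v t) (comb_stdComb _ v t)

lemma comb_const (p : unitInterval) {n : ℕ} (t : stdSimplex ℝ (Fin (n + 1))) :
    comb (fun _ : Fin (n + 1) ↦ p) t = p := by
  apply Subtype.ext
  change ∑ i, t.1 i • (p : ℝ) = p
  rw [← Finset.sum_smul, t.2.2, one_smul]

/-- The barycenter of the simplex spanned by a sequence. -/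
noncomputable def affineBarycenter (K : Type*) [TopologicalSpace K] [AffineSpan K] (n : ℕ)
    (w : Fin (n + 1) → K) : K :=
  comb w stdSimplex.barycenter

lemma comb_affineBarycenter {K : Type*} [TopologicalSpace K] [AffineSpan K] {m n : ℕ}
    (w : Fin (n + 1) → K) (v : Fin (m + 1) → stdSimplex ℝ (Fin (n + 1))) :
    comb w (affineBarycenter _ m v) = affineBarycenter K m (comb w ∘ v) :=
  comb_stdComb w v _

end AffineSimplices

section SingularChains

open AffineSpan

variable {R X Y Z K K' M : Type*} [CommRing R] [AddCommGroup M] [Module R M]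
  [TopologicalSpace X] [TopologicalSpace Y] [TopologicalSpace Z]
  [TopologicalSpace K] [TopologicalSpace K'] [AffineSpan K] [AffineSpan K']

variable (R X) in
/-- The module of singular chains of all degrees. -/
abbrev SingChain : Type _ := (Σ n : ℕ, C(stdSimplex ℝ (Fin (n + 1)), X)) →₀ R

variable (R) in
/-- The basis element of `SingChain R X` given by a singular simplex. -/
noncomputable abbrev ofSimplex {n : ℕ} (σ : C(stdSimplex ℝ (Fin (n + 1)), X)) : SingChain R X :=
  Finsupp.single ⟨n, σ⟩ 1

/-- Extension by linearity of a function on singular simplices. -/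
noncomputable def singLift (φ : ∀ n : ℕ, C(stdSimplex ℝ (Fin (n + 1)), X) → M) :
    SingChain R X →ₗ[R] M :=
  Finsupp.linearCombination R fun s ↦ φ s.1 s.2

lemma singLift_ofSimplex (φ : ∀ n : ℕ, C(stdSimplex ℝ (Fin (n + 1)), X) → M) {n : ℕ}
    (σ : C(stdSimplex ℝ (Fin (n + 1)), X)) : singLift φ (ofSimplex R σ) = φ n σ := by
  rw [singLift, Finsupp.linearCombination_single, one_smul]

lemma SingChain.hom_congr {f g : SingChain R X →ₗ[R] M}
    (h : ∀ (n : ℕ) (σ : C(stdSimplex ℝ (Fin (n + 1)), X)), f (ofSimplex R σ) = g (ofSimplex R σ))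
    (x : SingChain R X) : f x = g x :=
  LinearMap.congr_fun (Finsupp.lhom_ext' fun s ↦ LinearMap.ext_ring (h s.1 s.2)) x

/-- The map of singular chains induced by a continuous map. -/
noncomputable def singPush (f : C(X, Y)) : SingChain R X →ₗ[R] SingChain R Y :=
  Finsupp.lmapDomain R R fun s ↦ ⟨s.1, f.comp s.2⟩

lemma singPush_ofSimplex (f : C(X, Y)) {n : ℕ} (σ : C(stdSimplex ℝ (Fin (n + 1)), X)) :
    singPush f (ofSimplex R σ) = ofSimplex R (f.comp σ) := by
  rw [singPush, Finsupp.lmapDomain_apply, Finsupp.mapDomain_single]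

lemma singPush_singPush (g : C(Y, Z)) (f : C(X, Y)) (x : SingChain R X) :
    singPush g (singPush f x) = singPush (g.comp f) x := by
  refine SingChain.hom_congr (f := singPush g ∘ₗ singPush f) (g := singPush (g.comp f))
    (fun n σ ↦ ?_) x
  simp only [LinearMap.comp_apply, singPush_ofSimplex, ContinuousMap.comp_assoc]

lemma singPush_id (x : SingChain R X) : singPush (ContinuousMap.id X) x = x :=
  SingChain.hom_congr (g := LinearMap.id) (fun _ σ ↦ singPush_ofSimplex _ σ) x

/-- The singular chain of affine simplices given by an ordered chain. -/
noncomputable def realize : SeqChain R K →ₗ[R] SingChain R K :=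
  seqLift fun
    | 0, _ => 0
    | _ + 1, w => ofSimplex R (comb w)

lemma realize_ofSeq_zero (w : Fin 0 → K) : realize (ofSeq R w) = 0 := by
  rw [realize, seqLift_ofSeq]

lemma realize_ofSeq_succ {n : ℕ} (w : Fin (n + 1) → K) :
    realize (ofSeq R w) = ofSimplex R (comb w) := by
  rw [realize, seqLift_ofSeq]

lemma singPush_realize (g : C(K, K'))
    (hg : ∀ (n : ℕ) (v : Fin (n + 1) → K) (t), g (comb v t) = comb (g ∘ v) t)
    (x : SeqChain R K) : singPush g (realize x) = realize (seqMap g x) := by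
  refine SeqChain.hom_congr (f := singPush g ∘ₗ realize) (g := realize ∘ₗ seqMap g)
    (fun n w ↦ ?_) x
  simp only [LinearMap.comp_apply, seqMap_ofSeq]
  cases n with
  | zero => rw [realize_ofSeq_zero, realize_ofSeq_zero, map_zero]
  | succ n =>
    rw [realize_ofSeq_succ, realize_ofSeq_succ, singPush_ofSimplex,
      (ContinuousMap.ext (hg n w) : g.comp (comb w) = comb (g ∘ w))]

lemma singPush_comb_realize {n : ℕ} (w : Fin (n + 1) → K)
    (x : SeqChain R (stdSimplex ℝ (Fin (n + 1)))) :
    singPush (comb w) (realize x) = realize (seqMap (comb w) x) :=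
  singPush_realize _ (fun _ v t ↦ comb_stdComb w v t) x

variable (R) in
/-- The sequence of vertices of the standard simplex. -/
noncomputable def vertexSeq (n : ℕ) : SeqChain R (stdSimplex ℝ (Fin (n + 1))) :=
  ofSeq R fun i : Fin (n + 1) ↦ stdSimplex.vertex i

lemma seqMap_vertexSeq {n : ℕ} (w : Fin (n + 1) → K) :
    seqMap (comb w) (vertexSeq R n) = ofSeq R w := by
  rw [vertexSeq, seqMap_ofSeq]
  exact congrArg (ofSeq R) (funext (comb_vertex w))

lemma realize_vertexSeq (n : ℕ) :
    realize (vertexSeq R n) = ofSimplex R (ContinuousMap.id (stdSimplex ℝ (Fin (n + 1)))) := by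
  rw [vertexSeq, realize_ofSeq_succ]
  exact congrArg (ofSimplex R) (stdComb_vertex_eq_id n)

/-- The natural operator on singular chains whose value on the identity of each standard simplex is
the given chain of affine simplices. -/
noncomputable def naturalOp (τ : ∀ n : ℕ, SeqChain R (stdSimplex ℝ (Fin (n + 1)))) :
    SingChain R X →ₗ[R] SingChain R X :=
  singLift fun n σ ↦ singPush σ (realize (τ n))

lemma naturalOp_ofSimplex (τ : ∀ n : ℕ, SeqChain R (stdSimplex ℝ (Fin (n + 1)))) {n : ℕ}
    (σ : C(stdSimplex ℝ (Fin (n + 1)), X)) :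
    naturalOp τ (ofSimplex R σ) = singPush σ (realize (τ n)) := by
  rw [naturalOp, singLift_ofSimplex]

lemma naturalOp_singPush (τ : ∀ n : ℕ, SeqChain R (stdSimplex ℝ (Fin (n + 1)))) (f : C(X, Y))
    (x : SingChain R X) : naturalOp τ (singPush f x) = singPush f (naturalOp τ x) := by
  refine SingChain.hom_congr (f := naturalOp τ ∘ₗ singPush f) (g := singPush f ∘ₗ naturalOp τ)
    (fun n σ ↦ ?_) x
  simp only [LinearMap.comp_apply, singPush_ofSimplex, naturalOp_ofSimplex, singPush_singPush]

lemma naturalOp_realize {T : SeqChain R K →ₗ[R] SeqChain R K}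
    {τ : ∀ n : ℕ, SeqChain R (stdSimplex ℝ (Fin (n + 1)))}
    (hT₀ : ∀ w : Fin 0 → K, realize (T (ofSeq R w)) = 0)
    (hT : ∀ (n : ℕ) (w : Fin (n + 1) → K), seqMap (comb w) (τ n) = T (ofSeq R w))
    (x : SeqChain R K) : naturalOp τ (realize x) = realize (T x) := by
  refine SeqChain.hom_congr (f := naturalOp τ ∘ₗ realize) (g := realize ∘ₗ T) (fun n w ↦ ?_) x
  simp only [LinearMap.comp_apply]
  cases n with
  | zero => rw [realize_ofSeq_zero, map_zero, hT₀]
  | succ n => rw [realize_ofSeq_succ, naturalOp_ofSimplex, singPush_comb_realize, hT]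

/-- The boundary operator of singular chains. -/
noncomputable def singBoundary : SingChain R X →ₗ[R] SingChain R X :=
  naturalOp fun n ↦ seqBoundary (vertexSeq R n)

lemma singBoundary_ofSimplex {n : ℕ} (σ : C(stdSimplex ℝ (Fin (n + 1)), X)) :
    singBoundary (ofSimplex R σ) = singPush σ (realize (seqBoundary (vertexSeq R n))) :=
  naturalOp_ofSimplex _ σ

lemma singBoundary_singPush (f : C(X, Y)) (x : SingChain R X) :
    singBoundary (singPush f x) = singPush f (singBoundary x) :=
  naturalOp_singPush _ f x

lemma singBoundary_realize (x : SeqChain R K) :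
    singBoundary (realize x) = realize (seqBoundary x) := by
  refine naturalOp_realize (fun w ↦ ?_) (fun n w ↦ ?_) x
  · rw [seqBoundary_ofSeq_zero, map_zero]
  · rw [← seqBoundary_seqMap, seqMap_vertexSeq]

lemma singBoundary_singBoundary (x : SingChain R X) : singBoundary (singBoundary x) = 0 := by
  refine SingChain.hom_congr (f := singBoundary ∘ₗ singBoundary) (g := 0) (fun n σ ↦ ?_) x
  rw [LinearMap.comp_apply, singBoundary_ofSimplex, singBoundary_singPush, singBoundary_realize,
    seqBoundary_seqBoundary, map_zero, map_zero, LinearMap.zero_apply]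

lemma singBoundary_ofSimplex_succ {n : ℕ} (σ : C(stdSimplex ℝ (Fin (n + 2)), X)) :
    singBoundary (ofSimplex R σ) = ∑ i : Fin (n + 2), (-1 : R) ^ (i : ℕ) •
      ofSimplex R (σ.comp ⟨_, stdSimplex.continuous_map i.succAbove⟩) := by
  rw [singBoundary_ofSimplex, vertexSeq, seqBoundary_ofSeq_succ, map_sum, map_sum]
  refine Finset.sum_congr rfl fun i _ ↦ ?_
  rw [map_smul, map_smul, realize_ofSeq_succ, singPush_ofSimplex, ← stdComb_vertex_comp]
  rfl

lemma singBoundary_ofSimplex_zero (σ : C(stdSimplex ℝ (Fin 1), X)) :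
    singBoundary (ofSimplex R σ) = 0 := by
  simp only [singBoundary_ofSimplex, vertexSeq, seqBoundary_ofSeq_succ, map_sum, map_smul,
    realize_ofSeq_zero, map_zero, smul_zero, Finset.sum_const_zero]

/-- The barycentric subdivision of singular chains. -/
noncomputable def singSubdiv : SingChain R X →ₗ[R] SingChain R X :=
  naturalOp fun n ↦ seqSubdiv (affineBarycenter _) (vertexSeq R n)

/-- The chain homotopy between the identity and `singSubdiv`. -/
noncomputable def singSubdivHomotopy : SingChain R X →ₗ[R] SingChain R X :=
  naturalOp fun n ↦ seqSubdivHomotopy (affineBarycenter _) (vertexSeq R n)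

lemma singSubdiv_realize (x : SeqChain R K) :
    singSubdiv (realize x) = realize (seqSubdiv (affineBarycenter K) x) := by
  refine naturalOp_realize (fun w ↦ ?_) (fun n w ↦ ?_) x
  · rw [seqSubdiv_ofSeq_zero, realize_ofSeq_zero]
  · rw [seqMap_seqSubdiv fun _ ↦ comb_affineBarycenter w, seqMap_vertexSeq]

lemma singSubdivHomotopy_realize (x : SeqChain R K) :
    singSubdivHomotopy (realize x) = realize (seqSubdivHomotopy (affineBarycenter K) x) := by
  refine naturalOp_realize (fun w ↦ ?_) (fun n w ↦ ?_) x
  · rw [seqSubdivHomotopy_ofSeq_zero, map_zero]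
  · rw [seqMap_seqSubdivHomotopy fun _ ↦ comb_affineBarycenter w, seqMap_vertexSeq]

lemma singBoundary_singSubdiv (x : SingChain R X) :
    singBoundary (singSubdiv x) = singSubdiv (singBoundary x) := by
  refine SingChain.hom_congr (f := singBoundary ∘ₗ singSubdiv) (g := singSubdiv ∘ₗ singBoundary)
    (fun n σ ↦ ?_) x
  simp only [LinearMap.comp_apply]
  rw [singSubdiv, naturalOp_ofSimplex, singBoundary_singPush, singBoundary_realize,
    seqBoundary_seqSubdiv, singBoundary_ofSimplex, naturalOp_singPush, ← singSubdiv,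
    singSubdiv_realize]

lemma singBoundary_singSubdivHomotopy (x : SingChain R X) :
    singBoundary (singSubdivHomotopy x) =
      x - singSubdiv x - singSubdivHomotopy (singBoundary x) := by
  refine SingChain.hom_congr (f := singBoundary ∘ₗ singSubdivHomotopy)
    (g := LinearMap.id - singSubdiv - singSubdivHomotopy ∘ₗ singBoundary) (fun n σ ↦ ?_) x
  simp only [LinearMap.comp_apply, LinearMap.sub_apply, LinearMap.id_apply]
  have homotopy_boundary : singSubdivHomotopy (singBoundary (ofSimplex R σ)) = singPush σ
      (realize (seqSubdivHomotopy (affineBarycenter _) (seqBoundary (vertexSeq R n)))) := by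
    rw [singBoundary_ofSimplex, singSubdivHomotopy, naturalOp_singPush, ← singSubdivHomotopy,
      singSubdivHomotopy_realize]
  rw [homotopy_boundary, singSubdivHomotopy, naturalOp_ofSimplex, singBoundary_singPush,
    singBoundary_realize, seqBoundary_seqSubdivHomotopy, singSubdiv, naturalOp_ofSimplex]
  simp only [map_sub, realize_vertexSeq, singPush_ofSimplex, ContinuousMap.comp_id]

/-- The prism operator of singular chains, which yields the homotopy invariance of homology. -/
noncomputable def singPrism : SingChain R X →ₗ[R] SingChain R (X × unitInterval) :=
  singLift fun n σ ↦
    singPush (σ.prodMap (ContinuousMap.id _)) (realize (seqPrism 0 1 (vertexSeq R n)))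

lemma singPrism_ofSimplex {n : ℕ} (σ : C(stdSimplex ℝ (Fin (n + 1)), X)) :
    singPrism (ofSimplex R σ) =
      singPush (σ.prodMap (ContinuousMap.id _)) (realize (seqPrism 0 1 (vertexSeq R n))) := by
  rw [singPrism, singLift_ofSimplex]

lemma singPrism_singPush (f : C(X, Y)) (x : SingChain R X) :
    singPrism (singPush f x) = singPush (f.prodMap (ContinuousMap.id _)) (singPrism x) := by
  refine SingChain.hom_congr (f := singPrism ∘ₗ singPush f)
    (g := singPush (f.prodMap (ContinuousMap.id _)) ∘ₗ singPrism) (fun n σ ↦ ?_) x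
  simp only [LinearMap.comp_apply, singPush_ofSimplex, singPrism_ofSimplex, singPush_singPush]
  rfl

lemma singPrism_realize (x : SeqChain R K) :
    singPrism (realize x) = realize (seqPrism 0 1 x) := by
  refine SeqChain.hom_congr (f := singPrism ∘ₗ realize) (g := realize ∘ₗ seqPrism 0 1)
    (fun n w ↦ ?_) x
  simp only [LinearMap.comp_apply]
  cases n with
  | zero => rw [realize_ofSeq_zero, map_zero, seqPrism_ofSeq_zero, map_zero]
  | succ n =>
    rw [realize_ofSeq_succ, singPrism_ofSimplex, singPush_realize, ← seqMap_vertexSeq w,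
      ← seqMap_seqPrism]
    · rfl
    · exact fun m v t ↦ Prod.ext (comb_stdComb w _ t) rfl

/-- The inclusion of the slice at height `p`. -/
noncomputable def sliceIncl (p : unitInterval) : C(X, X × unitInterval) :=
  (ContinuousMap.id X).prodMk (ContinuousMap.const X p)

lemma singPush_realize_slice {n : ℕ} (σ : C(stdSimplex ℝ (Fin (n + 1)), X)) (p : unitInterval) :
    singPush (σ.prodMap (ContinuousMap.id _)) (realize (seqMap (·, p) (vertexSeq R n))) =
      singPush (sliceIncl p) (ofSimplex R σ) := by
  rw [vertexSeq, seqMap_ofSeq, realize_ofSeq_succ, singPush_ofSimplex, singPush_ofSimplex]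
  refine congrArg (ofSimplex R) (ContinuousMap.ext fun t ↦ Prod.ext ?_ (comb_const p t))
  exact congrArg σ (DFunLike.congr_fun (stdComb_vertex_eq_id n) t)

lemma singBoundary_singPrism (x : SingChain R X) :
    singBoundary (singPrism x) = singPush (sliceIncl 1) x - singPush (sliceIncl 0) x
      - singPrism (singBoundary x) := by
  refine SingChain.hom_congr (f := singBoundary ∘ₗ singPrism)
    (g := singPush (sliceIncl 1) - singPush (sliceIncl 0) - singPrism ∘ₗ singBoundary)
    (fun n σ ↦ ?_) x
  simp only [LinearMap.comp_apply, LinearMap.sub_apply]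
  rw [singPrism_ofSimplex, singBoundary_singPush, singBoundary_realize, seqBoundary_seqPrism,
    singBoundary_ofSimplex, singPrism_singPush, singPrism_realize]
  simp only [map_sub, singPush_realize_slice]

end SingularChains

section RelativeHomology

variable {R M N : Type*} [CommRing R] [AddCommGroup M] [Module R M] [AddCommGroup N] [Module R N]

/-- The cycles in degree `n` of the chains in `C` relative to the chains in `A`. In degree zero the
condition reads `d x ∈ A 0`, which is automatic when `d` vanishes on `C 0`. -/
def relCycles (d : M →ₗ[R] M) (C A : ℕ → Submodule R M) (n : ℕ) : Submodule R M :=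
  C n ⊓ (A (n - 1)).comap d

/-- The boundaries in degree `n` of the chains in `C` relative to the chains in `A`. -/
def relBoundaries (d : M →ₗ[R] M) (C A : ℕ → Submodule R M) (n : ℕ) : Submodule R M :=
  A n ⊔ (C (n + 1)).map d

/-- The homology of a pair of subcomplexes `A ⊆ C` of a module with a differential. -/
abbrev RelHomology (d : M →ₗ[R] M) (C A : ℕ → Submodule R M) (n : ℕ) : Type _ :=
  relCycles d C A n ⧸ (relBoundaries d C A n).submoduleOf (relCycles d C A n)

variable {d : M →ₗ[R] M} {C A B : ℕ → Submodule R M} {d' : N →ₗ[R] N} {C' A' : ℕ → Submodule R N}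

lemma mem_relCycles {n : ℕ} {z : M} : z ∈ relCycles d C A n ↔ z ∈ C n ∧ d z ∈ A (n - 1) := Iff.rfl

lemma mem_relBoundaries {n : ℕ} {z : M} :
    z ∈ relBoundaries d C A n ↔ ∃ a ∈ A n, ∃ w ∈ C (n + 1), a + d w = z := by
  simp [relBoundaries, Submodule.mem_sup]

lemma mem_relBoundaries_of_mem {n : ℕ} {a : M} (h : a ∈ A n) : a ∈ relBoundaries d C A n :=
  Submodule.mem_sup_left h

lemma boundary_mem_relBoundaries {n : ℕ} {w : M} (h : w ∈ C (n + 1)) :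
    d w ∈ relBoundaries d C A n :=
  Submodule.mem_sup_right ⟨w, h, rfl⟩

/-- The homology class of a relative cycle. -/
def relClass {n : ℕ} (z : M) (hz : z ∈ relCycles d C A n) : RelHomology d C A n :=
  Submodule.Quotient.mk ⟨z, hz⟩

lemma relClass_eq {n : ℕ} {z z' : M} (hz : z ∈ relCycles d C A n) (hz' : z' ∈ relCycles d C A n) :
    relClass z hz = relClass z' hz' ↔ z - z' ∈ relBoundaries d C A n :=
  Submodule.Quotient.eq _

lemma relClass_eq_zero {n : ℕ} {z : M} (hz : z ∈ relCycles d C A n) :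
    relClass z hz = 0 ↔ z ∈ relBoundaries d C A n :=
  Submodule.Quotient.mk_eq_zero _

lemma relClass_add {n : ℕ} {z z' : M} (hz : z ∈ relCycles d C A n) (hz' : z' ∈ relCycles d C A n) :
    relClass z hz + relClass z' hz' = relClass (z + z') (add_mem hz hz') := rfl

lemma relClass_smul {n : ℕ} {z : M} (r : R) (hz : z ∈ relCycles d C A n) :
    r • relClass z hz = relClass (r • z) (Submodule.smul_mem _ r hz) := rfl

lemma relClass_sum {ι : Type*} {n : ℕ} (t : Finset ι) {z : ι → M}
    (hz : ∀ i, z i ∈ relCycles d C A n) :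
    ∑ i ∈ t, relClass (z i) (hz i) = relClass (∑ i ∈ t, z i) (sum_mem fun i _ ↦ hz i) := by
  simp only [relClass, ← Submodule.mkQ_apply, ← map_sum]
  congr 1
  exact Subtype.ext (AddSubmonoidClass.coe_finsetSum _ _)

lemma RelHomology.ind {n : ℕ} {p : RelHomology d C A n → Prop}
    (h : ∀ z (hz : z ∈ relCycles d C A n), p (relClass z hz)) (x : RelHomology d C A n) : p x := by
  obtain ⟨⟨z, hz⟩, rfl⟩ := Submodule.Quotient.mk_surjective _ x
  exact h z hz

lemma subsingleton_relHomology_self (n : ℕ) : Subsingleton (RelHomology d A A n) :=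
  subsingleton_of_forall_eq 0 <| RelHomology.ind fun _ hz ↦
    (relClass_eq_zero hz).2 (mem_relBoundaries_of_mem hz.1)

/-- The linear map `φ` is a chain map carrying the pair `(C, A)` to the pair `(C', A')`. -/
structure IsRelMap (d : M →ₗ[R] M) (C A : ℕ → Submodule R M) (d' : N →ₗ[R] N)
    (C' A' : ℕ → Submodule R N) (φ : M →ₗ[R] N) : Prop where
  comm : ∀ x, d' (φ x) = φ (d x)
  map_mem : ∀ n, ∀ x ∈ C n, φ x ∈ C' n
  map_mem_sub : ∀ n, ∀ x ∈ A n, φ x ∈ A' n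

section Maps

variable {φ : M →ₗ[R] N}

lemma IsRelMap.map_relCycles (h : IsRelMap d C A d' C' A' φ) {n : ℕ} {z : M}
    (hz : z ∈ relCycles d C A n) : φ z ∈ relCycles d' C' A' n :=
  mem_relCycles.2 ⟨h.map_mem n z hz.1, h.comm z ▸ h.map_mem_sub _ _ hz.2⟩

lemma IsRelMap.map_relBoundaries (h : IsRelMap d C A d' C' A' φ) {n : ℕ} {z : M}
    (hz : z ∈ relBoundaries d C A n) : φ z ∈ relBoundaries d' C' A' n := by
  obtain ⟨a, ha, w, hw, rfl⟩ := mem_relBoundaries.1 hz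
  rw [map_add, ← h.comm]
  exact Submodule.add_mem _ (mem_relBoundaries_of_mem (h.map_mem_sub _ _ ha))
    (boundary_mem_relBoundaries (h.map_mem _ _ hw))

/-- The map induced on relative homology by a chain map of pairs. -/
def relMap (h : IsRelMap d C A d' C' A' φ) (n : ℕ) :
    RelHomology d C A n →ₗ[R] RelHomology d' C' A' n :=
  Submodule.mapQ _ _ (φ.restrict fun _ ↦ h.map_relCycles) fun _ hx ↦ h.map_relBoundaries hx

lemma relMap_relClass (h : IsRelMap d C A d' C' A' φ) {n : ℕ} {z : M}
    (hz : z ∈ relCycles d C A n) :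
    relMap h n (relClass z hz) = relClass (φ z) (h.map_relCycles hz) := rfl

lemma relMap_eq_of_homotopy {ψ : M →ₗ[R] N} (hφ : IsRelMap d C A d' C' A' φ)
    (hψ : IsRelMap d C A d' C' A' ψ) (hd : ∀ x ∈ C 0, d x = 0) (T : M →ₗ[R] N)
    (hT : ∀ x, d' (T x) = φ x - ψ x - T (d x)) (hTC : ∀ n, ∀ x ∈ C n, T x ∈ C' (n + 1))
    (hTA : ∀ n, ∀ x ∈ A n, T x ∈ A' (n + 1)) (n : ℕ) : relMap hφ n = relMap hψ n := by
  refine LinearMap.ext (RelHomology.ind fun z hz ↦ ?_)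
  have diff : φ z - ψ z = d' (T z) + T (d z) := by rw [hT, sub_add_cancel]
  rw [relMap_relClass, relMap_relClass, relClass_eq, diff]
  refine add_mem (boundary_mem_relBoundaries (hTC _ _ hz.1)) (mem_relBoundaries_of_mem ?_)
  cases n with
  | zero => rw [hd z hz.1, map_zero]; exact zero_mem _
  | succ n => exact hTA _ _ hz.2

lemma relMap_bijective (h : IsRelMap d C A d' C' A' φ) (n : ℕ)
    (hi : ∀ z ∈ relCycles d C A n, φ z ∈ relBoundaries d' C' A' n → z ∈ relBoundaries d C A n)
    (hs : ∀ z' ∈ relCycles d' C' A' n,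
      ∃ z ∈ relCycles d C A n, φ z - z' ∈ relBoundaries d' C' A' n) :
    Function.Bijective (relMap h n) := by
  constructor
  · rw [injective_iff_map_eq_zero]
    refine RelHomology.ind fun z hz hφz ↦ ?_
    rw [relMap_relClass, relClass_eq_zero] at hφz
    exact (relClass_eq_zero hz).2 (hi z hz hφz)
  · refine RelHomology.ind fun z' hz' ↦ ?_
    obtain ⟨z, hz, hzz'⟩ := hs z' hz'
    exact ⟨relClass z hz, by rwa [relMap_relClass, relClass_eq]⟩

lemma relMap_bijective_of_injective (h : IsRelMap d C A d' C' A' φ) (hφ : Function.Injective φ)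
    (hC : ∀ n, ∀ y ∈ C' n, ∃ x ∈ C n, φ x = y) (hA : ∀ n, ∀ y ∈ A' n, ∃ x ∈ A n, φ x = y)
    (n : ℕ) : Function.Bijective (relMap h n) := by
  refine relMap_bijective h n ?_ ?_
  · intro z _ hφz
    obtain ⟨_, ha', _, hw', e⟩ := mem_relBoundaries.1 hφz
    obtain ⟨a, ha, rfl⟩ := hA _ _ ha'
    obtain ⟨w, hw, rfl⟩ := hC _ _ hw'
    rw [h.comm, ← map_add] at e
    exact mem_relBoundaries.2 ⟨a, ha, w, hw, hφ e⟩
  · intro z' hz'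
    obtain ⟨z, hz, rfl⟩ := hC _ _ hz'.1
    obtain ⟨a, ha, e⟩ := hA _ _ hz'.2
    rw [h.comm] at e
    exact ⟨z, mem_relCycles.2 ⟨hz, hφ e ▸ ha⟩, by rw [sub_self]; exact zero_mem _⟩

end Maps

section Triple

lemma boundary_mem_relCycles (hd : ∀ x, d (d x) = 0) {n : ℕ} {z : M}
    (hz : z ∈ relCycles d C B (n + 1)) : d z ∈ relCycles d B A n :=
  mem_relCycles.2 ⟨hz.2, by rw [hd]; exact zero_mem _⟩

/-- The connecting homomorphism of a triple of subcomplexes. -/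
def relConnect (hd : ∀ x, d (d x) = 0) (A B C : ℕ → Submodule R M) (n : ℕ) :
    RelHomology d C B (n + 1) →ₗ[R] RelHomology d B A n :=
  Submodule.mapQ _ _ (d.restrict fun _ hz ↦ boundary_mem_relCycles hd hz) fun x hx ↦ by
    obtain ⟨b, hb, w, _, e⟩ := mem_relBoundaries.1 hx
    change d ((relCycles d C B (n + 1)).subtype x) ∈ relBoundaries d B A n
    rw [← e, map_add, hd, add_zero]
    exact boundary_mem_relBoundaries hb

lemma relConnect_relClass (hd : ∀ x, d (d x) = 0) {n : ℕ} {z : M}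
    (hz : z ∈ relCycles d C B (n + 1)) :
    relConnect hd A B C n (relClass z hz) = relClass (d z) (boundary_mem_relCycles hd hz) := rfl

lemma isRelMap_triple_left (hBC : ∀ n, B n ≤ C n) : IsRelMap d B A d C A LinearMap.id :=
  ⟨fun _ ↦ rfl, fun n _ hx ↦ hBC n hx, fun _ _ hx ↦ hx⟩

lemma isRelMap_triple_right (hAB : ∀ n, A n ≤ B n) : IsRelMap d C A d C B LinearMap.id :=
  ⟨fun _ ↦ rfl, fun _ _ hx ↦ hx, fun n _ hx ↦ hAB n hx⟩

variable (hd : ∀ x, d (d x) = 0) (hAB : ∀ n, A n ≤ B n) (hBC : ∀ n, B n ≤ C n)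

include hd in
lemma exact_relMap_triple (n : ℕ) :
    Function.Exact (relMap (isRelMap_triple_left (A := A) (d := d) hBC) n)
      (relMap (isRelMap_triple_right (C := C) (d := d) hAB) n) := by
  refine RelHomology.ind fun z hz ↦ ⟨fun h ↦ ?_, ?_⟩
  · rw [relMap_relClass, relClass_eq_zero] at h
    obtain ⟨b, hb, w, hw, e : b + d w = z⟩ := mem_relBoundaries.1 h
    obtain rfl : b = z - d w := eq_sub_of_add_eq e
    refine ⟨relClass _ (mem_relCycles.2 ⟨hb, ?_⟩), ?_⟩
    · rw [map_sub, hd, sub_zero]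
      exact hz.2
    · rw [relMap_relClass, relClass_eq, LinearMap.id_apply, sub_sub_cancel_left, ← map_neg]
      exact boundary_mem_relBoundaries (neg_mem hw)
  · rintro ⟨y, hy⟩
    rw [← hy]
    induction y using RelHomology.ind with
    | h b hb =>
      rw [relMap_relClass, relMap_relClass, relClass_eq_zero]
      exact mem_relBoundaries_of_mem hb.1

include hBC in
lemma exact_relMap_relConnect (n : ℕ) :
    Function.Exact (relMap (isRelMap_triple_right (C := C) (d := d) hAB) (n + 1))
      (relConnect hd A B C n) := by
  refine RelHomology.ind fun z hz ↦ ⟨fun h ↦ ?_, ?_⟩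
  · rw [relConnect_relClass, relClass_eq_zero] at h
    obtain ⟨a, ha, b, hb, e⟩ := mem_relBoundaries.1 h
    refine ⟨relClass (z - b) (mem_relCycles.2 ⟨Submodule.sub_mem _ hz.1 (hBC _ hb), ?_⟩), ?_⟩
    · rw [map_sub, ← e, add_sub_cancel_right]
      exact ha
    · rw [relMap_relClass, relClass_eq, LinearMap.id_apply, sub_sub_cancel_left]
      exact mem_relBoundaries_of_mem (neg_mem hb)
  · rintro ⟨y, hy⟩
    rw [← hy]
    induction y using RelHomology.ind with
    | h c hc =>
      rw [relMap_relClass, relConnect_relClass, relClass_eq_zero]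
      exact mem_relBoundaries_of_mem hc.2

include hAB in
lemma exact_relConnect_relMap (n : ℕ) :
    Function.Exact (relConnect hd A B C n)
      (relMap (isRelMap_triple_left (A := A) (d := d) hBC) n) := by
  refine RelHomology.ind fun z hz ↦ ⟨fun h ↦ ?_, ?_⟩
  · rw [relMap_relClass, relClass_eq_zero] at h
    obtain ⟨a, ha, w, hw, e : a + d w = z⟩ := mem_relBoundaries.1 h
    have dw : d w = z - a := eq_sub_of_add_eq' e
    refine ⟨relClass w (mem_relCycles.2 ⟨hw, ?_⟩), ?_⟩
    · rw [dw]
      exact Submodule.sub_mem _ hz.1 (hAB _ ha)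
    · rw [relConnect_relClass, relClass_eq, dw, sub_sub_cancel_left]
      exact mem_relBoundaries_of_mem (neg_mem ha)
  · rintro ⟨y, hy⟩
    rw [← hy]
    induction y using RelHomology.ind with
    | h c hc =>
      rw [relConnect_relClass, relMap_relClass, relClass_eq_zero]
      exact boundary_mem_relBoundaries hc.1

include hAB hBC in
lemma relConnect_bijective (n : ℕ) [Subsingleton (RelHomology d C A n)]
    [Subsingleton (RelHomology d C A (n + 1))] : Function.Bijective (relConnect hd A B C n) := by
  refine ⟨(injective_iff_map_eq_zero _).2 fun x hx ↦ ?_, fun y ↦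
    (exact_relConnect_relMap hd hAB hBC n y).1 (Subsingleton.elim _ _)⟩
  obtain ⟨y, rfl⟩ := (exact_relMap_relConnect hd hAB hBC n x).1 hx
  rw [Subsingleton.elim y 0, map_zero]

lemma relMap_triple_right_zero_surjective (hC : ∀ x ∈ C 0, d x = 0) :
    Function.Surjective (relMap (isRelMap_triple_right (C := C) (d := d) hAB) 0) :=
  RelHomology.ind fun z hz ↦
    ⟨relClass z (mem_relCycles.2 ⟨hz.1, by rw [hC z hz.1]; exact zero_mem _⟩), rfl⟩

end Triple

end RelativeHomology

section SingularSubcomplexes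

variable {R X Y Z K L : Type*} [CommRing R] [TopologicalSpace X] [TopologicalSpace Y]
  [TopologicalSpace Z]

lemma map_mem_of_mem_supported {S M : Type*} [AddCommGroup M] [Module R M] {p : Set S}
    {φ : (S →₀ R) →ₗ[R] M} {Q : Submodule R M} (h : ∀ s ∈ p, φ (Finsupp.single s 1) ∈ Q)
    {x : S →₀ R} (hx : x ∈ Finsupp.supported R R p) : φ x ∈ Q := by
  rw [Finsupp.supported_eq_span_single] at hx
  refine (Submodule.span_le (p := Q.comap φ)).2 ?_ hx
  rintro _ ⟨s, hs, rfl⟩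
  exact h s hs

variable (R K) in
/-- The ordered chains made of sequences of length `n`. -/
abbrev seqsOf (n : ℕ) : Submodule R (SeqChain R K) := Finsupp.supported R R {s | s.1 = n}

variable (R) in
/-- The singular `n`-chains made of simplices contained in `U`. -/
def chainsIn (U : Set X) (n : ℕ) : Submodule R (SingChain R X) :=
  Finsupp.supported R R {s | s.1 = n ∧ Set.range s.2 ⊆ U}

lemma ofSeq_mem_seqsOf {n : ℕ} (w : Fin n → K) : ofSeq R w ∈ seqsOf R K n :=
  Finsupp.single_mem_supported _ _ rfl

lemma seqCone_mem (v : K) {n : ℕ} {x : SeqChain R K} (hx : x ∈ seqsOf R K n) :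
    seqCone v x ∈ seqsOf R K (n + 1) := by
  refine map_mem_of_mem_supported ?_ hx
  rintro ⟨k, w⟩ rfl
  rw [seqCone_ofSeq]
  exact ofSeq_mem_seqsOf _

lemma seqBoundary_mem {n : ℕ} {x : SeqChain R K} (hx : x ∈ seqsOf R K (n + 1)) :
    seqBoundary x ∈ seqsOf R K n := by
  refine map_mem_of_mem_supported ?_ hx
  rintro ⟨_, w⟩ rfl
  rw [seqBoundary_ofSeq_succ]
  exact Submodule.sum_mem _ fun i _ ↦ Submodule.smul_mem _ _ (ofSeq_mem_seqsOf _)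

lemma seqSubdiv_mem (b : ∀ n : ℕ, (Fin (n + 1) → K) → K) {n : ℕ} {x : SeqChain R K}
    (hx : x ∈ seqsOf R K n) : seqSubdiv b x ∈ seqsOf R K n := by
  induction n generalizing x with
  | zero =>
    refine map_mem_of_mem_supported ?_ hx
    rintro ⟨_, w⟩ rfl
    rw [seqSubdiv_ofSeq_zero]
    exact ofSeq_mem_seqsOf _
  | succ n ih =>
    refine map_mem_of_mem_supported ?_ hx
    rintro ⟨_, w⟩ rfl
    rw [seqSubdiv_ofSeq_succ]
    exact seqCone_mem _ (ih (seqBoundary_mem (ofSeq_mem_seqsOf _)))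

lemma seqSubdivHomotopy_mem (b : ∀ n : ℕ, (Fin (n + 1) → K) → K) {n : ℕ} {x : SeqChain R K}
    (hx : x ∈ seqsOf R K n) : seqSubdivHomotopy b x ∈ seqsOf R K (n + 1) := by
  induction n generalizing x with
  | zero =>
    refine map_mem_of_mem_supported ?_ hx
    rintro ⟨_, w⟩ rfl
    rw [seqSubdivHomotopy_ofSeq_zero]
    exact zero_mem _
  | succ n ih =>
    refine map_mem_of_mem_supported ?_ hx
    rintro ⟨_, w⟩ rfl
    have hw := ofSeq_mem_seqsOf (R := R) w
    rw [seqSubdivHomotopy_ofSeq_succ]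
    exact seqCone_mem _ (sub_mem (sub_mem hw (seqSubdiv_mem b hw)) (ih (seqBoundary_mem hw)))

lemma seqPrism_mem (p q : L) {n : ℕ} {x : SeqChain R K} (hx : x ∈ seqsOf R K n) :
    seqPrism p q x ∈ seqsOf R (K × L) (n + 1) := by
  refine map_mem_of_mem_supported ?_ hx
  rintro ⟨n, w⟩ rfl
  rw [seqPrism, seqLift_ofSeq]
  clear hx
  induction n with
  | zero => exact zero_mem _
  | succ n ih => exact sub_mem (ofSeq_mem_seqsOf _) (seqCone_mem _ (ih _))

lemma ofSimplex_mem_chainsIn {U : Set X} {n : ℕ} {σ : C(stdSimplex ℝ (Fin (n + 1)), X)}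
    (h : Set.range σ ⊆ U) : ofSimplex R σ ∈ chainsIn R U n :=
  Finsupp.single_mem_supported _ _ ⟨rfl, h⟩

lemma chainsIn_mono {U V : Set X} (h : U ⊆ V) (n : ℕ) : chainsIn R U n ≤ chainsIn R V n :=
  Finsupp.supported_mono fun _ hs ↦ ⟨hs.1, hs.2.trans h⟩

lemma chainsIn_inter (U V : Set X) (n : ℕ) :
    chainsIn R (U ∩ V) n = chainsIn R U n ⊓ chainsIn R V n := by
  rw [chainsIn, chainsIn, chainsIn, ← Finsupp.supported_inter]
  congr 1
  ext s
  simp only [Set.mem_ofPred_eq, Set.subset_inter_iff, Set.mem_inter_iff]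
  tauto

lemma singPush_mem {f : C(X, Y)} {U : Set X} {V : Set Y} (h : Set.MapsTo f U V) {n : ℕ}
    {x : SingChain R X} (hx : x ∈ chainsIn R U n) : singPush f x ∈ chainsIn R V n := by
  refine map_mem_of_mem_supported ?_ hx
  rintro ⟨m, σ⟩ ⟨rfl, hs⟩
  rw [singPush_ofSimplex]
  refine ofSimplex_mem_chainsIn ?_
  rintro _ ⟨t, rfl⟩
  exact h (hs ⟨t, rfl⟩)

lemma realize_mem [TopologicalSpace K] [AffineSpan K] {n : ℕ} {x : SeqChain R K}
    (hx : x ∈ seqsOf R K (n + 1)) : realize x ∈ chainsIn R (Set.univ : Set K) n := by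
  refine map_mem_of_mem_supported ?_ hx
  rintro ⟨_, w⟩ rfl
  rw [realize_ofSeq_succ]
  exact ofSimplex_mem_chainsIn (Set.subset_univ _)

section Operators

variable {U : Set X} {n : ℕ} {x : SingChain R X}

lemma naturalOp_mem {τ : ∀ n : ℕ, SeqChain R (stdSimplex ℝ (Fin (n + 1)))} {m : ℕ}
    (hτ : τ n ∈ seqsOf R _ (m + 1)) (hx : x ∈ chainsIn R U n) :
    naturalOp τ x ∈ chainsIn R U m := by
  refine map_mem_of_mem_supported ?_ hx
  rintro ⟨k, σ⟩ ⟨rfl, hs⟩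
  rw [naturalOp_ofSimplex]
  exact singPush_mem (fun t _ ↦ hs ⟨t, rfl⟩) (realize_mem hτ)

lemma singBoundary_mem (hx : x ∈ chainsIn R U (n + 1)) : singBoundary x ∈ chainsIn R U n :=
  naturalOp_mem (seqBoundary_mem (ofSeq_mem_seqsOf _)) hx

lemma singBoundary_eq_zero (hx : x ∈ chainsIn R U 0) : singBoundary x = 0 := by
  rw [← Submodule.mem_bot R]
  refine map_mem_of_mem_supported ?_ hx
  rintro ⟨k, σ⟩ ⟨rfl, -⟩
  exact singBoundary_ofSimplex_zero σ

lemma singSubdiv_mem (hx : x ∈ chainsIn R U n) : singSubdiv x ∈ chainsIn R U n :=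
  naturalOp_mem (seqSubdiv_mem _ (ofSeq_mem_seqsOf _)) hx

lemma singSubdivHomotopy_mem (hx : x ∈ chainsIn R U n) :
    singSubdivHomotopy x ∈ chainsIn R U (n + 1) :=
  naturalOp_mem (seqSubdivHomotopy_mem _ (ofSeq_mem_seqsOf _)) hx

lemma singPrism_mem (hx : x ∈ chainsIn R U n) :
    singPrism x ∈ chainsIn R (U ×ˢ (Set.univ : Set unitInterval)) (n + 1) := by
  refine map_mem_of_mem_supported ?_ hx
  rintro ⟨k, σ⟩ ⟨rfl, hs⟩
  have h : Set.MapsTo (σ.prodMap (ContinuousMap.id unitInterval)) Set.univ (U ×ˢ Set.univ) :=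
    fun t _ ↦ ⟨hs ⟨t.1, rfl⟩, trivial⟩
  rw [singPrism_ofSimplex]
  exact singPush_mem h (realize_mem (seqPrism_mem _ _ (ofSeq_mem_seqsOf _)))

end Operators

variable (R) in
/-- The singular homology with coefficients in `R` of the pair `(U, V)` of subsets of a space. -/
abbrev PairHomology (U V : Set X) (n : ℕ) : Type _ :=
  RelHomology (singBoundary (R := R)) (chainsIn R U) (chainsIn R V) n

variable {U V : Set X} {U' V' : Set Y} {U'' V'' : Set Z}

lemma isRelMap_singPush {f : C(X, Y)} (hU : Set.MapsTo f U U') (hV : Set.MapsTo f V V') :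
    IsRelMap singBoundary (chainsIn R U) (chainsIn R V) singBoundary (chainsIn R U')
      (chainsIn R V') (singPush f) :=
  ⟨singBoundary_singPush f, fun _ _ hx ↦ singPush_mem hU hx, fun _ _ hx ↦ singPush_mem hV hx⟩

variable (R) in
/-- The map of homology induced by a continuous map of pairs. -/
noncomputable def pairMap (f : C(X, Y)) (hU : Set.MapsTo f U U') (hV : Set.MapsTo f V V') (n : ℕ) :
    PairHomology R U V n →ₗ[R] PairHomology R U' V' n :=
  relMap (isRelMap_singPush hU hV) n

lemma pairMap_pairMap (f : C(X, Y)) (g : C(Y, Z)) (hU : Set.MapsTo f U U')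
    (hV : Set.MapsTo f V V') (hU' : Set.MapsTo g U' U'') (hV' : Set.MapsTo g V' V'') (n : ℕ)
    (x : PairHomology R U V n) :
    pairMap R g hU' hV' n (pairMap R f hU hV n x) =
      pairMap R (g.comp f) (hU'.comp hU) (hV'.comp hV) n x := by
  induction x using RelHomology.ind with
  | h z hz => simp only [pairMap, relMap_relClass, singPush_singPush]

lemma pairMap_id (n : ℕ) (x : PairHomology R U V n) :
    pairMap R (ContinuousMap.id X) (Set.mapsTo_id U) (Set.mapsTo_id V) n x = x := by
  induction x using RelHomology.ind with
  | h z hz => simp only [pairMap, relMap_relClass, singPush_id]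

lemma pairMap_eq_of_homotopy {f g : C(X, Y)} (F : C(X × unitInterval, Y))
    (hf : ∀ x, F (x, 1) = f x) (hg : ∀ x, F (x, 0) = g x) (hU : ∀ x ∈ U, ∀ t, F (x, t) ∈ U')
    (hV : ∀ x ∈ V, ∀ t, F (x, t) ∈ V') (hfU : Set.MapsTo f U U') (hfV : Set.MapsTo f V V')
    (hgU : Set.MapsTo g U U') (hgV : Set.MapsTo g V V') (n : ℕ) :
    pairMap R f hfU hfV n = pairMap R g hgU hgV n := by
  have hf' : F.comp (sliceIncl 1) = f := ContinuousMap.ext hf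
  have hg' : F.comp (sliceIncl 0) = g := ContinuousMap.ext hg
  refine relMap_eq_of_homotopy _ _ (fun _ ↦ singBoundary_eq_zero) (singPush F ∘ₗ singPrism)
    ?_ ?_ ?_ n
  · intro x
    rw [LinearMap.comp_apply, LinearMap.comp_apply, singBoundary_singPush, singBoundary_singPrism,
      map_sub, map_sub, singPush_singPush, singPush_singPush, hf', hg']
  · exact fun n x hx ↦ singPush_mem (fun p hp ↦ hU _ hp.1 _) (singPrism_mem hx)
  · exact fun n x hx ↦ singPush_mem (fun p hp ↦ hV _ hp.1 _) (singPrism_mem hx)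

end SingularSubcomplexes

section SmallSimplices

open AffineSpan

variable {R : Type*} [CommRing R] {N : ℕ}

lemma dist_comb_le {n : ℕ} (w : Fin (n + 1) → stdSimplex ℝ (Fin (N + 1)))
    (t : stdSimplex ℝ (Fin (n + 1))) {c : stdSimplex ℝ (Fin (N + 1))} {r : ℝ}
    (h : ∀ i, dist (w i) c ≤ r) : dist (comb w t) c ≤ r := by
  change ∑ i, t.1 i • (w i).1 ∈ Metric.closedBall c.1 r
  exact (convex_closedBall c.1 r).sum_mem (fun i _ ↦ t.2.1 i) t.2.2 fun i _ ↦ h i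

lemma affineBarycenter_val {n : ℕ} (w : Fin (n + 1) → stdSimplex ℝ (Fin (N + 1))) :
    (affineBarycenter _ n w).1 = ∑ j, ((n : ℝ) + 1)⁻¹ • (w j).1 := by
  change ∑ j, (stdSimplex.barycenter (𝕜 := ℝ) (X := Fin (n + 1))) j • (w j).1 = _
  refine Finset.sum_congr rfl fun j _ ↦ congrArg (· • (w j).1) ?_
  exact (stdSimplex.barycenter_apply (𝕜 := ℝ) j).trans (by rw [Fintype.card_fin, Nat.cast_succ])

lemma dist_affineBarycenter_le {n : ℕ} (w : Fin (n + 1) → stdSimplex ℝ (Fin (N + 1))) {D : ℝ}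
    (h : ∀ i j, dist (w i) (w j) ≤ D) (i : Fin (n + 1)) :
    dist (affineBarycenter _ n w) (w i) ≤ n / (n + 1) * D := by
  have average : (affineBarycenter _ n w).1 - (w i).1 =
      ∑ j ∈ Finset.univ.erase i, ((n : ℝ) + 1)⁻¹ • ((w j).1 - (w i).1) := by
    rw [Finset.sum_erase _ (by rw [sub_self, smul_zero]), affineBarycenter_val]
    simp only [smul_sub, Finset.sum_sub_distrib, Finset.sum_const, Finset.card_univ,
      Fintype.card_fin]
    rw [← Nat.cast_smul_eq_nsmul ℝ, smul_smul, Nat.cast_succ, mul_inv_cancel₀ (by positivity),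
      one_smul]
  have term (j : Fin (n + 1)) : ‖((n : ℝ) + 1)⁻¹ • ((w j).1 - (w i).1)‖ ≤ ((n : ℝ) + 1)⁻¹ * D := by
    rw [norm_smul, Real.norm_of_nonneg (by positivity)]
    gcongr
    exact (dist_eq_norm (w j).1 (w i).1).symm.trans_le (h j i)
  calc dist (affineBarycenter _ n w) (w i)
      ≤ ∑ j ∈ Finset.univ.erase i, ‖((n : ℝ) + 1)⁻¹ • ((w j).1 - (w i).1)‖ := by
        rw [Subtype.dist_eq, dist_eq_norm, average]
        exact norm_sum_le _ _
    _ ≤ (Finset.univ.erase i).card • (((n : ℝ) + 1)⁻¹ * D) :=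
        Finset.sum_le_card_nsmul _ _ _ fun j _ ↦ term j
    _ = n / (n + 1) * D := by
        rw [Finset.card_erase_of_mem (Finset.mem_univ i), Finset.card_univ, Fintype.card_fin,
          nsmul_eq_mul, Nat.add_sub_cancel]
        ring

/-- The sequence `v` stays in every closed ball containing `w`, and its diameter is smaller than
that of `w` by the factor `(m - 1) / m` of barycentric subdivision. -/
def IsFiner {m n : ℕ} (v : Fin m → stdSimplex ℝ (Fin (N + 1)))
    (w : Fin n → stdSimplex ℝ (Fin (N + 1))) : Prop :=
  (∀ c r, (∀ i, dist (w i) c ≤ r) → ∀ i, dist (v i) c ≤ r) ∧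
    ∀ D, 0 ≤ D → (∀ i j, dist (w i) (w j) ≤ D) → ∀ i j, dist (v i) (v j) ≤ ((m : ℝ) - 1) / m * D

lemma IsFiner.cons_affineBarycenter {m : ℕ} {v : Fin m → stdSimplex ℝ (Fin (N + 1))}
    {w : Fin (m + 1) → stdSimplex ℝ (Fin (N + 1))} {a : Fin (m + 1)}
    (h : IsFiner v (w ∘ a.succAbove)) :
    IsFiner (Fin.cons (affineBarycenter _ m w) v : Fin (m + 1) → _) w := by
  set u : Fin (m + 1) → stdSimplex ℝ (Fin (N + 1)) := Fin.cons (affineBarycenter _ m w) v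
  have ball : ∀ c r, (∀ i, dist (w i) c ≤ r) → ∀ i, dist (u i) c ≤ r := by
    intro c r hw i
    cases i using Fin.cases with
    | zero => exact dist_comb_le w _ hw
    | succ i => exact h.1 c r (fun i ↦ hw _) i
  refine ⟨ball, fun D hD hw i j ↦ ?_⟩
  have apex (i) : dist (u i) (affineBarycenter _ m w) ≤ m / (m + 1) * D :=
    ball _ _ (fun i ↦ by rw [dist_comm]; exact dist_affineBarycenter_le w hw i) i
  rw [Nat.cast_succ, add_sub_cancel_right]
  cases i using Fin.cases with
  | zero => rw [dist_comm]; exact apex j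
  | succ i =>
    cases j using Fin.cases with
    | zero => exact apex _
    | succ j =>
      refine (h.2 D hD (fun _ _ ↦ hw _ _) i j).trans ?_
      have m_pos : 0 < (m : ℝ) := by exact_mod_cast Fin.pos i
      gcongr ?_ * D
      rw [div_le_div_iff₀ m_pos (by positivity)]
      nlinarith

lemma seqSubdiv_ofSeq_mem_isFiner {n : ℕ} (w : Fin n → stdSimplex ℝ (Fin (N + 1))) :
    seqSubdiv (affineBarycenter _) (ofSeq R w) ∈
      Finsupp.supported R R {s | s.1 = n ∧ IsFiner s.2 w} := by
  induction n with
  | zero =>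
    rw [seqSubdiv_ofSeq_zero]
    exact Finsupp.single_mem_supported _ _ ⟨rfl, fun _ _ h ↦ h, fun _ _ _ i ↦ i.elim0⟩
  | succ n ih =>
    rw [seqSubdiv_ofSeq_succ, seqBoundary_ofSeq_succ, map_sum, map_sum]
    refine Submodule.sum_mem _ fun a _ ↦ ?_
    rw [map_smul, map_smul]
    refine Submodule.smul_mem _ _ (map_mem_of_mem_supported ?_ (ih (w ∘ a.succAbove)))
    rintro ⟨_, v⟩ ⟨rfl, hv⟩
    rw [seqCone_ofSeq]
    exact Finsupp.single_mem_supported _ _ ⟨rfl, hv.cons_affineBarycenter⟩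

variable (R) in
/-- The ordered chains made of sequences of length `n` and diameter at most `D` in a simplex. -/
abbrev smallSeqs (N n : ℕ) (D : ℝ) : Submodule R (SeqChain R (stdSimplex ℝ (Fin (N + 1)))) :=
  Finsupp.supported R R {s | s.1 = n ∧ ∀ i j, dist (s.2 i) (s.2 j) ≤ D}

lemma seqSubdiv_mem_smallSeqs {n : ℕ} {D : ℝ} (hD : 0 ≤ D)
    {x : SeqChain R (stdSimplex ℝ (Fin (N + 1)))} (hx : x ∈ smallSeqs R N n D) :
    seqSubdiv (affineBarycenter _) x ∈ smallSeqs R N n (((n : ℝ) - 1) / n * D) := by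
  refine map_mem_of_mem_supported ?_ hx
  rintro ⟨_, w⟩ ⟨rfl, hw⟩
  exact Finsupp.supported_mono
    (by rintro ⟨_, v⟩ ⟨rfl, hv⟩; exact ⟨rfl, hv.2 D hD hw⟩) (seqSubdiv_ofSeq_mem_isFiner w)

lemma vertexSeq_mem_smallSeqs (n : ℕ) : vertexSeq R n ∈ smallSeqs R n (n + 1) 2 := by
  refine Finsupp.single_mem_supported _ _ ⟨rfl, fun i j ↦ (dist_pi_le_iff zero_le_two).2 fun a ↦ ?_⟩
  have coord (t : stdSimplex ℝ (Fin (n + 1))) : 0 ≤ t.1 a ∧ t.1 a ≤ 1 :=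
    ⟨t.2.1 a, t.2.2 ▸ Finset.single_le_sum (fun b _ ↦ t.2.1 b) (Finset.mem_univ a)⟩
  have hi := coord (stdSimplex.vertex i)
  have hj := coord (stdSimplex.vertex j)
  rw [Real.dist_eq, abs_le]
  constructor <;> linarith

lemma seqSubdiv_pow_vertexSeq_mem_smallSeqs (n m : ℕ) :
    (seqSubdiv (affineBarycenter _) ^ m) (vertexSeq R n) ∈
      smallSeqs R n (n + 1) ((n / (n + 1)) ^ m * 2) := by
  induction m with
  | zero =>
    rw [pow_zero, pow_zero, one_mul]
    exact vertexSeq_mem_smallSeqs n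
  | succ m ih =>
    have step := seqSubdiv_mem_smallSeqs (by positivity) ih
    rwa [Nat.cast_succ, add_sub_cancel_right, ← mul_assoc, ← pow_succ', ← Module.End.mul_apply,
      ← pow_succ'] at step

variable {X Y : Type*} [TopologicalSpace X] [TopologicalSpace Y] {U V W : Set X} {n : ℕ}

lemma singSubdiv_pow_ofSimplex (m : ℕ) (σ : C(stdSimplex ℝ (Fin (n + 1)), X)) :
    (singSubdiv ^ m) (ofSimplex R σ) =
      singPush σ (realize ((seqSubdiv (affineBarycenter _) ^ m) (vertexSeq R n))) := by
  induction m with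
  | zero =>
    rw [pow_zero, pow_zero, Module.End.one_apply, Module.End.one_apply, realize_vertexSeq,
      singPush_ofSimplex, ContinuousMap.comp_id]
  | succ m ih =>
    rw [pow_succ', pow_succ', Module.End.mul_apply, Module.End.mul_apply, ih, singSubdiv,
      naturalOp_singPush, ← singSubdiv, singSubdiv_realize]

lemma exists_singSubdiv_pow_ofSimplex_mem (hV : IsOpen V) (hW : IsOpen W)
    (σ : C(stdSimplex ℝ (Fin (n + 1)), X)) (hσ : Set.range σ ⊆ V ∪ W) :
    ∃ M, ∀ m ≥ M, (singSubdiv ^ m) (ofSimplex R σ) ∈ chainsIn R V n ⊔ chainsIn R W n := by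
  obtain ⟨δ, hδ, lebesgue⟩ := lebesgue_number_lemma_of_metric (s := Set.univ)
    (c := fun b : Bool ↦ σ ⁻¹' (if b then V else W)) isCompact_univ
    (Bool.rec (hW.preimage σ.continuous) (hV.preimage σ.continuous))
    fun t _ ↦ Set.mem_iUnion.2 ((hσ ⟨t, rfl⟩).elim (⟨true, ·⟩) (⟨false, ·⟩))
  have ratio_lt_one : (n : ℝ) / (n + 1) < 1 := (div_lt_one (by positivity)).2 (lt_add_one _)
  have diam_tendsto : Filter.Tendsto (fun m : ℕ ↦ ((n : ℝ) / (n + 1)) ^ m * 2) Filter.atTop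
      (nhds 0) := by
    simpa only [zero_mul] using
      (tendsto_pow_atTop_nhds_zero_of_lt_one (by positivity) ratio_lt_one).mul_const 2
  obtain ⟨M, hM⟩ := Filter.eventually_atTop.1 (diam_tendsto.eventually (gt_mem_nhds hδ))
  refine ⟨M, fun m hm ↦ ?_⟩
  rw [singSubdiv_pow_ofSimplex, ← LinearMap.comp_apply]
  refine map_mem_of_mem_supported ?_ (seqSubdiv_pow_vertexSeq_mem_smallSeqs n m)
  rintro ⟨_, w⟩ ⟨rfl, hw⟩
  obtain ⟨b, hb⟩ := lebesgue (w 0) trivial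
  have range_subset : Set.range (σ.comp (comb w)) ⊆ if b then V else W := by
    rintro _ ⟨t, rfl⟩
    exact hb ((dist_comb_le w t fun i ↦ hw i 0).trans_lt (hM m hm))
  rw [LinearMap.comp_apply, realize_ofSeq_succ, singPush_ofSimplex]
  cases b with
  | false => exact Submodule.mem_sup_right (ofSimplex_mem_chainsIn range_subset)
  | true => exact Submodule.mem_sup_left (ofSimplex_mem_chainsIn range_subset)

lemma exists_singSubdiv_pow_mem (hV : IsOpen V) (hW : IsOpen W) {x : SingChain R X}
    (hx : x ∈ chainsIn R (V ∪ W) n) :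
    ∃ M, ∀ m ≥ M, (singSubdiv ^ m) x ∈ chainsIn R V n ⊔ chainsIn R W n := by
  rw [chainsIn, Finsupp.supported_eq_span_single] at hx
  induction hx using Submodule.span_induction with
  | mem x h =>
    obtain ⟨⟨_, σ⟩, ⟨rfl, hσ⟩, rfl⟩ := h
    exact exists_singSubdiv_pow_ofSimplex_mem hV hW σ hσ
  | zero => exact ⟨0, fun m _ ↦ by rw [map_zero]; exact zero_mem _⟩
  | add x y _ _ hx hy =>
    obtain ⟨M, hM⟩ := hx
    obtain ⟨M', hM'⟩ := hy
    refine ⟨max M M', fun m hm ↦ ?_⟩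
    rw [map_add]
    exact add_mem (hM m ((le_max_left _ _).trans hm)) (hM' m ((le_max_right _ _).trans hm))
  | smul c x _ hx =>
    obtain ⟨M, hM⟩ := hx
    exact ⟨M, fun m hm ↦ by rw [map_smul]; exact Submodule.smul_mem _ _ (hM m hm)⟩

lemma singSubdiv_pow_mem {x : SingChain R X} (hx : x ∈ chainsIn R U n) (m : ℕ) :
    (singSubdiv ^ m) x ∈ chainsIn R U n := by
  induction m with
  | zero => exact hx
  | succ m ih => rw [pow_succ', Module.End.mul_apply]; exact singSubdiv_mem ih

lemma singBoundary_singSubdiv_pow (m : ℕ) (x : SingChain R X) :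
    singBoundary ((singSubdiv ^ m) x) = (singSubdiv ^ m) (singBoundary x) := by
  induction m with
  | zero => rfl
  | succ m ih =>
    rw [pow_succ', Module.End.mul_apply, Module.End.mul_apply, singBoundary_singSubdiv, ih]

/-- The chain homotopy between the identity and the `m`-fold subdivision. -/
noncomputable def singSubdivPowHomotopy (m : ℕ) : SingChain R X →ₗ[R] SingChain R X :=
  singSubdivHomotopy ∘ₗ ∑ k ∈ Finset.range m, singSubdiv ^ k

lemma singSubdivPowHomotopy_mem {x : SingChain R X} (hx : x ∈ chainsIn R U n) (m : ℕ) :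
    singSubdivPowHomotopy m x ∈ chainsIn R U (n + 1) := by
  rw [singSubdivPowHomotopy, LinearMap.comp_apply, LinearMap.sum_apply]
  exact singSubdivHomotopy_mem (Submodule.sum_mem _ fun k _ ↦ singSubdiv_pow_mem hx k)

lemma sub_singSubdiv_pow (m : ℕ) (x : SingChain R X) :
    x - (singSubdiv ^ m) x =
      singBoundary (singSubdivPowHomotopy m x) + singSubdivPowHomotopy m (singBoundary x) := by
  induction m with
  | zero =>
    simp only [singSubdivPowHomotopy, pow_zero, Module.End.one_apply, sub_self, Finset.range_zero,
      Finset.sum_empty, LinearMap.comp_zero, LinearMap.zero_apply, map_zero, add_zero]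
  | succ m ih =>
    have split (y : SingChain R X) : singSubdivPowHomotopy (m + 1) y =
        singSubdivPowHomotopy m y + singSubdivHomotopy ((singSubdiv ^ m) y) := by
      rw [singSubdivPowHomotopy, Finset.sum_range_succ, LinearMap.comp_add]
      rfl
    rw [split, split, map_add, singBoundary_singSubdivHomotopy, singBoundary_singSubdiv_pow,
      pow_succ', Module.End.mul_apply, ← sub_add_sub_cancel x ((singSubdiv ^ m) x), ih]
    abel

lemma singSubdivPowHomotopy_singBoundary_mem {z : SingChain R X}
    (hz : z ∈ relCycles singBoundary (chainsIn R U) (chainsIn R V) n) (m : ℕ) :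
    singSubdivPowHomotopy m (singBoundary z) ∈ chainsIn R V n := by
  cases n with
  | zero => rw [singBoundary_eq_zero hz.1, map_zero]; exact zero_mem _
  | succ n => exact singSubdivPowHomotopy_mem hz.2 m

lemma isRelMap_inclusion {U' V' : Set X} (hU : U ⊆ U') (hV : V ⊆ V') :
    IsRelMap singBoundary (chainsIn R U) (chainsIn R V) singBoundary (chainsIn R U')
      (chainsIn R V') LinearMap.id :=
  ⟨fun _ ↦ rfl, fun n _ hx ↦ chainsIn_mono hU n hx, fun n _ hx ↦ chainsIn_mono hV n hx⟩

variable (R) in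
/-- The map on homology induced by an inclusion of pairs. -/
noncomputable def pairIncl {U' V' : Set X} (hU : U ⊆ U') (hV : V ⊆ V') (n : ℕ) :
    PairHomology R U V n →ₗ[R] PairHomology R U' V' n :=
  relMap (isRelMap_inclusion hU hV) n

lemma mapsTo_id_of_subset {U V : Set X} (h : U ⊆ V) :
    Set.MapsTo (ContinuousMap.id X) U V := h

lemma pairIncl_eq_pairMap {U' V' : Set X} (hU : U ⊆ U') (hV : V ⊆ V') (n : ℕ)
    (x : PairHomology R U V n) :
    pairIncl R hU hV n x = pairMap R (ContinuousMap.id X) (mapsTo_id_of_subset hU)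
      (mapsTo_id_of_subset hV) n x := by
  induction x using RelHomology.ind with
  | h z hz => simp only [pairMap, pairIncl, relMap_relClass, singPush_id, LinearMap.id_apply]

lemma mem_relCycles_inter_of_singBoundary_eq_add {z c c' : SingChain R X}
    (hc : c ∈ chainsIn R V n) (hc' : c' ∈ chainsIn R W n) (e : singBoundary z = c + c') :
    c ∈ relCycles singBoundary (chainsIn R V) (chainsIn R (V ∩ W)) n := by
  refine mem_relCycles.2 ⟨hc, ?_⟩
  cases n with
  | zero => rw [singBoundary_eq_zero hc]; exact zero_mem _
  | succ n =>
    have boundary_c : singBoundary c = -singBoundary c' := by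
      rw [eq_neg_iff_add_eq_zero, ← map_add, ← e, singBoundary_singBoundary]
    rw [chainsIn_inter]
    refine ⟨singBoundary_mem hc, ?_⟩
    rw [boundary_c]
    exact neg_mem (singBoundary_mem hc')

lemma mem_relBoundaries_of_mem_relBoundaries_union (hV : IsOpen V) (hW : IsOpen W)
    {z : SingChain R X} (hz : z ∈ relCycles singBoundary (chainsIn R V) (chainsIn R (V ∩ W)) n)
    (h : z ∈ relBoundaries singBoundary (chainsIn R (V ∪ W)) (chainsIn R W) n) :
    z ∈ relBoundaries singBoundary (chainsIn R V) (chainsIn R (V ∩ W)) n := by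
  obtain ⟨b, hb, w, hw, e⟩ := mem_relBoundaries.1 h
  obtain ⟨M, hM⟩ := exists_singSubdiv_pow_mem hV hW hw
  obtain ⟨v, hv, w', hw', split⟩ := Submodule.mem_sup.1 (hM M le_rfl)
  have remainder : (singSubdiv ^ M) z - singBoundary v =
      (singSubdiv ^ M) b + singBoundary w' := by
    rw [← e, map_add, ← singBoundary_singSubdiv_pow, ← split, map_add]
    abel
  have remainder_mem : (singSubdiv ^ M) z - singBoundary v ∈ chainsIn R (V ∩ W) n := by
    rw [chainsIn_inter]
    refine ⟨sub_mem (singSubdiv_pow_mem hz.1 M) (singBoundary_mem hv), ?_⟩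
    rw [remainder]
    exact add_mem (singSubdiv_pow_mem hb M) (singBoundary_mem hw')
  refine mem_relBoundaries.2
    ⟨_, add_mem remainder_mem (singSubdivPowHomotopy_singBoundary_mem hz M),
      v + singSubdivPowHomotopy M z, add_mem hv (singSubdivPowHomotopy_mem hz.1 M), ?_⟩
  have homotopy := sub_singSubdiv_pow M z
  rw [sub_eq_iff_eq_add] at homotopy
  rw [map_add]
  conv_rhs => rw [homotopy]
  abel

lemma exists_mem_relCycles_inter (hV : IsOpen V) (hW : IsOpen W) {z : SingChain R X}
    (hz : z ∈ relCycles singBoundary (chainsIn R (V ∪ W)) (chainsIn R W) n) :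
    ∃ v ∈ relCycles singBoundary (chainsIn R V) (chainsIn R (V ∩ W)) n,
      v - z ∈ relBoundaries singBoundary (chainsIn R (V ∪ W)) (chainsIn R W) n := by
  obtain ⟨M, hM⟩ := exists_singSubdiv_pow_mem hV hW hz.1
  obtain ⟨v, hv, w, hw, split⟩ := Submodule.mem_sup.1 (hM M le_rfl)
  refine ⟨v, mem_relCycles.2 ⟨hv, ?_⟩, ?_⟩
  · cases n with
    | zero => rw [singBoundary_eq_zero hv]; exact zero_mem _
    | succ n =>
      have boundary_v : singBoundary v = (singSubdiv ^ M) (singBoundary z) - singBoundary w := by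
        rw [← singBoundary_singSubdiv_pow, ← split, map_add, add_sub_cancel_right]
      rw [chainsIn_inter]
      refine ⟨singBoundary_mem hv, ?_⟩
      rw [boundary_v]
      exact sub_mem (singSubdiv_pow_mem hz.2 M) (singBoundary_mem hw)
  · have diff : v - z = (-w - singSubdivPowHomotopy M (singBoundary z)) +
        singBoundary (-singSubdivPowHomotopy M z) := by
      rw [map_neg, eq_sub_of_add_eq split, ← sub_sub_cancel z ((singSubdiv ^ M) z),
        sub_singSubdiv_pow]
      abel
    rw [diff]
    exact add_mem (mem_relBoundaries_of_mem
        (sub_mem (neg_mem hw) (singSubdivPowHomotopy_singBoundary_mem hz M)))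
      (boundary_mem_relBoundaries (neg_mem (singSubdivPowHomotopy_mem hz.1 M)))

/-- Excision. -/
theorem pairIncl_bijective {A U : Set X} (hV : IsOpen V) (hW : IsOpen W) (hU : V ∪ W = U)
    (hA : V ∩ W = A) (hVU : V ⊆ U) (hAW : A ⊆ W) (n : ℕ) :
    Function.Bijective (pairIncl R hVU hAW n) := by
  subst hU hA
  exact relMap_bijective _ n (fun _ hz ↦ mem_relBoundaries_of_mem_relBoundaries_union hV hW hz)
    fun _ hz ↦ exists_mem_relCycles_inter hV hW hz

lemma exists_singPush_eq {f : C(X, Y)} (hf : Topology.IsEmbedding f) {y : SingChain R Y}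
    (hy : y ∈ chainsIn R (f '' U) n) : ∃ x ∈ chainsIn R U n, singPush f x = y := by
  refine map_mem_of_mem_supported (φ := LinearMap.id) (Q := (chainsIn R U n).map (singPush f)) ?_ hy
  rintro ⟨m, σ⟩ ⟨rfl, hσ⟩
  choose τ hτ hfτ using fun t ↦ hσ ⟨t, rfl⟩
  have τ_continuous : Continuous τ := by
    rw [hf.continuous_iff, show ⇑f ∘ τ = σ from funext hfτ]
    exact σ.continuous
  refine ⟨ofSimplex R ⟨τ, τ_continuous⟩, ofSimplex_mem_chainsIn ?_, ?_⟩
  · rintro _ ⟨t, rfl⟩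
    exact hτ t
  · rw [singPush_ofSimplex]
    exact congrArg (ofSimplex R) (ContinuousMap.ext hfτ)

lemma singPush_injective {f : C(X, Y)} (hf : Function.Injective f) :
    Function.Injective (singPush (R := R) f) := by
  refine Finsupp.mapDomain_injective ?_
  rintro ⟨n, σ⟩ ⟨m, τ⟩ h
  obtain ⟨rfl, h⟩ := Sigma.mk.inj_iff.1 h
  exact congrArg (Sigma.mk n)
    (ContinuousMap.ext fun t ↦ hf (DFunLike.congr_fun (eq_of_heq h) t))

theorem pairMap_bijective_of_isEmbedding {f : C(X, Y)} (hf : Topology.IsEmbedding f) (U V : Set X)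
    (n : ℕ) : Function.Bijective (pairMap R f (Set.mapsTo_image f U) (Set.mapsTo_image f V) n) :=
  relMap_bijective_of_injective
    (isRelMap_singPush (Set.mapsTo_image f U) (Set.mapsTo_image f V))
    (singPush_injective hf.injective) (fun _ _ ↦ exists_singPush_eq hf)
    (fun _ _ ↦ exists_singPush_eq hf) n

end SmallSimplices

section Vanishing

variable {R : Type*} [CommRing R] {X Y : Type*} [TopologicalSpace X] [TopologicalSpace Y]

lemma pairMap_eq_zero {f : C(X, Y)} {U V : Set X} {U' V' : Set Y} (hU : Set.MapsTo f U U')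
    (hV : Set.MapsTo f V V') (h : Set.MapsTo f U V') (n : ℕ) : pairMap R f hU hV n = 0 := by
  refine LinearMap.ext fun x ↦ ?_
  induction x using RelHomology.ind with
  | h z hz =>
    rw [pairMap, relMap_relClass, LinearMap.zero_apply, relClass_eq_zero]
    exact mem_relBoundaries_of_mem (singPush_mem h hz.1)

section Line

variable {E : Type*} [AddCommGroup E] [Module ℝ E] [TopologicalSpace E] [IsTopologicalAddGroup E]
  [ContinuousSMul ℝ E]

/-- The straight-line homotopy from the identity to `f`. -/
noncomputable def lineHomotopy (f : C(E, E)) : C(E × unitInterval, E) where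
  toFun p := AffineMap.lineMap p.1 (f p.1) (p.2 : ℝ)
  continuous_toFun := by
    simp only [AffineMap.lineMap_apply_module]
    fun_prop

variable (f : C(E, E))

lemma pairMap_eq_id_of_line
    {U V : Set E} (hU : ∀ x ∈ U, ∀ t : unitInterval, AffineMap.lineMap x (f x) (t : ℝ) ∈ U)
    (hV : ∀ x ∈ V, ∀ t : unitInterval, AffineMap.lineMap x (f x) (t : ℝ) ∈ V)
    (hfU : Set.MapsTo f U U) (hfV : Set.MapsTo f V V) (n : ℕ) (x : PairHomology R U V n) :
    pairMap R f hfU hfV n x = x := by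
  rw [pairMap_eq_of_homotopy (g := ContinuousMap.id E) (lineHomotopy f)
    (fun x ↦ AffineMap.lineMap_apply_one x (f x)) (fun x ↦ AffineMap.lineMap_apply_zero x (f x))
    hU hV hfU hfV (Set.mapsTo_id U) (Set.mapsTo_id V), pairMap_id]

lemma subsingleton_pairHomology_of_line {U V : Set E}
    (hU : ∀ x ∈ U, ∀ t : unitInterval, AffineMap.lineMap x (f x) (t : ℝ) ∈ U)
    (hV : ∀ x ∈ V, ∀ t : unitInterval, AffineMap.lineMap x (f x) (t : ℝ) ∈ V)
    (hVU : V ⊆ U) (hf : Set.MapsTo f U V) (n : ℕ) : Subsingleton (PairHomology R U V n) := by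
  refine subsingleton_of_forall_eq 0 fun x ↦ ?_
  rw [← pairMap_eq_id_of_line f hU hV (hf.mono_right hVU) (hf.mono_left hVU) n x,
    pairMap_eq_zero _ _ hf]
  rfl

lemma pairIncl_bijective_of_line {U V U' V' : Set E} (hUU' : U ⊆ U') (hVV' : V ⊆ V')
    (hU : ∀ x ∈ U, ∀ t : unitInterval, AffineMap.lineMap x (f x) (t : ℝ) ∈ U)
    (hV : ∀ x ∈ V, ∀ t : unitInterval, AffineMap.lineMap x (f x) (t : ℝ) ∈ V)
    (hU' : ∀ x ∈ U', ∀ t : unitInterval, AffineMap.lineMap x (f x) (t : ℝ) ∈ U')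
    (hV' : ∀ x ∈ V', ∀ t : unitInterval, AffineMap.lineMap x (f x) (t : ℝ) ∈ V')
    (hfU : Set.MapsTo f U' U) (hfV : Set.MapsTo f V' V) (n : ℕ) :
    Function.Bijective (pairIncl R hUU' hVV' n) := by
  refine Function.bijective_iff_has_inverse.2 ⟨pairMap R f hfU hfV n, fun x ↦ ?_, fun x ↦ ?_⟩
  · rw [pairIncl_eq_pairMap, pairMap_pairMap]
    exact pairMap_eq_id_of_line f hU hV _ _ n x
  · rw [pairIncl_eq_pairMap, pairMap_pairMap]
    exact pairMap_eq_id_of_line f hU' hV' _ _ n x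

end Line

variable (R) in
/-- The constant singular `n`-simplex at `x`, as a chain. -/
noncomputable def constChain (x : X) (n : ℕ) : SingChain R X :=
  ofSimplex R (ContinuousMap.const (stdSimplex ℝ (Fin (n + 1))) x)

lemma constChain_mem (x : X) (n : ℕ) : constChain R x n ∈ chainsIn R Set.univ n :=
  ofSimplex_mem_chainsIn (Set.subset_univ _)

lemma eq_zero_of_smul_constChain {x : X} {n : ℕ} {q : R} (h : q • constChain R x n = 0) :
    q = 0 := by
  rwa [constChain, ofSimplex, Finsupp.smul_single_one, Finsupp.single_eq_zero] at h

lemma exists_singPush_const (y : Y) {U : Set X} {n : ℕ} {z : SingChain R X}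
    (hz : z ∈ chainsIn R U n) :
    ∃ q : R, singPush (ContinuousMap.const X y) z = q • constChain R y n := by
  have mem_span : singPush (ContinuousMap.const X y) z ∈ Submodule.span R {constChain R y n} := by
    refine map_mem_of_mem_supported ?_ hz
    rintro ⟨m, σ⟩ ⟨rfl, -⟩
    rw [singPush_ofSimplex]
    exact Submodule.mem_span_singleton_self _
  obtain ⟨q, hq⟩ := Submodule.mem_span_singleton.1 mem_span
  exact ⟨q, hq.symm⟩

lemma singBoundary_constChain (x : X) (n : ℕ) :
    singBoundary (constChain R x (n + 1)) = if Even (n + 1) then constChain R x n else 0 := by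
  have faces : singBoundary (constChain R x (n + 1)) =
      (∑ i : Fin (n + 2), (-1 : R) ^ (i : ℕ)) • constChain R x n := by
    rw [constChain, singBoundary_ofSimplex_succ, Finset.sum_smul]
    rfl
  rw [faces, Fin.sum_univ_eq_sum_range, neg_one_geom_sum]
  simp only [Nat.even_add_one (n := n + 1), ite_not, ite_smul, one_smul, zero_smul]

variable (R X) in
/-- The augmentation, which sends every singular simplex to `1`. -/
noncomputable def augmentation : SingChain R X →ₗ[R] R := Finsupp.linearCombination R fun _ ↦ 1

lemma augmentation_ofSimplex {n : ℕ} (σ : C(stdSimplex ℝ (Fin (n + 1)), X)) :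
    augmentation R X (ofSimplex R σ) = 1 := by
  rw [augmentation, ofSimplex, Finsupp.linearCombination_single, smul_eq_mul, one_mul]

lemma augmentation_singBoundary {U : Set X} {w : SingChain R X} (hw : w ∈ chainsIn R U 1) :
    augmentation R X (singBoundary w) = 0 := by
  rw [← Submodule.mem_bot R]
  refine map_mem_of_mem_supported (φ := augmentation R X ∘ₗ singBoundary) ?_ hw
  rintro ⟨m, σ⟩ ⟨rfl : m = 1, -⟩
  change augmentation R X (singBoundary (ofSimplex R σ)) ∈ _
  rw [singBoundary_ofSimplex_succ (n := 0), map_sum, Fin.sum_univ_two, map_smul, map_smul,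
    augmentation_ofSimplex, augmentation_ofSimplex, ← add_smul, Fin.val_zero, Fin.val_one, pow_zero,
    pow_one, add_neg_cancel, zero_smul]
  exact zero_mem _

lemma eq_zero_of_mem_chainsIn_empty {n : ℕ} {z : SingChain R X}
    (hz : z ∈ chainsIn R (∅ : Set X) n) : z = 0 := by
  rw [← Submodule.mem_bot R]
  refine map_mem_of_mem_supported (φ := LinearMap.id) ?_ hz
  rintro ⟨m, σ⟩ ⟨rfl, h⟩
  exact (h ⟨stdSimplex.vertex 0, rfl⟩).elim

lemma subsingleton_pairHomology_of_contractible (x₀ : X) {n : ℕ}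
    (h : ∀ x : PairHomology R (Set.univ : Set X) ∅ (n + 1),
      pairMap R (ContinuousMap.const X x₀) (Set.mapsTo_univ _ _) (Set.mapsTo_empty _ _) _ x = x) :
    Subsingleton (PairHomology R (Set.univ : Set X) ∅ (n + 1)) := by
  refine subsingleton_of_forall_eq 0 fun x ↦ ?_
  induction x using RelHomology.ind with
  | h z hz =>
    obtain ⟨q, hq⟩ := exists_singPush_const x₀ hz.1
    rw [← h (relClass z hz), pairMap, relMap_relClass, relClass_eq_zero, hq]
    by_cases parity : Even (n + 1)
    · have boundary_eq : q • constChain R x₀ n = 0 := by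
        have := singBoundary_constChain (R := R) x₀ n
        rw [if_pos parity] at this
        rw [← this, ← map_smul, ← hq, singBoundary_singPush,
          eq_zero_of_mem_chainsIn_empty (n := n) hz.2, map_zero]
      rw [eq_zero_of_smul_constChain boundary_eq, zero_smul]
      exact zero_mem _
    · have boundary_eq := singBoundary_constChain (R := R) x₀ (n + 1)
      rw [if_pos (Nat.even_add_one.2 parity)] at boundary_eq
      rw [← boundary_eq]
      exact Submodule.smul_mem _ _ (boundary_mem_relBoundaries (constChain_mem x₀ _))

lemma rank_pairHomology_zero_of_contractible {F : Type*} [Field F] (x₀ : X)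
    (h : ∀ x : PairHomology F (Set.univ : Set X) ∅ 0,
      pairMap F (ContinuousMap.const X x₀) (Set.mapsTo_univ _ _) (Set.mapsTo_empty _ _) 0 x = x) :
    Module.rank F (PairHomology F (Set.univ : Set X) ∅ 0) = 1 := by
  have cycle : constChain F x₀ 0 ∈
      relCycles singBoundary (chainsIn F Set.univ) (chainsIn F (∅ : Set X)) 0 := by
    refine mem_relCycles.2 ⟨constChain_mem x₀ 0, ?_⟩
    rw [singBoundary_eq_zero (constChain_mem x₀ 0)]
    exact zero_mem _
  rw [rank_eq_one_iff]
  refine ⟨relClass _ cycle, ?_, fun x ↦ ?_⟩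
  · rw [Ne, relClass_eq_zero, mem_relBoundaries]
    rintro ⟨a, ha, w, hw, e⟩
    have augmented := congrArg (augmentation F X) e
    rw [eq_zero_of_mem_chainsIn_empty ha, zero_add, augmentation_singBoundary hw, constChain,
      augmentation_ofSimplex] at augmented
    exact zero_ne_one augmented
  · induction x using RelHomology.ind with
    | h z hz =>
      obtain ⟨q, hq⟩ := exists_singPush_const x₀ hz.1
      refine ⟨q, ?_⟩
      rw [← h (relClass z hz), pairMap, relMap_relClass, relClass_smul]
      simp only [hq]

theorem rank_pairHomology_of_contractible {F : Type*} [Field F] (x₀ : X)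
    (h : ∀ n (x : PairHomology F (Set.univ : Set X) ∅ n),
      pairMap F (ContinuousMap.const X x₀) (Set.mapsTo_univ _ _) (Set.mapsTo_empty _ _) n x = x)
    (n : ℕ) : Module.rank F (PairHomology F (Set.univ : Set X) ∅ n) = if n = 0 then 1 else 0 := by
  cases n with
  | zero => exact rank_pairHomology_zero_of_contractible x₀ (h 0)
  | succ n =>
    have := subsingleton_pairHomology_of_contractible x₀ (h (n + 1))
    exact rank_subsingleton' F _

lemma exists_relClass_subordinate {U V V₁ V₂ V₃ : Set X} (h₁ : IsOpen V₁) (h₂ : IsOpen V₂)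
    (h₃ : IsOpen V₃) (hV : V₁ ∪ (V₂ ∪ V₃) = V) {n : ℕ} (x : PairHomology R U V (n + 1)) :
    ∃ z, ∃ hz : z ∈ relCycles singBoundary (chainsIn R U) (chainsIn R V) (n + 1),
      x = relClass z hz ∧ ∃ a ∈ chainsIn R V₁ n, ∃ b ∈ chainsIn R V₂ n, ∃ c ∈ chainsIn R V₃ n,
        singBoundary z = a + b + c := by
  subst hV
  induction x using RelHomology.ind with
  | h z hz =>
    obtain ⟨M, hM⟩ := exists_singSubdiv_pow_mem h₁ (h₂.union h₃) (show singBoundary z ∈ _ from hz.2)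
    obtain ⟨a, ha, y, hy, split⟩ := Submodule.mem_sup.1 (hM M le_rfl)
    obtain ⟨M', hM'⟩ := exists_singSubdiv_pow_mem h₂ h₃ hy
    obtain ⟨b, hb, c, hc, split'⟩ := Submodule.mem_sup.1 (hM' M' le_rfl)
    have boundary_eq : singBoundary ((singSubdiv ^ (M' + M)) z) =
        (singSubdiv ^ M') a + b + c := by
      rw [singBoundary_singSubdiv_pow, pow_add, Module.End.mul_apply, ← split, map_add, ← split',
        add_assoc]
    refine ⟨(singSubdiv ^ (M' + M)) z, mem_relCycles.2 ⟨singSubdiv_pow_mem hz.1 _, ?_⟩, ?_, _,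
      singSubdiv_pow_mem ha _, b, hb, c, hc, boundary_eq⟩
    · rw [singBoundary_singSubdiv_pow]
      exact singSubdiv_pow_mem hz.2 _
    · rw [relClass_eq, sub_singSubdiv_pow]
      exact add_mem (boundary_mem_relBoundaries (singSubdivPowHomotopy_mem hz.1 _))
        (mem_relBoundaries_of_mem (singSubdivPowHomotopy_singBoundary_mem hz _))

end Vanishing

section LocalHomology

variable {R : Type*} [CommRing R] {ι : Type*}

/-- Vectors with a nonzero coordinate in `I`: the complement of the linear subspace where the
coordinates in `I` vanish. -/
def offSet (I : Finset ι) : Set (ι → ℝ) := {x | ∃ i ∈ I, x i ≠ 0}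

lemma isOpen_offSet (I : Finset ι) : IsOpen (offSet I) := by
  have cover : offSet I = ⋃ i ∈ I, {x : ι → ℝ | x i ≠ 0} := by
    ext x
    simp only [offSet, Set.mem_ofPred_eq, Set.mem_iUnion, exists_prop]
  rw [cover]
  exact isOpen_biUnion fun i _ ↦ isOpen_ne_fun (continuous_apply i) continuous_const

lemma offSet_empty : offSet (∅ : Finset ι) = ∅ :=
  Set.eq_empty_of_forall_notMem fun _ ⟨_, hi, _⟩ ↦ Finset.notMem_empty _ hi

/-- The open half-space where the coordinate `a` has sign `s`. -/
def halfSpace (a : ι) (s : ℤˣ) : Set (ι → ℝ) := {x | 0 < ((s : ℤ) : ℝ) * x a}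

lemma mem_halfSpace {a : ι} {s : ℤˣ} {x : ι → ℝ} :
    x ∈ halfSpace a s ↔ 0 < ((s : ℤ) : ℝ) * x a := Iff.rfl

lemma isOpen_halfSpace (a : ι) (s : ℤˣ) : IsOpen (halfSpace a s) :=
  isOpen_lt continuous_const (by fun_prop)

lemma convex_halfSpace (a : ι) (s : ℤˣ) : Convex ℝ (halfSpace a s) :=
  convex_halfSpace_gt (((s : ℤ) : ℝ) • LinearMap.proj (R := ℝ) (φ := fun _ : ι ↦ ℝ) a).isLinear 0

lemma cast_sign_mul_self (s : ℤˣ) : ((s : ℤ) : ℝ) * ((s : ℤ) : ℝ) = 1 := by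
  rw [← Int.cast_mul, ← Units.val_mul, Int.units_mul_self, Units.val_one, Int.cast_one]

lemma halfSpace_inter_subset (a : ι) (I : Finset ι) :
    halfSpace a 1 ∩ (halfSpace a (-1) ∪ offSet I) ⊆ offSet I := by
  rintro x ⟨pos, neg | off⟩
  · rw [mem_halfSpace, Units.val_one, Int.cast_one, one_mul] at pos
    rw [mem_halfSpace, Units.val_neg, Units.val_one, Int.cast_neg, Int.cast_one, neg_one_mul,
      Left.neg_pos_iff] at neg
    exact absurd neg pos.not_gt
  · exact off

lemma halfSpace_union [DecidableEq ι] (a : ι) (I : Finset ι) :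
    halfSpace a 1 ∪ (halfSpace a (-1) ∪ offSet I) = offSet (insert a I) := by
  ext x
  simp only [offSet, Set.mem_union, mem_halfSpace, Units.val_one, Int.cast_one, one_mul,
    Units.val_neg, Int.cast_neg, neg_one_mul, Left.neg_pos_iff, Set.mem_ofPred_eq,
    Finset.mem_insert, exists_eq_or_imp]
  rw [← or_assoc, ne_iff_lt_or_gt, or_comm (a := x a < 0)]

open scoped Classical in
/-- The map setting the coordinate `a` to the sign `s`. -/
noncomputable def setCoord (a : ι) (s : ℤˣ) : C(ι → ℝ, ι → ℝ) where
  toFun x := Function.update x a ((s : ℤ) : ℝ)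
  continuous_toFun := by fun_prop

lemma setCoord_self (a : ι) (s : ℤˣ) (x : ι → ℝ) : setCoord a s x a = ((s : ℤ) : ℝ) := by
  classical exact Function.update_self a ((s : ℤ) : ℝ) x

lemma setCoord_of_ne {a i : ι} (h : i ≠ a) (s : ℤˣ) (x : ι → ℝ) : setCoord a s x i = x i := by
  classical exact Function.update_of_ne h ..

lemma setCoord_mem_halfSpace (a : ι) (s : ℤˣ) (x : ι → ℝ) : setCoord a s x ∈ halfSpace a s := by
  rw [mem_halfSpace, setCoord_self, cast_sign_mul_self]
  exact one_pos

lemma lineMap_setCoord_mem_halfSpace {a : ι} {s : ℤˣ} {x : ι → ℝ} (hx : x ∈ halfSpace a s)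
    (t : unitInterval) : AffineMap.lineMap x (setCoord a s x) (t : ℝ) ∈ halfSpace a s :=
  (convex_halfSpace a s).lineMap_mem hx (setCoord_mem_halfSpace a s x) t.2

lemma lineMap_setCoord_mem_offSet {a : ι} {I : Finset ι} (ha : a ∉ I) (s : ℤˣ) {x : ι → ℝ}
    (hx : x ∈ offSet I) (t : ℝ) : AffineMap.lineMap x (setCoord a s x) t ∈ offSet I := by
  obtain ⟨i, hi, h⟩ := hx
  refine ⟨i, hi, ?_⟩
  have hia : i ≠ a := fun e ↦ ha (e ▸ hi)
  rwa [AffineMap.pi_lineMap_apply, setCoord_of_ne hia, AffineMap.lineMap_same_apply]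

lemma setCoord_mem_offSet {a : ι} {I : Finset ι} (ha : a ∉ I) (s : ℤˣ) {x : ι → ℝ}
    (hx : x ∈ offSet I) : setCoord a s x ∈ offSet I := by
  rw [← AffineMap.lineMap_apply_one (k := ℝ) x (setCoord a s x)]
  exact lineMap_setCoord_mem_offSet ha s hx 1

variable {a : ι} {I : Finset ι}

lemma subsingleton_pairHomology_halfSpace (ha : a ∉ I) (s : ℤˣ) (n : ℕ) :
    Subsingleton (PairHomology R Set.univ (halfSpace a s ∪ offSet I) n) :=
  subsingleton_pairHomology_of_line (setCoord a s) (fun _ _ _ ↦ Set.mem_univ _)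
    (fun _ hx t ↦ hx.imp (lineMap_setCoord_mem_halfSpace · t)
      (lineMap_setCoord_mem_offSet ha s · t))
    (Set.subset_univ _) (fun x _ ↦ Or.inl (setCoord_mem_halfSpace a s x)) n

lemma pairIncl_halfSpace_bijective (ha : a ∉ I) (n : ℕ) :
    Function.Bijective
      (pairIncl R (Set.subset_univ (halfSpace a 1)) (halfSpace_inter_subset a I) n) :=
  pairIncl_bijective_of_line (setCoord a 1) (Set.subset_univ _) (halfSpace_inter_subset a I)
    (fun _ hx ↦ lineMap_setCoord_mem_halfSpace hx)
    (fun _ hx t ↦ ⟨lineMap_setCoord_mem_halfSpace hx.1 t,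
      Or.inr (lineMap_setCoord_mem_offSet ha 1 (halfSpace_inter_subset a I hx) t)⟩)
    (fun _ _ _ ↦ Set.mem_univ _) (fun _ hx t ↦ lineMap_setCoord_mem_offSet ha 1 hx t)
    (fun x _ ↦ setCoord_mem_halfSpace a 1 x)
    (fun x hx ↦ ⟨setCoord_mem_halfSpace a 1 x, Or.inr (setCoord_mem_offSet ha 1 hx)⟩) n

lemma mem_relCycles_of_singBoundary_eq_add {n : ℕ} {z c c' : SingChain R (ι → ℝ)}
    (hc : c ∈ chainsIn R (halfSpace a 1) n) (hc' : c' ∈ chainsIn R (halfSpace a (-1) ∪ offSet I) n)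
    (e : singBoundary z = c + c') :
    c ∈ relCycles singBoundary (chainsIn R Set.univ) (chainsIn R (offSet I)) n :=
  (isRelMap_inclusion (Set.subset_univ _) (halfSpace_inter_subset a I)).map_relCycles
    (mem_relCycles_inter_of_singBoundary_eq_add hc hc' e)

lemma subsingleton_pairHomology_offSet_zero (hI : I.Nonempty) :
    Subsingleton (PairHomology R Set.univ (offSet I) 0) := by
  obtain ⟨i, hi⟩ := hI
  let one : C(ι → ℝ, ι → ℝ) := ContinuousMap.const _ fun _ ↦ 1
  have one_mapsTo : Set.MapsTo one Set.univ (offSet I) := fun _ _ ↦ ⟨i, hi, one_ne_zero⟩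
  have homotopic : pairMap R one (Set.mapsTo_univ _ _) (Set.mapsTo_empty _ (offSet I)) 0 =
      pairMap R (ContinuousMap.id (ι → ℝ)) (Set.mapsTo_univ _ Set.univ) (Set.mapsTo_empty _ _) 0 :=
    pairMap_eq_of_homotopy (g := ContinuousMap.id (ι → ℝ)) (lineHomotopy one)
      (fun x ↦ AffineMap.lineMap_apply_one x (one x))
      (fun x ↦ AffineMap.lineMap_apply_zero x (one x))
      (fun _ _ _ ↦ Set.mem_univ _) (fun _ h ↦ h.elim) _ _ _ _ 0
  refine subsingleton_of_forall_eq 0 fun x ↦ ?_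
  obtain ⟨y, rfl⟩ := relMap_triple_right_zero_surjective (A := chainsIn R ∅)
    (B := chainsIn R (offSet I)) (fun n ↦ chainsIn_mono (Set.empty_subset _) n)
    (fun _ ↦ singBoundary_eq_zero) x
  change pairIncl R (Set.Subset.refl Set.univ) (Set.empty_subset (offSet I)) 0 y = 0
  rw [pairIncl_eq_pairMap, ← homotopic, pairMap_eq_zero _ _ one_mapsTo]
  rfl

variable [DecidableEq ι]

lemma halfSpace_union_subset (a : ι) (I : Finset ι) :
    halfSpace a (-1) ∪ offSet I ⊆ offSet (insert a I) :=
  Set.subset_union_right.trans_eq (halfSpace_union a I)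

lemma halfSpace_subset (a : ι) (I : Finset ι) : halfSpace a 1 ⊆ offSet (insert a I) :=
  Set.subset_union_left.trans_eq (halfSpace_union a I)

lemma relConnect_offSet_bijective (ha : a ∉ I) (n : ℕ) :
    Function.Bijective (relConnect singBoundary_singBoundary
      (chainsIn R (halfSpace a (-1) ∪ offSet I)) (chainsIn R (offSet (insert a I)))
      (chainsIn R Set.univ) n) := by
  have (n : ℕ) := subsingleton_pairHomology_halfSpace (R := R) ha (-1) n
  exact relConnect_bijective _ (fun n ↦ chainsIn_mono (halfSpace_union_subset a I) n)
    (fun n ↦ chainsIn_mono (Set.subset_univ _) n) n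

variable (R) in
/-- The connecting isomorphism of the triple `(ℝ^ι, offSet (I ∪ {a}), {x a < 0} ∪ offSet I)`, in
which the largest set is homotopy equivalent to the smallest. -/
noncomputable def offSetConnectEquiv (ha : a ∉ I) (n : ℕ) :
    PairHomology R Set.univ (offSet (insert a I)) (n + 1) ≃ₗ[R]
      PairHomology R (offSet (insert a I)) (halfSpace a (-1) ∪ offSet I) n :=
  LinearEquiv.ofBijective _ (relConnect_offSet_bijective ha n)

variable (R) in
/-- The excision isomorphism of `offSet (I ∪ {a})`, the union of `{0 < x a}` and
`{x a < 0} ∪ offSet I`. -/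
noncomputable def offSetExcisionEquiv (a : ι) (I : Finset ι) (n : ℕ) :
    PairHomology R (halfSpace a 1) (halfSpace a 1 ∩ (halfSpace a (-1) ∪ offSet I)) n ≃ₗ[R]
      PairHomology R (offSet (insert a I)) (halfSpace a (-1) ∪ offSet I) n :=
  LinearEquiv.ofBijective _ (pairIncl_bijective (isOpen_halfSpace a 1)
    ((isOpen_halfSpace a (-1)).union (isOpen_offSet I)) (halfSpace_union a I) rfl
    (halfSpace_subset a I) Set.inter_subset_right n)

variable (R) in
/-- The isomorphism induced by the inclusion of the half-space `{0 < x a}` in `ℝ^ι`. -/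
noncomputable def halfSpaceInclEquiv (ha : a ∉ I) (n : ℕ) :
    PairHomology R (halfSpace a 1) (halfSpace a 1 ∩ (halfSpace a (-1) ∪ offSet I)) n ≃ₗ[R]
      PairHomology R Set.univ (offSet I) n :=
  LinearEquiv.ofBijective _ (pairIncl_halfSpace_bijective ha n)

variable (R) in
/-- The isomorphism `H (n + 1) (ℝ^ι, offSet (I ∪ {a})) ≃ H n (ℝ^ι, offSet I)` which takes the part
of the boundary lying in the half-space `0 < x a`. -/
noncomputable def coordEquiv (ha : a ∉ I) (n : ℕ) :
    PairHomology R Set.univ (offSet (insert a I)) (n + 1) ≃ₗ[R]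
      PairHomology R Set.univ (offSet I) n :=
  (offSetConnectEquiv R ha n).trans
    ((offSetExcisionEquiv R a I n).symm.trans (halfSpaceInclEquiv R ha n))

lemma coordEquiv_relClass (ha : a ∉ I) {n : ℕ} {z c c' : SingChain R (ι → ℝ)}
    (hz : z ∈ relCycles singBoundary (chainsIn R Set.univ) (chainsIn R (offSet (insert a I)))
      (n + 1))
    (hc : c ∈ chainsIn R (halfSpace a 1) n) (hc' : c' ∈ chainsIn R (halfSpace a (-1) ∪ offSet I) n)
    (e : singBoundary z = c + c') :
    coordEquiv R ha n (relClass z hz) =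
      relClass c (mem_relCycles_of_singBoundary_eq_add hc hc' e) := by
  let excised : PairHomology R (halfSpace a 1) (halfSpace a 1 ∩ (halfSpace a (-1) ∪ offSet I)) n :=
    relClass c (mem_relCycles_inter_of_singBoundary_eq_add hc hc' e)
  have connect_eq : offSetConnectEquiv R ha n (relClass z hz) =
      offSetExcisionEquiv R a I n excised := by
    refine (relClass_eq _ _).2 ?_
    rw [LinearMap.domRestrict_apply, LinearMap.domRestrict_apply, LinearMap.id_apply, e,
      add_sub_cancel_left]
    exact mem_relBoundaries_of_mem hc'
  rw [coordEquiv, LinearEquiv.trans_apply, LinearEquiv.trans_apply, connect_eq,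
    LinearEquiv.symm_apply_apply]
  rfl

omit [DecidableEq ι] in
theorem rank_pairHomology_offSet {F : Type*} [Field F] (I : Finset ι) (n : ℕ) :
    Module.rank F (PairHomology F Set.univ (offSet I) n) = if n = I.card then 1 else 0 := by
  classical
  induction I using Finset.induction_on generalizing n with
  | empty =>
    rw [offSet_empty, Finset.card_empty]
    exact rank_pairHomology_of_contractible (0 : ι → ℝ) (fun n x ↦
      pairMap_eq_id_of_line _ (fun _ _ _ ↦ Set.mem_univ _) (fun _ h ↦ h.elim) _ _ n x) n
  | insert a I ha ih =>
    rw [Finset.card_insert_of_notMem ha]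
    cases n with
    | zero =>
      have := subsingleton_pairHomology_offSet_zero (R := F) (Finset.insert_nonempty a I)
      rw [if_neg (Nat.succ_ne_zero _).symm]
      exact rank_subsingleton' F _
    | succ n =>
      rw [(coordEquiv F ha n).rank_eq, ih]
      simp only [Nat.succ_inj]

end LocalHomology

section SignFlip

variable {R : Type*} [CommRing R] {ι : Type*}

/-- Coordinatewise sign changes. -/
noncomputable def signFlip (ε : ι → ℤˣ) : C(ι → ℝ, ι → ℝ) where
  toFun x i := ((ε i : ℤ) : ℝ) * x i
  continuous_toFun := by fun_prop

lemma signFlip_apply (ε : ι → ℤˣ) (x : ι → ℝ) (i : ι) :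
    signFlip ε x i = ((ε i : ℤ) : ℝ) * x i := rfl

lemma mapsTo_signFlip_offSet (ε : ι → ℤˣ) (I : Finset ι) :
    Set.MapsTo (signFlip ε) (offSet I) (offSet I) := by
  rintro x ⟨i, hi, h⟩
  exact ⟨i, hi, mul_ne_zero (Int.cast_ne_zero.2 (ε i).ne_zero) h⟩

lemma mapsTo_signFlip_halfSpace (ε : ι → ℤˣ) (a : ι) (s : ℤˣ) :
    Set.MapsTo (signFlip ε) (halfSpace a s) (halfSpace a (ε a * s)) := by
  intro x hx
  rwa [mem_halfSpace, signFlip_apply, Units.val_mul, Int.cast_mul, mul_mul_mul_comm,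
    cast_sign_mul_self, one_mul]

variable [DecidableEq ι] {a : ι} {I : Finset ι}

lemma coordEquiv_signFlip (ha : a ∉ I) (ε : ι → ℤˣ) (n : ℕ)
    (x : PairHomology R Set.univ (offSet (insert a I)) (n + 1)) :
    coordEquiv R ha n (pairMap R (signFlip ε) (Set.mapsTo_univ _ _)
      (mapsTo_signFlip_offSet ε _) (n + 1) x) = ε a • pairMap R (signFlip ε) (Set.mapsTo_univ _ _)
        (mapsTo_signFlip_offSet ε I) n (coordEquiv R ha n x) := by
  obtain ⟨z, hz, rfl, p, hp, q, hq, b, hb, e⟩ := exists_relClass_subordinate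
    (isOpen_halfSpace a 1) (isOpen_halfSpace a (-1)) (isOpen_offSet I) (halfSpace_union a I) x
  have add_mem_neg {q b : SingChain R (ι → ℝ)} (hq : q ∈ chainsIn R (halfSpace a (-1)) n)
      (hb : b ∈ chainsIn R (offSet I) n) : q + b ∈ chainsIn R (halfSpace a (-1) ∪ offSet I) n :=
    add_mem (chainsIn_mono Set.subset_union_left n hq) (chainsIn_mono Set.subset_union_right n hb)
  have hp' := singPush_mem (mapsTo_signFlip_halfSpace ε a 1) hp
  have hq' := singPush_mem (mapsTo_signFlip_halfSpace ε a (-1)) hq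
  have hb' := singPush_mem (mapsTo_signFlip_offSet ε I) hb
  have e' : singBoundary (singPush (signFlip ε) z) = singPush (signFlip ε) p +
      singPush (signFlip ε) q + singPush (signFlip ε) b := by
    rw [singBoundary_singPush, e, map_add, map_add]
  rw [coordEquiv_relClass ha hz hp (add_mem_neg hq hb) (e.trans (add_assoc _ _ _)), pairMap,
    relMap_relClass, pairMap, relMap_relClass]
  rcases Int.units_eq_one_or (ε a) with h | h <;> rw [h] at hp' hq' ⊢
  · rw [one_smul, coordEquiv_relClass ha _ hp' (add_mem_neg hq' hb') (e'.trans (add_assoc _ _ _))]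
  · rw [mul_one] at hp'
    rw [neg_one_mul, neg_neg] at hq'
    -- The half-spaces are exchanged, and the two halves of the boundary are homologous up to sign.
    rw [coordEquiv_relClass ha _ hq' (add_mem_neg hp' hb') (by rw [e']; abel), Units.neg_smul,
      one_smul, eq_neg_iff_add_eq_zero, relClass_add, relClass_eq_zero, add_comm,
      eq_sub_of_add_eq e'.symm]
    exact sub_mem (boundary_mem_relBoundaries (singPush_mem (Set.mapsTo_univ _ _) hz.1))
      (mem_relBoundaries_of_mem hb')

omit [DecidableEq ι] in
theorem pairMap_signFlip (ε : ι → ℤˣ) (I : Finset ι) (n : ℕ)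
    (x : PairHomology R Set.univ (offSet I) n) :
    pairMap R (signFlip ε) (Set.mapsTo_univ _ _) (mapsTo_signFlip_offSet ε I) n x =
      (∏ i ∈ I, ε i) • x := by
  classical
  induction I using Finset.induction_on generalizing n with
  | empty =>
    rw [Finset.prod_empty, one_smul]
    refine pairMap_eq_id_of_line _ (fun _ _ _ ↦ Set.mem_univ _) (fun y hy ↦ ?_) _ _ n x
    exact (offSet_empty.le hy).elim
  | insert a I ha ih =>
    cases n with
    | zero =>
      have := subsingleton_pairHomology_offSet_zero (R := R) (Finset.insert_nonempty a I)
      exact Subsingleton.elim _ _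
    | succ n =>
      apply (coordEquiv R ha n).injective
      rw [coordEquiv_signFlip, ih, smul_smul, Finset.prod_insert ha]
      exact (map_zsmul (coordEquiv R ha n) _ x).symm

end SignFlip

section Minors

variable {k n : ℕ} {R : Type*} [CommRing R]

/-- The minor of `A` at the columns `f`. -/
def minor (f : Fin k → Fin n) (A : Matrix (Fin k) (Fin n) R) : R := (A.submatrix id f).det

lemma minor_mul (f : Fin k → Fin n) (g : Matrix (Fin k) (Fin k) R) (A : Matrix (Fin k) (Fin n) R) :
    minor f (g * A) = g.det * minor f A := Matrix.det_mul g (A.submatrix id f)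

lemma minor_mul_diagonal (f : Fin k → Fin n) (A : Matrix (Fin k) (Fin n) R) (d : Fin n → R) :
    minor f (A * Matrix.diagonal d) = minor f A * ∏ r, d (f r) := by
  rw [minor, minor, ← Matrix.det_diagonal, ← Matrix.det_mul]
  congr 1
  ext r s
  rw [Matrix.mul_diagonal, Matrix.submatrix_apply, Matrix.mul_diagonal, Matrix.submatrix_apply]

lemma injective_of_minor_ne_zero {f : Fin k → Fin n} {A : Matrix (Fin k) (Fin n) R}
    (h : minor f A ≠ 0) : Function.Injective f := by
  intro i j hij
  by_contra hne
  exact h (Matrix.det_zero_of_column_eq hne fun r ↦ congrArg (A r) hij)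

lemma exists_orderEmb_minor_ne_zero {f : Fin k → Fin n} {A : Matrix (Fin k) (Fin n) R}
    (h : minor f A ≠ 0) :
    ∃ (e : Fin k ↪o Fin n) (σ : Equiv.Perm (Fin k)), ⇑e = f ∘ σ ∧ minor e A ≠ 0 := by
  refine ⟨OrderEmbedding.ofStrictMono (f ∘ Tuple.sort f)
    ((Tuple.monotone_sort f).strictMono_of_injective
      ((injective_of_minor_ne_zero h).comp (Tuple.sort f).injective)), Tuple.sort f, rfl, ?_⟩
  change ((A.submatrix id f).submatrix id (Tuple.sort f)).det ≠ 0
  have isUnit_sign : IsUnit ((Equiv.Perm.sign (Tuple.sort f) : ℤ) : R) :=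
    (Equiv.Perm.sign (Tuple.sort f)).isUnit.map (Int.castRingHom R)
  rwa [Matrix.det_permute', Ne, isUnit_sign.mul_right_eq_zero]

lemma continuous_minor [TopologicalSpace R] [IsTopologicalRing R] (f : Fin k → Fin n) :
    Continuous (minor (R := R) f) :=
  (continuous_id.matrix_submatrix id f).matrix_det

variable {K : Type*} [Field K]

lemma linearIndependent_of_minor_ne_zero {f : Fin k → Fin n} {A : Matrix (Fin k) (Fin n) K}
    (h : minor f A ≠ 0) : LinearIndependent K A.row :=
  .of_comp (LinearMap.funLeft K K f) <| Matrix.linearIndependent_rows_iff_isUnit.2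
    ((Matrix.isUnit_iff_isUnit_det _).2 h.isUnit)

lemma exists_minor_ne_zero {A : Matrix (Fin k) (Fin n) K} (hA : LinearIndependent K A.row) :
    ∃ e : Fin k ↪o Fin n, minor e A ≠ 0 := by
  have rank_eq := hA.rank_matrix
  rw [Matrix.rank_eq_finrank_span_cols, Fintype.card_fin] at rank_eq
  obtain ⟨v, hv, -, indep⟩ := Submodule.exists_fun_fin_finrank_span_eq K (Set.range A.col)
  choose f hf using hv
  have h : minor (f ∘ finCongr rank_eq.symm) A ≠ 0 := by
    rw [minor, ← isUnit_iff_ne_zero, ← Matrix.isUnit_iff_isUnit_det,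
      ← Matrix.linearIndependent_cols_iff_isUnit]
    rw [← funext hf] at indep
    exact indep.comp _ (finCongr rank_eq.symm).injective
  obtain ⟨e, -, -, he⟩ := exists_orderEmb_minor_ne_zero h
  exact ⟨e, he⟩

end Minors

section Frames

variable {k n : ℕ}

/-- Bases of `k`-dimensional subspaces of `ℝⁿ`, whose quotient is the Grassmannian. -/
abbrev Frame (k n : ℕ) : Type := {A : Fin k → (Fin n → ℝ) // LinearIndependent ℝ A}

/-- The subspace spanned by a frame. -/
def Frame.span (A : Frame k n) : Grassmannian k n := Quotient.mk (grassSetoid k n) A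

/-- The matrix whose rows are the vectors of a frame. -/
def Frame.toMatrix (A : Frame k n) : Matrix (Fin k) (Fin n) ℝ := Matrix.of A.1

lemma Frame.span_surjective : Function.Surjective (Frame.span (k := k) (n := n)) :=
  Quotient.mk_surjective

lemma span_row_mul_le {l m n R : Type*} [CommRing R] [Fintype m] (g : Matrix l m R)
    (A : Matrix m n R) :
    Submodule.span R (Set.range (g * A).row) ≤ Submodule.span R (Set.range A.row) := by
  rw [Submodule.span_le]
  rintro _ ⟨r, rfl⟩
  refine (Submodule.mem_span_range_iff_exists_fun R).2 ⟨g r, ?_⟩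
  exact (Matrix.vecMul_eq_sum (g r) A).symm

lemma linearIndependent_row_mul {l m n R : Type*} [CommRing R] [Finite l] [Fintype m]
    {A : Matrix l m R} {B : Matrix m n R} (hA : LinearIndependent R A.row)
    (hB : LinearIndependent R B.row) : LinearIndependent R (A * B).row := by
  have := Fintype.ofFinite l
  rw [← Matrix.vecMul_injective_iff] at hA hB ⊢
  simp only [← Matrix.vecMul_vecMul]
  exact hB.comp hA

lemma linearIndependent_row_of_isUnit_det {m R : Type*} [CommRing R] [Fintype m] [DecidableEq m]
    {A : Matrix m m R} (hA : IsUnit A.det) : LinearIndependent R A.row :=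
  Matrix.vecMul_injective_iff.1
    (Matrix.vecMul_injective_of_isUnit ((Matrix.isUnit_iff_isUnit_det A).2 hA))

lemma Frame.exists_minor_ne_zero (A : Frame k n) : ∃ e : Fin k ↪o Fin n, minor e A.toMatrix ≠ 0 :=
  _root_.exists_minor_ne_zero (A := A.toMatrix) A.2

lemma Frame.exists_mul_of_span_eq {A B : Frame k n} (h : A.span = B.span) :
    ∃ g : Matrix (Fin k) (Fin k) ℝ, IsUnit g.det ∧ B.toMatrix = g * A.toMatrix := by
  have span_eq : Submodule.span ℝ (Set.range A.1) = Submodule.span ℝ (Set.range B.1) :=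
    Quotient.exact h
  have combination (r : Fin k) : ∃ v : Fin k → ℝ, ∑ i, v i • A.1 i = B.1 r :=
    (Submodule.mem_span_range_iff_exists_fun ℝ).1 (span_eq ▸ Submodule.subset_span ⟨r, rfl⟩)
  choose g hg using combination
  have eq_mul : B.toMatrix = Matrix.of g * A.toMatrix := funext fun r ↦
    (hg r).symm.trans (Matrix.vecMul_eq_sum (g r) A.toMatrix).symm
  obtain ⟨e, he⟩ := B.exists_minor_ne_zero
  rw [eq_mul, minor_mul] at he
  exact ⟨_, (left_ne_zero_of_mul he).isUnit, eq_mul⟩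

lemma Frame.span_eq_of_mul {A B : Frame k n} (g : Matrix (Fin k) (Fin k) ℝ)
    (hg : IsUnit g.det) (h : B.toMatrix = g * A.toMatrix) : A.span = B.span := by
  have h' : A.toMatrix = g⁻¹ * B.toMatrix := by rw [h, Matrix.nonsing_inv_mul_cancel_left _ _ hg]
  have le := span_row_mul_le g⁻¹ B.toMatrix
  have ge := span_row_mul_le g A.toMatrix
  rw [← h'] at le
  rw [← h] at ge
  exact Quotient.sound (le_antisymm le ge)

lemma Frame.continuous_toMatrix : Continuous (Frame.toMatrix : Frame k n → _) :=
  continuous_subtype_val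

lemma Frame.continuous_span : Continuous (Frame.span : Frame k n → _) := continuous_quotient_mk'

lemma Frame.continuous_minor (e : Fin k → Fin n) :
    Continuous fun A : Frame k n ↦ minor e A.toMatrix :=
  (_root_.continuous_minor e).comp Frame.continuous_toMatrix

/-- The change of basis of a frame by an invertible matrix. -/
def Frame.mulLeft (g : Matrix (Fin k) (Fin k) ℝ) (hg : IsUnit g.det) (A : Frame k n) : Frame k n :=
  ⟨g * A.toMatrix, linearIndependent_row_mul (linearIndependent_row_of_isUnit_det hg) A.2⟩

lemma Frame.span_preimage_image (U : Set (Frame k n)) :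
    Frame.span ⁻¹' (Frame.span '' U) =
      ⋃ (g : Matrix (Fin k) (Fin k) ℝ) (hg : IsUnit g.det), Frame.mulLeft g hg ⁻¹' U := by
  ext A
  simp only [Set.mem_preimage, Set.mem_image, Set.mem_iUnion]
  constructor
  · rintro ⟨B, hB, h⟩
    obtain ⟨g, hg, e⟩ := Frame.exists_mul_of_span_eq h.symm
    have mulLeft_eq : A.mulLeft g hg = B := Subtype.ext e.symm
    exact ⟨g, hg, mulLeft_eq ▸ hB⟩
  · rintro ⟨g, hg, h⟩
    exact ⟨_, h, (Frame.span_eq_of_mul g hg rfl).symm⟩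

lemma Frame.isOpenQuotientMap_span : IsOpenQuotientMap (Frame.span : Frame k n → _) := by
  refine ⟨Frame.span_surjective, Frame.continuous_span, fun U hU ↦ isOpen_coinduced.2 ?_⟩
  change IsOpen (Frame.span ⁻¹' (Frame.span '' U))
  rw [Frame.span_preimage_image]
  refine isOpen_iUnion fun g ↦ isOpen_iUnion fun hg ↦ hU.preimage ?_
  exact Continuous.subtype_mk (continuous_const.matrix_mul Frame.continuous_toMatrix) _

/-- The subspaces with nonvanishing Plücker coordinate at `e`. -/
def plueckerOpen (e : Fin k → Fin n) : Set (Grassmannian k n) :=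
  Frame.span '' {A | minor e A.toMatrix ≠ 0}

lemma span_mem_plueckerOpen {e : Fin k → Fin n} {A : Frame k n} :
    A.span ∈ plueckerOpen e ↔ minor e A.toMatrix ≠ 0 := by
  refine ⟨?_, fun h ↦ ⟨A, h, rfl⟩⟩
  rintro ⟨B, hB, h⟩
  obtain ⟨g, -, hg⟩ := Frame.exists_mul_of_span_eq h.symm
  rw [Set.mem_ofPred_eq, hg, minor_mul] at hB
  exact right_ne_zero_of_mul hB

lemma isOpen_plueckerOpen (e : Fin k → Fin n) : IsOpen (plueckerOpen e) :=
  Frame.isOpenQuotientMap_span.isOpenMap _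
    (isOpen_ne_fun (Frame.continuous_minor e) continuous_const)

lemma iUnion_plueckerOpen : ⋃ e : Fin k ↪o Fin n, plueckerOpen e = Set.univ := by
  rw [Set.eq_univ_iff_forall]
  intro x
  obtain ⟨A, rfl⟩ := Frame.span_surjective x
  obtain ⟨e, he⟩ := A.exists_minor_ne_zero
  exact Set.mem_iUnion.2 ⟨e, span_mem_plueckerOpen.2 he⟩

end Frames

section LinearAction

variable {k n : ℕ}

/-- The image of a frame under the linear map `v ↦ v * M`. -/
def Frame.mulRight (M : Matrix (Fin n) (Fin n) ℝ) (hM : IsUnit M.det) (A : Frame k n) : Frame k n :=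
  ⟨A.toMatrix * M, linearIndependent_row_mul A.2 (linearIndependent_row_of_isUnit_det hM)⟩

/-- The image of a subspace under the linear map `v ↦ v * M`. -/
def grassAct (M : Matrix (Fin n) (Fin n) ℝ) (hM : IsUnit M.det) :
    Grassmannian k n → Grassmannian k n :=
  Quotient.map' (Frame.mulRight M hM) fun (A B : Frame k n) h ↦ by
    obtain ⟨g, hg, e⟩ := Frame.exists_mul_of_span_eq (A := A) (B := B) (Quotient.sound h)
    refine Quotient.exact (Frame.span_eq_of_mul g hg ?_)
    change Frame.toMatrix B * M = g * (Frame.toMatrix A * M)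
    rw [e, Matrix.mul_assoc]

lemma continuous_grassAct {T : Type*} [TopologicalSpace T] {M : T → Matrix (Fin n) (Fin n) ℝ}
    (hc : Continuous M) (hM : ∀ t, IsUnit (M t).det) :
    Continuous fun p : Grassmannian k n × T ↦ grassAct (M p.2) (hM p.2) p.1 := by
  have quotient := (Frame.isOpenQuotientMap_span (k := k) (n := n)).prodMap (.id (X := T))
  rw [quotient.isQuotientMap.continuous_iff]
  exact Frame.continuous_span.comp (Continuous.subtype_mk
    ((Frame.continuous_toMatrix.comp continuous_fst).matrix_mul (hc.comp continuous_snd)) _)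

end LinearAction

section Charts

variable {k n : ℕ}

/-- The matrix positions outside the columns `e`, which are the coordinates of the chart at `e`. -/
abbrev FreeEntry (e : Fin k → Fin n) : Type := {p : Fin k × Fin n // ∀ s, e s ≠ p.2}

/-- The matrix with free entries `x` which is the identity at the columns `e`. -/
def chartMat (e : Fin k → Fin n) (x : FreeEntry e → ℝ) : Matrix (Fin k) (Fin n) ℝ := fun r c ↦
  if h : ∀ s, e s ≠ c then x ⟨(r, c), h⟩ else if e r = c then 1 else 0

lemma chartMat_freeEntry {e : Fin k → Fin n} (x : FreeEntry e → ℝ) (p : FreeEntry e) :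
    chartMat e x p.1.1 p.1.2 = x p := dif_pos p.2

lemma continuous_chartMat (e : Fin k → Fin n) : Continuous (chartMat e) := by
  refine continuous_pi fun r ↦ continuous_pi fun c ↦ ?_
  unfold chartMat
  split_ifs
  · exact continuous_apply _
  all_goals exact continuous_const

variable (e : Fin k ↪o Fin n)

lemma chartMat_pivot (x : FreeEntry e → ℝ) (r s : Fin k) :
    chartMat e x r (e s) = (1 : Matrix (Fin k) (Fin k) ℝ) r s := by
  rw [chartMat, dif_neg fun h ↦ h s rfl, Matrix.one_apply]
  simp only [EmbeddingLike.apply_eq_iff_eq]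

lemma chartMat_submatrix (x : FreeEntry e → ℝ) : (chartMat e x).submatrix id e = 1 :=
  Matrix.ext (chartMat_pivot e x)

lemma eq_chartMat {A : Matrix (Fin k) (Fin n) ℝ} (h : A.submatrix id e = 1) :
    A = chartMat e fun p ↦ A p.1.1 p.1.2 := by
  ext r c
  by_cases hc : ∀ s, e s ≠ c
  · exact (chartMat_freeEntry (fun p ↦ A p.1.1 p.1.2) ⟨(r, c), hc⟩).symm
  · push Not at hc
    obtain ⟨s, rfl⟩ := hc
    rw [chartMat_pivot, ← h, Matrix.submatrix_apply, id]

lemma minor_chartMat (x : FreeEntry e → ℝ) : minor e (chartMat e x) = 1 := by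
  rw [minor, chartMat_submatrix, Matrix.det_one]

lemma minor_chartMat_ne_zero (x : FreeEntry e → ℝ) : minor e (chartMat e x) ≠ 0 :=
  (minor_chartMat e x).trans_ne one_ne_zero

/-- The frame with matrix `chartMat e x`. -/
def chartFrame (x : FreeEntry e → ℝ) : Frame k n :=
  ⟨chartMat e x, linearIndependent_of_minor_ne_zero (minor_chartMat_ne_zero e x)⟩

lemma toMatrix_chartFrame (x : FreeEntry e → ℝ) : (chartFrame e x).toMatrix = chartMat e x := rfl

/-- The affine chart of the Grassmannian at `e`. -/
def chart : C(FreeEntry e → ℝ, Grassmannian k n) where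
  toFun x := (chartFrame e x).span
  continuous_toFun := Frame.continuous_span.comp (Continuous.subtype_mk (continuous_chartMat e) _)

lemma chart_apply (x : FreeEntry e → ℝ) : chart e x = (chartFrame e x).span := rfl

lemma chart_mem_plueckerOpen {e : Fin k ↪o Fin n} {x : FreeEntry e → ℝ} {f : Fin k → Fin n} :
    chart e x ∈ plueckerOpen f ↔ minor f (chartMat e x) ≠ 0 := span_mem_plueckerOpen

lemma chart_injective : Function.Injective (chart e) := by
  intro x y h
  obtain ⟨g, -, hg⟩ := Frame.exists_mul_of_span_eq (A := chartFrame e x) (B := chartFrame e y) h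
  rw [toMatrix_chartFrame, toMatrix_chartFrame] at hg
  have g_eq : 1 = g := calc
    1 = (g * chartMat e x).submatrix id e := by rw [← hg, chartMat_submatrix]
    _ = g * (chartMat e x).submatrix id e := rfl
    _ = g := by rw [chartMat_submatrix, Matrix.mul_one]
  rw [← g_eq, Matrix.one_mul] at hg
  funext p
  rw [← chartMat_freeEntry x p, ← chartMat_freeEntry y p, hg]

/-- The chart coordinates of the row space of `A`, obtained by normalizing the columns `e`. -/
noncomputable def chartCoord (A : Matrix (Fin k) (Fin n) ℝ) : FreeEntry e → ℝ := fun p ↦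
  ((A.submatrix id e)⁻¹ * A) p.1.1 p.1.2

lemma chart_chartCoord {A : Frame k n} (h : minor e A.toMatrix ≠ 0) :
    chart e (chartCoord e A.toMatrix) = A.span := by
  have inv_mul : (A.toMatrix.submatrix id e)⁻¹ * A.toMatrix.submatrix id e = 1 :=
    Matrix.nonsing_inv_mul _ h.isUnit
  exact (Frame.span_eq_of_mul (A := A) (B := chartFrame e (chartCoord e A.toMatrix)) _
    (Matrix.isUnit_det_of_right_inverse inv_mul) (eq_chartMat e
      (A := (A.toMatrix.submatrix id e)⁻¹ * A.toMatrix) inv_mul).symm).symm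

lemma chartCoord_chartMat (x : FreeEntry e → ℝ) : chartCoord e (chartMat e x) = x :=
  chart_injective e (chart_chartCoord e (A := chartFrame e x) (minor_chartMat_ne_zero e x))

lemma continuousOn_chartCoord :
    ContinuousOn (fun A : Frame k n ↦ chartCoord e A.toMatrix)
      {A : Frame k n | minor e A.toMatrix ≠ 0} := by
  have continuous_adjugate_mul : Continuous fun A : Frame k n ↦
      (A.toMatrix.submatrix id e).adjugate * A.toMatrix :=
    (Frame.continuous_toMatrix.matrix_submatrix id e).matrix_adjugate.matrix_mul
      Frame.continuous_toMatrix
  refine continuousOn_pi.2 fun p ↦ ?_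
  simp only [chartCoord, Matrix.inv_def, Matrix.smul_mul, Matrix.smul_apply, Ring.inverse_eq_inv]
  exact ((Frame.continuous_minor e).continuousOn.inv₀ fun _ h ↦ h).smul
    ((continuous_apply_apply p.1.1 p.1.2).comp continuous_adjugate_mul).continuousOn

lemma chart_image (W : Set (FreeEntry e → ℝ)) :
    chart e '' W = Frame.span '' ({A : Frame k n | minor e A.toMatrix ≠ 0} ∩
      (fun A : Frame k n ↦ chartCoord e A.toMatrix) ⁻¹' W) := by
  ext y
  constructor
  · rintro ⟨x, hx, rfl⟩
    refine ⟨chartFrame e x, ⟨minor_chartMat_ne_zero e x, ?_⟩, rfl⟩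
    rwa [Set.mem_preimage, toMatrix_chartFrame, chartCoord_chartMat]
  · rintro ⟨A, ⟨h, hW⟩, rfl⟩
    exact ⟨_, hW, chart_chartCoord e h⟩

lemma range_chart : Set.range (chart e) = plueckerOpen e := by
  rw [← Set.image_univ, chart_image, Set.preimage_univ, Set.inter_univ, plueckerOpen]

lemma isOpenEmbedding_chart : Topology.IsOpenEmbedding (chart e) := by
  refine .of_continuous_injective_isOpenMap (chart e).continuous (chart_injective e) fun W hW ↦ ?_
  rw [chart_image]
  exact Frame.isOpenQuotientMap_span.isOpenMap _ ((continuousOn_chartCoord e).isOpen_inter_preimage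
    (isOpen_ne_fun (Frame.continuous_minor e) continuous_const) hW)

/-- The sum of the column indices, by which the strata are ordered. -/
def weight (f : Fin k → Fin n) : ℕ := ∑ r, (f r : ℕ)

lemma weight_comp_perm (f : Fin k → Fin n) (σ : Equiv.Perm (Fin k)) :
    weight (f ∘ σ) = weight f := Equiv.sum_comp σ fun r ↦ (f r : ℕ)

lemma weight_update_lt {f : Fin k → Fin n} {r : Fin k} {c : Fin n} (h : c < f r) :
    weight (Function.update f r c) < weight f := by
  refine Finset.sum_lt_sum (fun s _ ↦ ?_) ⟨r, Finset.mem_univ r, ?_⟩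
  · rcases eq_or_ne s r with rfl | hs
    · rw [Function.update_self]
      exact h.le
    · rw [Function.update_of_ne hs]
  · rwa [Function.update_self]

lemma eq_of_comp_perm_le {e f : Fin k ↪o Fin n} {σ : Equiv.Perm (Fin k)} (hle : ∀ r, e (σ r) ≤ f r)
    (hw : weight f ≤ weight e) : f = e := by
  have sum_eq : ∑ r, (e (σ r) : ℕ) = ∑ r, (f r : ℕ) :=
    le_antisymm (Finset.sum_le_sum fun r _ ↦ hle r) (hw.trans_eq (weight_comp_perm e σ).symm)
  have comp_eq : ⇑f = e ∘ σ := funext fun r ↦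
    Fin.ext ((Finset.sum_eq_sum_iff_of_le fun r _ ↦ Fin.le_def.1 (hle r)).1 sum_eq r
      (Finset.mem_univ r)).symm
  refine DFunLike.coe_injective ((f.strictMono.range_inj e.strictMono).1 ?_)
  rw [comp_eq, σ.surjective.range_comp]

/-- The free entries to the left of the pivots: the coordinates normal to the stratum of subspaces
with pivots `e` in echelon form, on which they all vanish. -/
def leftEntries : Finset (FreeEntry e) := {p | p.1.2 < e p.1.1}

lemma mem_leftEntries {e : Fin k ↪o Fin n} {p : FreeEntry e} :
    p ∈ leftEntries e ↔ p.1.2 < e p.1.1 := Finset.mem_filter_univ p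

lemma minor_chartMat_update (x : FreeEntry e → ℝ) (p : FreeEntry e) :
    minor (Function.update e p.1.1 p.1.2) (chartMat e x) = x p := by
  have submatrix_eq : (chartMat e x).submatrix id (Function.update e p.1.1 p.1.2) =
      (1 : Matrix (Fin k) (Fin k) ℝ).updateCol p.1.1 fun r ↦ chartMat e x r p.1.2 := by
    ext r s
    rw [Matrix.submatrix_apply, Matrix.updateCol_apply, Function.update_apply, id]
    split_ifs
    · rfl
    · exact chartMat_pivot e x r s
  rw [minor, submatrix_eq, ← Matrix.cramer_apply, Matrix.cramer_one]
  exact chartMat_freeEntry x p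

lemma chart_mem_of_mem_offSet {x : FreeEntry e → ℝ} (hx : x ∈ offSet (leftEntries e)) :
    ∃ f : Fin k ↪o Fin n, weight f < weight e ∧ chart e x ∈ plueckerOpen f := by
  obtain ⟨p, hp, hx⟩ := hx
  rw [← minor_chartMat_update e x p] at hx
  obtain ⟨f, σ, hf, hmin⟩ := exists_orderEmb_minor_ne_zero hx
  refine ⟨f, ?_, chart_mem_plueckerOpen.2 hmin⟩
  rw [hf, weight_comp_perm]
  exact weight_update_lt (mem_leftEntries.1 hp)

lemma chartMat_eq_zero_of_lt {x : FreeEntry e → ℝ} (hx : x ∉ offSet (leftEntries e)) {r : Fin k}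
    {c : Fin n} (hc : c < e r) : chartMat e x r c = 0 := by
  by_cases hs : ∀ s, e s ≠ c
  · by_contra h
    exact hx ⟨⟨(r, c), hs⟩, mem_leftEntries.2 hc,
      (chartMat_freeEntry x ⟨(r, c), hs⟩).symm.trans_ne h⟩
  · rw [chartMat, dif_neg hs, if_neg hc.ne']

lemma mem_offSet_of_chart_mem {x : FreeEntry e → ℝ} {f : Fin k ↪o Fin n} (hw : weight f ≤ weight e)
    (hne : f ≠ e) (h : chart e x ∈ plueckerOpen f) : x ∈ offSet (leftEntries e) := by
  by_contra hx
  rw [chart_mem_plueckerOpen, minor, Matrix.det_apply] at h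
  obtain ⟨σ, -, hσ⟩ := Finset.exists_ne_zero_of_sum_ne_zero h
  refine hne (eq_of_comp_perm_le (σ := σ) (fun r ↦ ?_) hw)
  by_contra! hlt
  refine hσ ?_
  rw [Finset.prod_eq_zero (Finset.mem_univ r), smul_zero]
  exact chartMat_eq_zero_of_lt e hx hlt

end Charts

section RankAdditivity

variable {F M : Type*} [Field F] [AddCommGroup M] [Module F M]
  {d : M →ₗ[F] M} {A B C : ℕ → Submodule F M}

lemma relConnect_eq_zero (hd : ∀ x, d (d x) = 0)
    (h₁ : ∀ n, Odd n → Subsingleton (RelHomology d B A n))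
    (h₂ : ∀ n, Odd n → Subsingleton (RelHomology d C B n)) (n : ℕ) :
    relConnect hd A B C n = 0 := by
  rcases Nat.even_or_odd n with h | h
  · have := h₂ (n + 1) h.add_one
    exact LinearMap.ext fun x ↦ by rw [Subsingleton.elim x 0, map_zero, map_zero]
  · have := h₁ n h
    exact LinearMap.ext fun x ↦ Subsingleton.elim _ _

theorem rank_relHomology_add (hd : ∀ x, d (d x) = 0) (hC : ∀ x ∈ C 0, d x = 0)
    (hAB : ∀ n, A n ≤ B n) (hBC : ∀ n, B n ≤ C n)
    (h₁ : ∀ n, Odd n → Subsingleton (RelHomology d B A n))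
    (h₂ : ∀ n, Odd n → Subsingleton (RelHomology d C B n)) (n : ℕ) :
    Module.rank F (RelHomology d C A n) =
      Module.rank F (RelHomology d C B n) + Module.rank F (RelHomology d B A n) := by
  have connect_zero := relConnect_eq_zero hd h₁ h₂
  have injective : Function.Injective (relMap (isRelMap_triple_left (A := A) (d := d) hBC) n) := by
    refine (injective_iff_map_eq_zero _).2 fun x hx ↦ ?_
    obtain ⟨y, rfl⟩ := (exact_relConnect_relMap hd hAB hBC n x).1 hx
    rw [connect_zero, LinearMap.zero_apply]
  have surjective :
      Function.Surjective (relMap (isRelMap_triple_right (C := C) (d := d) hAB) n) := by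
    cases n with
    | zero => exact relMap_triple_right_zero_surjective hAB hC
    | succ n =>
      exact fun x ↦ (exact_relMap_relConnect hd hAB hBC n x).1 (by rw [connect_zero]; rfl)
  rw [← LinearMap.rank_range_add_rank_ker (relMap (isRelMap_triple_right (C := C) (d := d) hAB) n),
    rank_range_of_surjective _ surjective, (exact_relMap_triple hd hAB hBC n).linearMap_ker_eq,
    rank_range_of_injective _ injective]

end RankAdditivity

section Averaging

variable {R X G : Type} [CommRing R] [TopologicalSpace X] [Fintype G]

lemma invOf_card_smul_sum_const [Invertible (Fintype.card G : R)] {M : Type*} [AddCommGroup M]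
    [Module R M] (x : M) : ⅟(Fintype.card G : R) • ∑ _s : G, x = x := by
  rw [Finset.sum_const, Finset.card_univ, ← Nat.cast_smul_eq_nsmul R, invOf_smul_smul]

/-- The average of the chain maps induced by a finite family of self-maps. When the family is a
group action, it is the projection onto the invariant chains. -/
noncomputable def average [Invertible (Fintype.card G : R)] (ρ : G → C(X, X)) :
    SingChain R X →ₗ[R] SingChain R X :=
  ⅟(Fintype.card G : R) • ∑ s, singPush (ρ s)

variable [Invertible (Fintype.card G : R)] {ρ : G → C(X, X)}

lemma average_apply (x : SingChain R X) :
    average ρ x = ⅟(Fintype.card G : R) • ∑ s, singPush (ρ s) x := by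
  simp [average]

lemma singBoundary_average (x : SingChain R X) :
    singBoundary (average ρ x) = average ρ (singBoundary x) := by
  simp only [average_apply, map_smul, map_sum, singBoundary_singPush]

lemma average_mem {U : Set X} (hU : ∀ s, Set.MapsTo (ρ s) U U) {n : ℕ} {x : SingChain R X}
    (hx : x ∈ chainsIn R U n) : average ρ x ∈ chainsIn R U n := by
  rw [average_apply]
  exact Submodule.smul_mem _ _ (sum_mem fun s _ ↦ singPush_mem (hU s) hx)

/-- The singular chains of `U` that are invariant under the action `ρ`, encoded as the averages of
the chains of `U`. -/
noncomputable def invChains (R : Type) [CommRing R] [Invertible (Fintype.card G : R)]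
    (ρ : G → C(X, X)) (U : Set X) (n : ℕ) : Submodule R (SingChain R X) :=
  (chainsIn R U n).map (average ρ)

/-- The homology of the pair `(U, V)` computed from invariant chains. -/
abbrev InvHomology (R : Type) [CommRing R] [Invertible (Fintype.card G : R)] (ρ : G → C(X, X))
    (U V : Set X) (n : ℕ) : Type :=
  RelHomology (singBoundary (R := R) (X := X)) (invChains R ρ U) (invChains R ρ V) n

lemma invChains_mono {U V : Set X} (h : U ⊆ V) (n : ℕ) : invChains R ρ U n ≤ invChains R ρ V n :=
  Submodule.map_mono (chainsIn_mono h n)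

lemma average_mem_invChains {U : Set X} {n : ℕ} {x : SingChain R X} (hx : x ∈ chainsIn R U n) :
    average ρ x ∈ invChains R ρ U n :=
  Submodule.mem_map_of_mem hx

lemma singBoundary_eq_zero_of_mem_invChains {U : Set X} {x : SingChain R X}
    (hx : x ∈ invChains R ρ U 0) : singBoundary x = 0 := by
  obtain ⟨y, hy, rfl⟩ := hx
  rw [singBoundary_average, singBoundary_eq_zero hy, map_zero]

theorem rank_invHomology_add {F : Type} [Field F] [Invertible (Fintype.card G : F)] {U V W : Set X}
    (hUV : U ⊆ V) (hVW : V ⊆ W) (h₁ : ∀ i, Odd i → Subsingleton (InvHomology F ρ V U i))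
    (h₂ : ∀ i, Odd i → Subsingleton (InvHomology F ρ W V i)) (i : ℕ) :
    Module.rank F (InvHomology F ρ W U i) =
      Module.rank F (InvHomology F ρ W V i) + Module.rank F (InvHomology F ρ V U i) :=
  rank_relHomology_add singBoundary_singBoundary (fun _ ↦ singBoundary_eq_zero_of_mem_invChains)
    (invChains_mono hUV) (invChains_mono hVW) h₁ h₂ i

lemma invChains_le {U : Set X} (hU : ∀ s, Set.MapsTo (ρ s) U U) (n : ℕ) :
    invChains R ρ U n ≤ chainsIn R U n := by
  rintro _ ⟨x, hx, rfl⟩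
  exact average_mem hU hx

section Classes

variable {U V : Set X} {n : ℕ} {z : SingChain R X}

lemma isRelMap_average (hU : ∀ s, Set.MapsTo (ρ s) U U) (hV : ∀ s, Set.MapsTo (ρ s) V V) :
    IsRelMap singBoundary (chainsIn R U) (chainsIn R V) singBoundary (chainsIn R U) (chainsIn R V)
      (average ρ) :=
  ⟨singBoundary_average, fun _ _ hx ↦ average_mem hU hx, fun _ _ hx ↦ average_mem hV hx⟩

variable (hz : z ∈ relCycles singBoundary (chainsIn R U) (chainsIn R V) n)

lemma relClass_average (hU : ∀ s, Set.MapsTo (ρ s) U U) (hV : ∀ s, Set.MapsTo (ρ s) V V) :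
    relClass (average ρ z) ((isRelMap_average hU hV).map_relCycles hz) =
      ⅟(Fintype.card G : R) • ∑ s, pairMap R (ρ s) (hU s) (hV s) n (relClass z hz) := by
  have cycle s := (isRelMap_singPush (R := R) (hU s) (hV s)).map_relCycles hz
  simp only [average_apply]
  exact congrArg (⅟(Fintype.card G : R) • ·) (relClass_sum Finset.univ cycle).symm

end Classes

variable [Group G]

lemma singPush_average (hρ : ∀ s t, (ρ s).comp (ρ t) = ρ (s * t)) (s : G) (x : SingChain R X) :
    singPush (ρ s) (average ρ x) = average ρ x := by
  simp only [average_apply, map_smul, map_sum, singPush_singPush, hρ]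
  exact congrArg _ (Equiv.sum_comp (Equiv.mulLeft s) fun t ↦ singPush (ρ t) x)

lemma average_eq_self (hρ : ∀ s t, (ρ s).comp (ρ t) = ρ (s * t)) {U : Set X} {n : ℕ}
    {x : SingChain R X} (hx : x ∈ invChains R ρ U n) : average ρ x = x := by
  obtain ⟨y, -, rfl⟩ := hx
  conv_lhs => rw [average_apply]
  simp only [singPush_average hρ, invOf_card_smul_sum_const]

lemma mem_relBoundaries_invChains (hρ : ∀ s t, (ρ s).comp (ρ t) = ρ (s * t)) {U V : Set X} {n : ℕ}
    {z : SingChain R X} (hz : z ∈ invChains R ρ U n)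
    (h : z ∈ relBoundaries singBoundary (chainsIn R U) (chainsIn R V) n) :
    z ∈ relBoundaries singBoundary (invChains R ρ U) (invChains R ρ V) n := by
  obtain ⟨v, hv, w, hw, rfl⟩ := mem_relBoundaries.1 h
  rw [← average_eq_self hρ hz, map_add, ← singBoundary_average]
  exact mem_relBoundaries.2 ⟨_, average_mem_invChains hv, _, average_mem_invChains hw, rfl⟩

variable {U V : Set X}

theorem rank_invHomology_of_trivial (hρ : ∀ s t, (ρ s).comp (ρ t) = ρ (s * t))
    (hU : ∀ s, Set.MapsTo (ρ s) U U) (hV : ∀ s, Set.MapsTo (ρ s) V V) {n : ℕ}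
    (h : ∀ s x, pairMap R (ρ s) (hU s) (hV s) n x = x) :
    Module.rank R (InvHomology R ρ U V n) = Module.rank R (PairHomology R U V n) := by
  have incl : IsRelMap singBoundary (invChains R ρ U) (invChains R ρ V) singBoundary
      (chainsIn R U) (chainsIn R V) LinearMap.id :=
    ⟨fun _ ↦ rfl, fun n _ hx ↦ invChains_le hU n hx, fun n _ hx ↦ invChains_le hV n hx⟩
  refine (LinearEquiv.ofBijective (relMap incl n) (relMap_bijective incl n
    (fun z hz hz' ↦ mem_relBoundaries_invChains hρ hz.1 hz') fun z hz ↦ ?_)).rank_eq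
  refine ⟨average ρ z, mem_relCycles.2 ⟨average_mem_invChains hz.1, ?_⟩, ?_⟩
  · rw [singBoundary_average]
    exact average_mem_invChains hz.2
  · have average_class := relClass_average hz hU hV
    simp only [h] at average_class
    rwa [invOf_card_smul_sum_const, relClass_eq] at average_class

theorem subsingleton_invHomology (hρ : ∀ s t, (ρ s).comp (ρ t) = ρ (s * t))
    (hU : ∀ s, Set.MapsTo (ρ s) U U) (hV : ∀ s, Set.MapsTo (ρ s) V V) {n : ℕ} (χ : G → ℤˣ)
    (h : ∀ s x, pairMap R (ρ s) (hU s) (hV s) n x = χ s • x) (hχ : ∑ s, (χ s : ℤ) = 0) :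
    Subsingleton (InvHomology R ρ U V n) := by
  refine subsingleton_of_forall_eq 0 (RelHomology.ind fun z hz ↦ ?_)
  have cycle : z ∈ relCycles singBoundary (chainsIn R U) (chainsIn R V) n :=
    ⟨invChains_le hU n hz.1, invChains_le hV _ hz.2⟩
  have average_class := relClass_average cycle hU hV
  simp only [h, Units.smul_def, ← Finset.sum_smul, hχ, zero_smul, smul_zero, relClass_eq_zero,
    average_eq_self hρ hz.1] at average_class
  exact (relClass_eq_zero hz).2 (mem_relBoundaries_invChains hρ hz.1 average_class)

end Averaging

section SignAction

variable {k n : ℕ}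

/-- The diagonal matrix with the given signs. -/
def signMat (ε : Fin n → ℤˣ) : Matrix (Fin n) (Fin n) ℝ :=
  Matrix.diagonal fun c ↦ ((ε c : ℤ) : ℝ)

lemma prod_cast_sign_ne_zero {ι : Type*} [Fintype ι] (ε : ι → ℤˣ) :
    ∏ i, ((ε i : ℤ) : ℝ) ≠ 0 :=
  Finset.prod_ne_zero_iff.2 fun i _ ↦ Int.cast_ne_zero.2 (ε i).ne_zero

lemma isUnit_det_signMat (ε : Fin n → ℤˣ) : IsUnit (signMat ε).det := by
  rw [signMat, Matrix.det_diagonal]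
  exact (prod_cast_sign_ne_zero ε).isUnit

lemma signMat_mul (ε δ : Fin n → ℤˣ) : signMat (ε * δ) = signMat ε * signMat δ := by
  simp [signMat]

/-- Coordinate sign changes acting on the Grassmannian. -/
def signAct (ε : Fin n → ℤˣ) : C(Grassmannian k n, Grassmannian k n) where
  toFun := grassAct (signMat ε) (isUnit_det_signMat ε)
  continuous_toFun := (continuous_grassAct (T := Unit) (M := fun _ ↦ signMat ε) continuous_const
    fun _ ↦ isUnit_det_signMat ε).comp (.prodMk continuous_id (continuous_const (y := ())))

lemma signAct_span (ε : Fin n → ℤˣ) (A : Frame k n) :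
    signAct ε A.span = (A.mulRight _ (isUnit_det_signMat ε)).span := rfl

lemma signAct_comp (ε δ : Fin n → ℤˣ) :
    (signAct ε).comp (signAct δ) = signAct (k := k) (ε * δ) := by
  ext x
  obtain ⟨A, rfl⟩ := Frame.span_surjective x
  refine congrArg Frame.span (Subtype.ext ?_)
  change A.toMatrix * signMat δ * signMat ε = A.toMatrix * signMat (ε * δ)
  rw [mul_comm ε, signMat_mul, Matrix.mul_assoc]

lemma mapsTo_signAct_plueckerOpen (ε : Fin n → ℤˣ) (e : Fin k → Fin n) :
    Set.MapsTo (signAct ε) (plueckerOpen e) (plueckerOpen e) := by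
  intro x hx
  obtain ⟨A, rfl⟩ := Frame.span_surjective x
  rw [span_mem_plueckerOpen] at hx
  refine span_mem_plueckerOpen.2 ?_
  change minor e (A.toMatrix * signMat ε) ≠ 0
  rw [signMat, minor_mul_diagonal]
  exact mul_ne_zero hx (prod_cast_sign_ne_zero (ε ∘ e))

lemma chartMat_signFlip (ε : Fin n → ℤˣ) (e : Fin k ↪o Fin n) (x : FreeEntry e → ℝ) :
    chartMat e (signFlip (fun p ↦ ε (e p.1.1) * ε p.1.2) x) =
      signMat (ε ∘ e) * (chartMat e x * signMat ε) := by
  ext r c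
  rw [signMat, signMat, Matrix.diagonal_mul, Matrix.mul_diagonal]
  by_cases hc : ∀ s, e s ≠ c
  · rw [chartMat_freeEntry _ ⟨(r, c), hc⟩, chartMat_freeEntry _ ⟨(r, c), hc⟩, signFlip_apply,
      Units.val_mul, Int.cast_mul, Function.comp_apply]
    ring
  · push Not at hc
    obtain ⟨s, rfl⟩ := hc
    rw [chartMat_pivot, chartMat_pivot]
    rcases eq_or_ne r s with rfl | hs
    · rw [Matrix.one_apply_eq, one_mul, Function.comp_apply, cast_sign_mul_self]
    · rw [Matrix.one_apply_ne hs, zero_mul, mul_zero]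

lemma signAct_chart (ε : Fin n → ℤˣ) (e : Fin k ↪o Fin n) (x : FreeEntry e → ℝ) :
    signAct ε (chart e x) = chart e (signFlip (fun p ↦ ε (e p.1.1) * ε p.1.2) x) := by
  rw [chart_apply, signAct_span, chart_apply]
  exact Frame.span_eq_of_mul _ (isUnit_det_signMat (ε ∘ e)) (chartMat_signFlip ε e x)

end SignAction

section CellUnion

variable {k n : ℕ}

/-- The union of the open sets where one of the given Plücker coordinates does not vanish. -/
def cellUnion (s : Set (Fin k ↪o Fin n)) : Set (Grassmannian k n) := ⋃ f ∈ s, plueckerOpen f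

variable {s : Set (Fin k ↪o Fin n)} {a : Fin k ↪o Fin n}

lemma mem_cellUnion {x : Grassmannian k n} :
    x ∈ cellUnion s ↔ ∃ f ∈ s, x ∈ plueckerOpen f := by
  simp only [cellUnion, Set.mem_iUnion, exists_prop]

lemma isOpen_cellUnion (s : Set (Fin k ↪o Fin n)) : IsOpen (cellUnion s) :=
  isOpen_biUnion fun f _ ↦ isOpen_plueckerOpen f

lemma cellUnion_empty : cellUnion (∅ : Set (Fin k ↪o Fin n)) = ∅ := Set.biUnion_empty _

lemma cellUnion_univ : cellUnion (Set.univ : Set (Fin k ↪o Fin n)) = Set.univ :=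
  (Set.biUnion_univ _).trans iUnion_plueckerOpen

lemma cellUnion_insert (s : Set (Fin k ↪o Fin n)) (a : Fin k ↪o Fin n) :
    cellUnion (insert a s) = plueckerOpen a ∪ cellUnion s := Set.biUnion_insert ..

lemma cellUnion_subset_insert (s : Set (Fin k ↪o Fin n)) (a : Fin k ↪o Fin n) :
    cellUnion s ⊆ cellUnion (insert a s) :=
  Set.biUnion_subset_biUnion_left (Set.subset_insert a s)

lemma mapsTo_signAct_cellUnion (ε : Fin n → ℤˣ) (s : Set (Fin k ↪o Fin n)) :
    Set.MapsTo (signAct ε) (cellUnion s) (cellUnion s) := by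
  intro x hx
  obtain ⟨f, hf, h⟩ := mem_cellUnion.1 hx
  exact mem_cellUnion.2 ⟨f, hf, mapsTo_signAct_plueckerOpen ε f h⟩

/-- The condition on a family `s` of pivot sets that `a` comes next in an enumeration of all pivot
sets by weight of which `s` is an initial segment. -/
structure IsNextCell (s : Set (Fin k ↪o Fin n)) (a : Fin k ↪o Fin n) : Prop where
  notMem : a ∉ s
  weight_le : ∀ f ∈ s, weight f ≤ weight a
  mem_of_weight_lt : ∀ f : Fin k ↪o Fin n, weight f < weight a → f ∈ s

lemma IsNextCell.preimage_chart (h : IsNextCell s a) :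
    chart a ⁻¹' cellUnion s = offSet (leftEntries a) := by
  ext x
  rw [Set.mem_preimage, mem_cellUnion]
  constructor
  · rintro ⟨f, hf, hx⟩
    exact mem_offSet_of_chart_mem a (h.weight_le f hf) (ne_of_mem_of_not_mem hf h.notMem) hx
  · intro hx
    obtain ⟨f, hf, hx⟩ := chart_mem_of_mem_offSet a hx
    exact ⟨f, h.mem_of_weight_lt f hf, hx⟩

lemma IsNextCell.mapsTo_chart (h : IsNextCell s a) :
    Set.MapsTo (chart a) (offSet (leftEntries a)) (cellUnion s) := h.preimage_chart.ge

lemma mapsTo_chart_cellUnion_insert (s : Set (Fin k ↪o Fin n)) (a : Fin k ↪o Fin n) :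
    Set.MapsTo (chart a) Set.univ (cellUnion (insert a s)) := fun x _ ↦
  cellUnion_insert s a ▸ Or.inl (range_chart a ▸ Set.mem_range_self x)

theorem IsNextCell.pairMap_chart_bijective (R : Type*) [CommRing R] (h : IsNextCell s a) (i : ℕ) :
    Function.Bijective
      (pairMap R (chart a) (mapsTo_chart_cellUnion_insert s a) h.mapsTo_chart i) := by
  have image_univ : chart a '' Set.univ = plueckerOpen a := by rw [Set.image_univ, range_chart]
  have image_offSet : plueckerOpen a ∩ cellUnion s = chart a '' offSet (leftEntries a) := by
    rw [← h.preimage_chart, Set.image_preimage_eq_range_inter, range_chart]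
  have union_eq : chart a '' Set.univ ∪ cellUnion s = cellUnion (insert a s) := by
    rw [image_univ, cellUnion_insert]
  have excision := pairIncl_bijective (R := R) (image_univ ▸ isOpen_plueckerOpen a)
    (isOpen_cellUnion s) union_eq (image_univ ▸ image_offSet)
    (Set.subset_union_left.trans union_eq.le) (image_offSet.ge.trans Set.inter_subset_right) i
  convert excision.comp (pairMap_bijective_of_isEmbedding
    (isOpenEmbedding_chart a).isEmbedding Set.univ (offSet (leftEntries a)) i) using 1
  funext x
  rw [Function.comp_apply, pairIncl_eq_pairMap, pairMap_pairMap]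
  rfl

/-- The sign by which a coordinate sign change acts on the local homology at the cell `e`. -/
def cellSign (e : Fin k ↪o Fin n) : (Fin n → ℤˣ) →* ℤˣ where
  toFun ε := ∏ p ∈ leftEntries e, ε (e p.1.1) * ε p.1.2
  map_one' := by simp
  map_mul' ε δ := by simp only [Pi.mul_apply, mul_mul_mul_comm, Finset.prod_mul_distrib]

lemma cellSign_apply (e : Fin k ↪o Fin n) (ε : Fin n → ℤˣ) :
    cellSign e ε = ∏ p ∈ leftEntries e, ε (e p.1.1) * ε p.1.2 := rfl

lemma IsNextCell.rank_pairHomology {F : Type*} [Field F] (h : IsNextCell s a) (i : ℕ) :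
    Module.rank F (PairHomology F (cellUnion (insert a s)) (cellUnion s) i) =
      if i = (leftEntries a).card then 1 else 0 := by
  rw [← rank_pairHomology_offSet (F := F)]
  exact (LinearEquiv.ofBijective _ (h.pairMap_chart_bijective F i)).rank_eq.symm

lemma IsNextCell.pairMap_signAct {R : Type*} [CommRing R] (h : IsNextCell s a) (ε : Fin n → ℤˣ)
    (i : ℕ) (x : PairHomology R (cellUnion (insert a s)) (cellUnion s) i) :
    pairMap R (signAct ε) (mapsTo_signAct_cellUnion ε _) (mapsTo_signAct_cellUnion ε _) i x =
      cellSign a ε • x := by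
  obtain ⟨y, rfl⟩ := (h.pairMap_chart_bijective R i).2 x
  have equivariant : (signAct ε).comp (chart a) =
      (chart a).comp (signFlip fun p ↦ ε (a p.1.1) * ε p.1.2) :=
    ContinuousMap.ext (signAct_chart ε a)
  have smul_eq : cellSign a ε • pairMap R (chart a) (mapsTo_chart_cellUnion_insert s a)
      h.mapsTo_chart i y = pairMap R (chart a) (mapsTo_chart_cellUnion_insert s a)
        h.mapsTo_chart i (cellSign a ε • y) := (map_zsmul (pairMap R _ _ _ i) _ y).symm
  rw [smul_eq, cellSign_apply, ← pairMap_signFlip, pairMap_pairMap, pairMap_pairMap]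
  simp only [equivariant]

end CellUnion

section CellCount

variable {k n : ℕ} {F : Type} [Field F] {G : Type} [Group G] [Fintype G]
  [Invertible (Fintype.card G : F)] (ψ : G →* (Fin n → ℤˣ))

omit [Fintype G] in
lemma signAct_comp_map (s t : G) :
    (signAct (k := k) (ψ s)).comp (signAct (ψ t)) = signAct (ψ (s * t)) := by
  rw [signAct_comp, map_mul]

open scoped Classical in
lemma IsNextCell.rank_invHomology {s : Set (Fin k ↪o Fin n)} {a : Fin k ↪o Fin n}
    (h : IsNextCell s a) (i : ℕ) :
    Module.rank F (InvHomology F (fun g ↦ signAct (ψ g)) (cellUnion (insert a s))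
      (cellUnion s) i) = if (cellSign a).comp ψ = 1 ∧ (leftEntries a).card = i then 1 else 0 := by
  by_cases trivial : (cellSign a).comp ψ = 1
  · rw [rank_invHomology_of_trivial (signAct_comp_map ψ) (fun _ ↦ mapsTo_signAct_cellUnion _ _)
      (fun _ ↦ mapsTo_signAct_cellUnion _ _), h.rank_pairHomology]
    · simp only [trivial, true_and, eq_comm]
    · intro g x
      rw [h.pairMap_signAct, ← MonoidHom.comp_apply, trivial, MonoidHom.one_apply, one_smul]
  · rw [if_neg fun h' ↦ trivial h'.1]
    have sum_eq_zero := sum_hom_units_eq_zero ((Units.coeHom ℤ).comp ((cellSign a).comp ψ))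
      fun h' ↦ trivial (MonoidHom.ext fun g ↦ Units.ext (DFunLike.congr_fun h' g))
    have := subsingleton_invHomology (R := F) (signAct_comp_map ψ)
      (fun _ ↦ mapsTo_signAct_cellUnion _ _) (fun _ ↦ mapsTo_signAct_cellUnion _ _) (n := i) _
      (fun g ↦ h.pairMap_signAct (ψ g) i) sum_eq_zero
    exact rank_subsingleton' F _

/-- Families of pivot sets containing every pivot set of smaller weight than a member. -/
def DownClosed (s : Set (Fin k ↪o Fin n)) : Prop :=
  ∀ f ∈ s, ∀ f' : Fin k ↪o Fin n, weight f' < weight f → f' ∈ s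

lemma DownClosed.isNextCell {s : Set (Fin k ↪o Fin n)} {a : Fin k ↪o Fin n}
    (h : DownClosed (insert a s)) (ha : a ∉ s) (hle : ∀ f ∈ s, weight f ≤ weight a) :
    IsNextCell s a where
  notMem := ha
  weight_le := hle
  mem_of_weight_lt f hf := (h a (Set.mem_insert a s) f hf).resolve_left
    
    (by rintro rfl; exact hf.false)

lemma IsNextCell.downClosed {s : Set (Fin k ↪o Fin n)} {a : Fin k ↪o Fin n}
    (h : IsNextCell s a) : DownClosed s := fun f hf f' hf' ↦
  h.mem_of_weight_lt f' (hf'.trans_le (h.weight_le f hf))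

variable (hev : ∀ e : Fin k ↪o Fin n, (cellSign e).comp ψ = 1 → Even (leftEntries e).card)

open scoped Classical in
include hev in
theorem rank_invHomology_cellUnion (s : Finset (Fin k ↪o Fin n))
    (hs : DownClosed (s : Set (Fin k ↪o Fin n))) (i : ℕ) :
    Module.rank F (InvHomology F (fun g ↦ signAct (ψ g)) (cellUnion (s : Set (Fin k ↪o Fin n)))
        ∅ i) =
      ({e ∈ s | (cellSign e).comp ψ = 1 ∧ (leftEntries e).card = i} : Finset _).card := by
  have not_counted {i : ℕ} (hi : Odd i) (e : Fin k ↪o Fin n) :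
      ¬((cellSign e).comp ψ = 1 ∧ (leftEntries e).card = i) := by
    rintro ⟨trivial, rfl⟩
    exact Nat.not_even_iff_odd.2 hi (hev e trivial)
  induction s using Finset.induction_on_max_value (fun f : Fin k ↪o Fin n ↦ weight f)
    generalizing i with
  | empty =>
    rw [Finset.coe_empty, cellUnion_empty, Finset.filter_empty, Finset.card_empty, Nat.cast_zero,
      rank_zero_iff]
    exact subsingleton_relHomology_self i
  | insert a s ha hle ih =>
    rw [Finset.coe_insert] at hs ⊢
    have next : IsNextCell (s : Set (Fin k ↪o Fin n)) a := hs.isNextCell ha hle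
    have count := ih next.downClosed
    rw [rank_invHomology_add (Set.empty_subset _) (cellUnion_subset_insert _ a), count,
      next.rank_invHomology, Finset.filter_insert]
    · split_ifs with h
      · rw [Finset.card_insert_of_notMem fun h' ↦ ha (Finset.mem_filter.1 h').1, Nat.cast_add,
          Nat.cast_one, add_comm]
      · rw [zero_add]
    · intro i hi
      rw [← rank_zero_iff (R := F), count, Finset.filter_false_of_mem fun e _ ↦ not_counted hi e,
        Finset.card_empty, Nat.cast_zero]
    · intro i hi
      rw [← rank_zero_iff (R := F), next.rank_invHomology, if_neg (not_counted hi a)]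

open scoped Classical in
include hev in
theorem rank_pairHomology_grassmannian [Fintype (Fin k ↪o Fin n)] (i : ℕ)
    (hψ : ∀ g x, pairMap F (signAct (k := k) (ψ g)) (Set.mapsTo_univ _ Set.univ)
      (Set.mapsTo_empty _ ∅) i x = x) :
    Module.rank F (PairHomology F (Set.univ : Set (Grassmannian k n)) ∅ i) =
      ({e | (cellSign e).comp ψ = 1 ∧ (leftEntries e).card = i} :
        Finset (Fin k ↪o Fin n)).card := by
  rw [← rank_invHomology_cellUnion (F := F) ψ hev Finset.univ (fun _ _ f _ ↦ Finset.mem_univ f),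
    Finset.coe_univ, cellUnion_univ, rank_invHomology_of_trivial (signAct_comp_map ψ) _ _ hψ]

end CellCount

section Rotation

variable {k m : ℕ}

/-- The equivalence grouping the coordinates `2 q` and `2 q + 1` into a pair. -/
def pairEquiv (m : ℕ) : Fin (2 * m) ≃ Fin 2 × Fin m :=
  (finCongr (mul_comm 2 m)).trans (finProdFinEquiv.symm.trans (Equiv.prodComm _ _))

/-- Sign changes that agree on both coordinates of each pair. -/
def pairSigns (m : ℕ) : (Fin m → ℤˣ) →* (Fin (2 * m) → ℤˣ) where
  toFun t p := t (pairEquiv m p).2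
  map_one' := rfl
  map_mul' _ _ := rfl

/-- The rotation of `ℝ ^ (2 * m)` by the angle `θ q` in the plane of the `q`-th coordinate pair. -/
noncomputable def blockRotation (θ : Fin m → ℝ) : Matrix (Fin (2 * m)) (Fin (2 * m)) ℝ :=
  (Matrix.blockDiagonal fun q ↦
    !![Real.cos (θ q), -Real.sin (θ q); Real.sin (θ q), Real.cos (θ q)]).submatrix
      (pairEquiv m) (pairEquiv m)

lemma det_blockRotation (θ : Fin m → ℝ) : (blockRotation θ).det = 1 := by
  rw [blockRotation, Matrix.det_submatrix_equiv_self, Matrix.det_blockDiagonal]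
  refine Finset.prod_eq_one fun q _ ↦ ?_
  rw [Matrix.det_fin_two_of]
  linear_combination Real.cos_sq_add_sin_sq (θ q)

lemma isUnit_det_blockRotation (θ : Fin m → ℝ) : IsUnit (blockRotation θ).det :=
  det_blockRotation θ ▸ isUnit_one

lemma continuous_blockRotation : Continuous (blockRotation (m := m)) := by
  refine (Continuous.matrix_blockDiagonal <| continuous_pi fun q ↦
    continuous_matrix fun a b ↦ ?_).matrix_submatrix _ _
  fin_cases a <;> fin_cases b <;> simp only [Matrix.of_apply, Matrix.cons_val'] <;> fun_prop

/-- The angles turning the pairs with sign `-1` by `π`, scaled by the time `τ`. -/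
noncomputable def halfTurn (t : Fin m → ℤˣ) (τ : ℝ) (q : Fin m) : ℝ :=
  if t q = 1 then 0 else Real.pi * τ

lemma continuous_halfTurn (t : Fin m → ℤˣ) : Continuous (halfTurn t) := by
  refine continuous_pi fun q ↦ ?_
  simp only [halfTurn]
  split_ifs <;> fun_prop

lemma halfTurn_zero (t : Fin m → ℤˣ) : halfTurn t 0 = 0 := by
  ext q
  simp [halfTurn]

lemma blockRotation_zero : blockRotation (0 : Fin m → ℝ) = 1 := by
  simp [blockRotation, ← Matrix.one_fin_two, ← Pi.one_def]

lemma blockRotation_halfTurn_one (t : Fin m → ℤˣ) :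
    blockRotation (halfTurn t 1) = signMat (pairSigns m t) := by
  have block (q : Fin m) : !![Real.cos (halfTurn t 1 q), -Real.sin (halfTurn t 1 q);
      Real.sin (halfTurn t 1 q), Real.cos (halfTurn t 1 q)] =
      Matrix.diagonal fun _ ↦ ((t q : ℤ) : ℝ) := by
    rcases Int.units_eq_one_or (t q) with h | h <;> ext a b <;> fin_cases a <;> fin_cases b <;>
      simp [halfTurn, h]
  simp only [blockRotation, block]
  rw [Matrix.blockDiagonal_diagonal, Matrix.submatrix_diagonal_equiv]
  rfl

/-- The isotopy of the Grassmannian from the identity to a paired sign change. -/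
noncomputable def signIsotopy (k : ℕ) (t : Fin m → ℤˣ) :
    C(Grassmannian k (2 * m) × unitInterval, Grassmannian k (2 * m)) where
  toFun p := grassAct (blockRotation (halfTurn t p.2)) (isUnit_det_blockRotation _) p.1
  continuous_toFun := continuous_grassAct (M := fun τ : unitInterval ↦ blockRotation (halfTurn t τ))
    (continuous_blockRotation.comp ((continuous_halfTurn t).comp continuous_subtype_val))
    fun _ ↦ isUnit_det_blockRotation _

lemma signIsotopy_one (t : Fin m → ℤˣ) (x : Grassmannian k (2 * m)) :
    signIsotopy k t (x, 1) = signAct (pairSigns m t) x := by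
  change grassAct (blockRotation (halfTurn t 1)) _ x = grassAct (signMat (pairSigns m t)) _ x
  simp only [blockRotation_halfTurn_one]

lemma signIsotopy_zero (t : Fin m → ℤˣ) (x : Grassmannian k (2 * m)) :
    signIsotopy k t (x, 0) = x := by
  obtain ⟨A, rfl⟩ := Frame.span_surjective x
  refine congrArg Frame.span (Subtype.ext ?_)
  change A.toMatrix * blockRotation (halfTurn t 0) = A.toMatrix
  rw [halfTurn_zero, blockRotation_zero, Matrix.mul_one]

theorem pairMap_signAct_pairSigns (R : Type) [CommRing R] (t : Fin m → ℤˣ) (i : ℕ)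
    (x : PairHomology R (Set.univ : Set (Grassmannian k (2 * m))) ∅ i) :
    pairMap R (signAct (pairSigns m t)) (Set.mapsTo_univ _ Set.univ) (Set.mapsTo_empty _ ∅) i x =
      x := by
  rw [pairMap_eq_of_homotopy (signIsotopy k t) (g := ContinuousMap.id _) (signIsotopy_one t)
    (signIsotopy_zero t) (fun _ _ _ ↦ Set.mem_univ _) (fun _ h ↦ h.elim) _ _ (Set.mapsTo_id _)
    (Set.mapsTo_id _), pairMap_id]

end Rotation

section Inversions

open Finset

/-- The number of pairs `c < a` with `a ∈ J` and `c ∉ J`, that is, of inversions of the 0-1 word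
with ones at the positions in `J`. -/
def inversions (J : Finset ℕ) : ℕ := ∑ a ∈ J, #(range a \ J)

/-- The union of the pairs `{2 q, 2 q + 1}` for `q ∈ J`. -/
def double (J : Finset ℕ) : Finset ℕ := J.biUnion fun q ↦ {2 * q, 2 * q + 1}

lemma mem_double {J : Finset ℕ} {a : ℕ} : a ∈ double J ↔ a / 2 ∈ J := by
  simp only [double, mem_biUnion, mem_insert, mem_singleton]
  exact ⟨fun ⟨q, hq, h⟩ ↦ by rwa [show a / 2 = q by lia], fun h ↦ ⟨a / 2, h, by lia⟩⟩

lemma double_injective : Function.Injective double := fun J K h ↦ by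
  ext q
  simpa [mem_double] using congrArg (2 * q ∈ ·) h

@[to_additive]
lemma prod_double {M : Type*} [CommMonoid M] (J : Finset ℕ) (f : ℕ → M) :
    ∏ a ∈ double J, f a = ∏ q ∈ J, f (2 * q) * f (2 * q + 1) := by
  rw [double, prod_biUnion]
  · exact prod_congr rfl fun q _ ↦ prod_pair (by lia)
  · intro q _ r _ hqr
    simp only [Function.onFun, disjoint_left, mem_insert, mem_singleton]
    lia

lemma card_double (J : Finset ℕ) : #(double J) = 2 * #J := by
  rw [card_eq_sum_ones, sum_double, sum_const, smul_eq_mul, mul_comm]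

lemma range_sdiff_double {J : Finset ℕ} {a : ℕ} (ha : a / 2 ∈ J) :
    range a \ double J = double (range (a / 2) \ J) := by
  ext c
  simp only [mem_sdiff, mem_range, mem_double]
  refine and_congr_left fun hc ↦ ?_
  have : c / 2 ≠ a / 2 := fun h ↦ hc (h ▸ ha)
  lia

lemma inversions_double (J : Finset ℕ) : inversions (double J) = 4 * inversions J := by
  rw [inversions, inversions, sum_double, mul_sum]
  refine sum_congr rfl fun q hq ↦ ?_
  have half_even : 2 * q / 2 = q := by lia
  have half_odd : (2 * q + 1) / 2 = q := by lia
  rw [range_sdiff_double (by rwa [half_even]), range_sdiff_double (by rwa [half_odd]), half_even,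
    half_odd, card_double]
  ring

lemma exists_double_eq_iff {J : Finset ℕ} :
    (∃ K, double K = J) ↔ ∀ q, 2 * q ∈ J ↔ 2 * q + 1 ∈ J := by
  constructor
  · rintro ⟨K, rfl⟩ q
    rw [mem_double, mem_double, show (2 * q + 1) / 2 = 2 * q / 2 by lia]
  · intro h
    have mem_iff (a : ℕ) : a ∈ J ↔ 2 * (a / 2) ∈ J := by
      obtain ⟨q, rfl | rfl⟩ := a.even_or_odd'
      · rw [show 2 * (2 * q / 2) = 2 * q by lia]
      · rw [show 2 * ((2 * q + 1) / 2) = 2 * q by lia, h]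
    refine ⟨J.image (· / 2), ext fun a ↦ ?_⟩
    rw [mem_double, mem_image]
    exact ⟨fun ⟨b, hb, hab⟩ ↦ (mem_iff a).2 (hab ▸ (mem_iff b).1 hb), fun ha ↦ ⟨a, ha, rfl⟩⟩

lemma prod_pairs_mul_pow_card {M : Type*} [CommMonoid M] (s : ℕ → M) (J : Finset ℕ) :
    (∏ a ∈ J, ∏ c ∈ range a \ J, s a * s c) * (∏ a ∈ J, s a) ^ #J =
      ∏ a ∈ J, s a ^ a * ∏ c ∈ range (a + 1), s c := by
  induction J using Finset.induction_on_max with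
  | empty => simp
  | insert b J hJ ih =>
    have hb : b ∉ J := fun h ↦ (hJ b h).false
    have subset : J ⊆ range b := fun a ha ↦ mem_range.2 (hJ a ha)
    have lower : ∏ a ∈ J, ∏ c ∈ range a \ insert b J, s a * s c =
        ∏ a ∈ J, ∏ c ∈ range a \ J, s a * s c := prod_congr rfl fun a ha ↦ by
      rw [sdiff_insert_of_notMem fun h ↦ ((hJ a ha).trans (mem_range.1 h)).false]
    have top : (∏ c ∈ range b \ J, s b * s c) * (s b ^ (#J + 1) * ∏ a ∈ J, s a) =
        s b ^ b * ∏ c ∈ range (b + 1), s c := by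
      have : #J ≤ b := card_range b ▸ card_le_card subset
      rw [prod_mul_distrib, prod_const, card_sdiff_of_subset subset, card_range, prod_range_succ,
        ← prod_sdiff subset, mul_mul_mul_comm, ← pow_add, show b - #J + (#J + 1) = b + 1 by lia,
        pow_succ, mul_assoc, mul_comm (s b)]
    rw [prod_insert hb, prod_insert hb, prod_insert hb, card_insert_of_notMem hb, lower,
      sdiff_insert_of_notMem notMem_range_self, ← top, ← ih, mul_pow, pow_succ (∏ a ∈ J, s a)]
    simp only [mul_assoc, mul_comm, mul_left_comm]

/-- The sign by which a paired sign change acts on the cell with pivots `J`. -/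
def pivotSign (J : Finset ℕ) (t : ℕ → ℤˣ) : ℤˣ :=
  ∏ a ∈ J, ∏ c ∈ range a \ J, t (a / 2) * t (c / 2)

lemma prod_range_two_mul_half (t : ℕ → ℤˣ) (q : ℕ) : ∏ c ∈ range (2 * q), t (c / 2) = 1 := by
  induction q with
  | zero => simp
  | succ q ih =>
    rw [mul_add_one, prod_range_succ, prod_range_succ, ih, one_mul,
      show (2 * q + 1) / 2 = 2 * q / 2 by lia, Int.units_mul_self]

lemma pow_mul_prod_range_half (t : ℕ → ℤˣ) (a : ℕ) :
    t (a / 2) ^ a * ∏ c ∈ range (a + 1), t (c / 2) = t (a / 2) := by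
  obtain ⟨q, rfl | rfl⟩ := a.even_or_odd'
  · rw [prod_range_succ, prod_range_two_mul_half, pow_mul, Int.units_sq, one_pow, one_mul, one_mul]
  · rw [show 2 * q + 1 + 1 = 2 * (q + 1) by ring, prod_range_two_mul_half, pow_succ, pow_mul,
      Int.units_sq, one_pow, one_mul, mul_one]

lemma pivotSign_of_even {J : Finset ℕ} (hJ : Even #J) (t : ℕ → ℤˣ) :
    pivotSign J t = ∏ a ∈ J, t (a / 2) := by
  have := prod_pairs_mul_pow_card (fun c ↦ t (c / 2)) J
  simp only [pow_mul_prod_range_half] at this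
  rwa [Int.units_pow_eq_pow_mod_two, Nat.even_iff.1 hJ, pow_zero, mul_one] at this

lemma prod_mulSingle_half (J : Finset ℕ) (q : ℕ) :
    ∏ a ∈ J, Pi.mulSingle (M := fun _ ↦ ℤˣ) q (-1) (a / 2) =
      (if 2 * q ∈ J then -1 else 1) * if 2 * q + 1 ∈ J then -1 else 1 := by
  have fiber : J.filter (· / 2 = q) = ({2 * q, 2 * q + 1} : Finset ℕ).filter (· ∈ J) := by
    ext a
    simp only [mem_filter, mem_insert, mem_singleton, and_comm (a := a ∈ J)]
    exact and_congr_left fun _ ↦ by lia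
  simp only [Pi.mulSingle_apply]
  rw [← prod_filter, fiber, prod_filter, prod_pair (by lia)]

lemma forall_pivotSign_eq_one_iff {J : Finset ℕ} (hJ : Even #J) :
    (∀ t, pivotSign J t = 1) ↔ ∃ K, double K = J := by
  simp only [pivotSign_of_even hJ]
  constructor
  · refine fun h ↦ exists_double_eq_iff.2 fun q ↦ ?_
    have := prod_mulSingle_half J q ▸ h (Pi.mulSingle q (-1))
    split_ifs at this <;> simp_all
  · rintro ⟨K, rfl⟩ t
    rw [prod_double]
    refine prod_eq_one fun q _ ↦ ?_
    rw [show (2 * q + 1) / 2 = 2 * q / 2 by lia, Int.units_mul_self]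

end Inversions

section Pivots

open Finset

variable {k n m : ℕ}

/-- The set of pivot columns of a cell. -/
def pivots (e : Fin k ↪o Fin n) : Finset ℕ := univ.map (e.toEmbedding.trans Fin.valEmbedding)

lemma mem_pivots {e : Fin k ↪o Fin n} {a : ℕ} : a ∈ pivots e ↔ ∃ r, (e r : ℕ) = a := by
  simp [pivots]

lemma pivots_injective : Function.Injective (pivots : (Fin k ↪o Fin n) → Finset ℕ) := by
  intro e f h
  have range_eq : Set.range e = Set.range f := by
    ext c
    simpa [mem_pivots, Fin.val_inj] using congrArg ((c : ℕ) ∈ ·) h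
  exact DFunLike.coe_injective ((e.strictMono.range_inj f.strictMono).1 range_eq)

lemma exists_pivots_eq_iff {J : Finset ℕ} :
    (∃ e : Fin k ↪o Fin n, pivots e = J) ↔ J ∈ powersetCard k (range n) := by
  rw [mem_powersetCard]
  constructor
  · rintro ⟨e, rfl⟩
    refine ⟨fun a ha ↦ ?_, by rw [pivots, card_map, card_fin]⟩
    obtain ⟨r, rfl⟩ := mem_pivots.1 ha
    exact mem_range.2 (e r).2
  · rintro ⟨hn, hk⟩
    have lt (a) (ha : a ∈ J) : a < n := mem_range.1 (hn ha)
    refine ⟨(J.attachFin lt).orderEmbOfFin (by rw [card_attachFin, hk]), ?_⟩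
    rw [pivots, ← map_map]
    exact (congrArg (map _) (map_orderEmbOfFin_univ _ _)).trans (map_valEmbedding_attachFin lt)

@[to_additive]
lemma prod_leftEntries {M : Type*} [CommMonoid M] (e : Fin k ↪o Fin n) (f : ℕ → ℕ → M) :
    ∏ p ∈ leftEntries e, f (e p.1.1) p.1.2 =
      ∏ a ∈ pivots e, ∏ c ∈ range a \ pivots e, f a c := by
  rw [prod_sigma']
  refine prod_nbij (fun p ↦ ⟨e p.1.1, p.1.2⟩) ?_ ?_ ?_ fun _ _ ↦ rfl
  · intro p hp
    simp only [mem_sigma, mem_sdiff, mem_range, mem_pivots, Fin.val_inj, exists_apply_eq_apply,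
      not_exists, true_and]
    exact ⟨mem_leftEntries.1 hp, p.2⟩
  · rintro ⟨⟨r, c⟩, h⟩ - ⟨⟨r', c'⟩, h'⟩ - heq
    simp only [Sigma.mk.injEq, heq_eq_eq, Fin.val_inj, e.injective.eq_iff] at heq
    obtain ⟨rfl, rfl⟩ := heq
    rfl
  · rintro ⟨a, c⟩ hac
    simp only [mem_coe, mem_sigma, mem_sdiff, mem_range] at hac
    obtain ⟨ha, hlt, hc⟩ := hac
    obtain ⟨r, rfl⟩ := mem_pivots.1 ha
    exact ⟨⟨(r, ⟨c, hlt.trans (e r).2⟩), fun s hs ↦ hc (mem_pivots.2 ⟨s, congrArg Fin.val hs⟩)⟩,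
      mem_leftEntries.2 hlt, rfl⟩

lemma card_leftEntries (e : Fin k ↪o Fin n) : #(leftEntries e) = inversions (pivots e) := by
  rw [card_eq_sum_ones, sum_leftEntries e fun _ _ ↦ 1, inversions]
  simp only [card_eq_sum_ones]

lemma cellSign_pairSigns (e : Fin k ↪o Fin (2 * m)) (t : ℕ → ℤˣ) :
    cellSign e (pairSigns m fun q ↦ t q) = pivotSign (pivots e) t :=
  prod_leftEntries e fun a c ↦ t (a / 2) * t (c / 2)

lemma cellSign_comp_pairSigns_eq_one_iff (hk : Even k) (e : Fin k ↪o Fin (2 * m)) :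
    (cellSign e).comp (pairSigns m) = 1 ↔ ∃ J, double J = pivots e := by
  have card_even : Even #(pivots e) := by rwa [pivots, card_map, card_fin]
  rw [← forall_pivotSign_eq_one_iff card_even, MonoidHom.ext_iff,
    Fin.val_injective.surjective_comp_right.forall]
  exact forall_congr' fun t ↦ by rw [← cellSign_pairSigns]; rfl

lemma even_card_leftEntries (hk : Even k) (e : Fin k ↪o Fin (2 * m))
    (h : (cellSign e).comp (pairSigns m) = 1) : Even #(leftEntries e) := by
  obtain ⟨J, hJ⟩ := (cellSign_comp_pairSigns_eq_one_iff hk e).1 h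
  rw [card_leftEntries, ← hJ, inversions_double]
  exact (show Even 4 by decide).mul_right _

lemma double_mem_powersetCard_iff {j : ℕ} {J : Finset ℕ} :
    double J ∈ powersetCard (2 * j) (range (2 * m)) ↔ J ∈ powersetCard j (range m) := by
  simp only [mem_powersetCard, card_double, mul_right_inj' two_ne_zero, subset_iff, mem_double,
    mem_range]
  refine and_congr_left fun _ ↦ ⟨fun h q hq ↦ ?_, fun h a ha ↦ ?_⟩
  · have := @h (2 * q) (by rwa [show 2 * q / 2 = q by lia])
    lia
  · have := h ha
    lia

lemma card_cells_of_pairSigns_trivial (j m i : ℕ) [Fintype (Fin (2 * j) ↪o Fin (2 * m))]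
    [DecidablePred fun e : Fin (2 * j) ↪o Fin (2 * m) ↦
      (cellSign e).comp (pairSigns m) = 1 ∧ #(leftEntries e) = i] :
    #{e : Fin (2 * j) ↪o Fin (2 * m) |
        (cellSign e).comp (pairSigns m) = 1 ∧ #(leftEntries e) = i} =
      #{J ∈ powersetCard j (range m) | 4 * inversions J = i} := by
  refine (card_image_of_injective _ pivots_injective).symm.trans
    (.trans (congrArg card ?_) (card_image_of_injective _ double_injective))
  ext K
  simp only [mem_image, mem_filter, mem_univ, true_and, card_leftEntries,
    cellSign_comp_pairSigns_eq_one_iff (even_two_mul j)]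
  constructor
  · rintro ⟨e, ⟨⟨J, hJ⟩, rfl⟩, rfl⟩
    refine ⟨J, ⟨double_mem_powersetCard_iff.1 ?_, by rw [← hJ, inversions_double]⟩, hJ⟩
    rw [hJ, ← exists_pivots_eq_iff]
    exact ⟨e, rfl⟩
  · rintro ⟨J, ⟨hJ, rfl⟩, rfl⟩
    obtain ⟨e, he⟩ := exists_pivots_eq_iff.2 (double_mem_powersetCard_iff.2 hJ)
    exact ⟨e, ⟨⟨J, he.symm⟩, by rw [he, inversions_double]⟩, he⟩

theorem rank_pairHomology_grassmannian_even {F : Type} [Field F] (h2 : (2 : F) ≠ 0) (j m i : ℕ) :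
    Module.rank F (PairHomology F (Set.univ : Set (Grassmannian (2 * j) (2 * m))) ∅ i) =
      #{J ∈ powersetCard j (range m) | 4 * inversions J = i} := by
  classical
  have : Fintype (Fin (2 * j) ↪o Fin (2 * m)) := Fintype.ofFinite _
  have : Invertible (Fintype.card (Fin m → ℤˣ) : F) := invertibleOfNonzero (by simp [h2])
  rw [rank_pairHomology_grassmannian (pairSigns m) (even_card_leftEntries (even_two_mul j)) i
    fun t x ↦ pairMap_signAct_pairSigns F t i x, card_cells_of_pairSigns_trivial]

end Pivots

section GaussianBinomial

open Finset

/-- The generating polynomial of the `j`-element subsets of `{0, …, m - 1}` by their number of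
inversions, which is the Gaussian binomial coefficient. -/
noncomputable def inversionPoly (m j : ℕ) : Polynomial ℤ :=
  ∑ J ∈ powersetCard j (range m), X ^ inversions J

lemma inversions_insert {m : ℕ} {J : Finset ℕ} (hJ : J ⊆ range m) :
    inversions (insert m J) = inversions J + (m - #J) := by
  rw [inversions, sum_insert fun h ↦ notMem_range_self (hJ h), add_comm, inversions,
    sdiff_insert_of_notMem notMem_range_self, card_sdiff_of_subset hJ, card_range]
  congr 1
  exact sum_congr rfl fun a ha ↦ by
    rw [sdiff_insert_of_notMem fun h ↦ (mem_range.1 h).not_gt (mem_range.1 (hJ ha))]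

lemma inversions_range (m : ℕ) : inversions (range m) = 0 :=
  sum_eq_zero fun a ha ↦ by
    rw [sdiff_eq_empty_iff_subset.2 (range_mono (mem_range.1 ha).le), card_empty]

lemma inversionPoly_succ_succ (m j : ℕ) :
    inversionPoly (m + 1) (j + 1) = inversionPoly m (j + 1) + X ^ (m - j) * inversionPoly m j := by
  have notMem {r : ℕ} {J : Finset ℕ} (hJ : J ∈ powersetCard r (range m)) : m ∉ J := fun h ↦
    notMem_range_self ((mem_powersetCard.1 hJ).1 h)
  rw [inversionPoly, range_add_one, powersetCard_succ_insert notMem_range_self, sum_union,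
    sum_image, inversionPoly, inversionPoly, mul_sum]
  · congr 1
    refine sum_congr rfl fun J hJ ↦ ?_
    rw [mem_powersetCard] at hJ
    rw [inversions_insert hJ.1, hJ.2, pow_add, mul_comm]
  · intro J hJ K hK h
    rw [← erase_insert (notMem hJ), ← erase_insert (notMem hK)]
    exact congrArg (erase · m) h
  · rw [disjoint_left]
    intro J hJ hJ'
    obtain ⟨K, -, rfl⟩ := mem_image.1 hJ'
    exact notMem hJ (mem_insert_self m K)

lemma inversionPoly_zero_right (m : ℕ) : inversionPoly m 0 = 1 := by
  simp [inversionPoly, inversions]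

lemma inversionPoly_self (m : ℕ) : inversionPoly m m = 1 := by
  have subsets : powersetCard m (range m) = {range m} := by
    simpa only [card_range] using powersetCard_self (range m)
  rw [inversionPoly, subsets, sum_singleton, inversions_range, pow_zero]

lemma qInt_add (a b : ℕ) : qInt (a + b) = qInt a + X ^ a * qInt b := by
  simp only [qInt, sum_range_add, mul_sum, pow_add]

lemma qFact_succ (r : ℕ) : qFact (r + 1) = qInt (r + 1) * qFact r := rfl

lemma qFact_ne_zero (r : ℕ) : qFact r ≠ 0 := by
  induction r with
  | zero => exact one_ne_zero
  | succ r ih =>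
    refine mul_ne_zero (fun h ↦ ?_) ih
    have eval_one : (qInt (r + 1)).eval 1 = r + 1 := by simp [qInt, eval_finsetSum]
    rw [h, eval_zero] at eval_one
    lia

lemma inversionPoly_add_mul_qFact (a b : ℕ) :
    inversionPoly (a + b) a * (qFact a * qFact b) = qFact (a + b) := by
  induction a generalizing b with
  | zero => simp [inversionPoly_zero_right, qFact]
  | succ a iha =>
    induction b with
    | zero => simp [inversionPoly_self, qFact]
    | succ b ihb =>
      have ih := iha (b + 1)
      rw [show a + (b + 1) = a + 1 + b by ring, qFact_succ b] at ih
      rw [qFact_succ a] at ihb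
      have qInt_split : qInt (a + 1 + b + 1) = qInt (b + 1) + X ^ (b + 1) * qInt (a + 1) := by
        rw [← qInt_add, show b + 1 + (a + 1) = a + 1 + b + 1 by ring]
      rw [← add_assoc, inversionPoly_succ_succ, qFact_succ (a + 1 + b), qInt_split, qFact_succ a,
        qFact_succ b, show a + 1 + b - a = b + 1 by lia]
      linear_combination qInt (b + 1) * ihb + X ^ (b + 1) * qInt (a + 1) * ih

theorem eq_inversionPoly_of_mul_qFact {m j : ℕ} (h : j ≤ m) {P : Polynomial ℤ}
    (hP : P * (qFact j * qFact (m - j)) = qFact m) : P = inversionPoly m j := by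
  refine mul_right_cancel₀ (mul_ne_zero (qFact_ne_zero j) (qFact_ne_zero (m - j))) (hP.trans ?_)
  simpa only [Nat.add_sub_cancel' h] using (inversionPoly_add_mul_qFact j (m - j)).symm

lemma coeff_inversionPoly_comp (m j d i : ℕ) :
    ((inversionPoly m j).comp (X ^ d)).coeff i =
      #{J ∈ powersetCard j (range m) | d * inversions J = i} := by
  rw [inversionPoly, Polynomial.sum_comp, finsetSum_coeff, card_filter, Nat.cast_sum]
  refine sum_congr rfl fun J _ ↦ ?_
  rw [X_pow_comp, ← pow_mul, coeff_X_pow, Nat.cast_ite, Nat.cast_one, Nat.cast_zero]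
  simp only [eq_comm]

end GaussianBinomial

section Duality

variable {F : Type} [Field F]

instance preservesHomology_linearYoneda :
    ((linearYoneda F (ModuleCat.{0} F)).obj (ModuleCat.of F F)).PreservesHomology := by
  have := Module.injective_of_isSemisimpleRing F F
  have := Module.injective_object_of_injective_module F F
  refine Functor.preservesHomology_of_map_exact _ fun S hS ↦ ?_
  rw [← ShortComplex.exact_map_iff_of_faithful _ (forget₂ (ModuleCat F) Ab)]
  exact (hS.map (preadditiveYonedaObj (ModuleCat.of F F))).map (forget₂ _ Ab)

variable (F) in
/-- Singular cohomology over a field is the dual of singular homology. -/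
noncomputable def singularCohomologyIso (X : TopCat.{0}) (n : ℕ) : singularCohomology F X n ≅
    ModuleCat.of F ((singularChainComplex F X).homology n ⟶ ModuleCat.of F F) :=
  ShortComplex.mapHomologyIso ((singularChainComplex F X).op.sc n)
      ((linearYoneda F (ModuleCat.{0} F)).obj (ModuleCat.of F F)) ≪≫
    ((linearYoneda F (ModuleCat.{0} F)).obj (ModuleCat.of F F)).mapIso
      ((singularChainComplex F X).homologyOp n)

lemma finrank_singularCohomology_eq_homology (X : TopCat.{0}) (n : ℕ) :
    Module.finrank F (singularCohomology F X n) =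
      Module.finrank F ((singularChainComplex F X).homology n) := by
  rw [(singularCohomologyIso F X n).toLinearEquiv.finrank_eq]
  exact (ModuleCat.homLinearEquiv (S := F)).finrank_eq.trans Subspace.dual_finrank_eq

end Duality

section Comparison

variable (R : Type) [CommRing R] (X : TopCat.{0}) (n : ℕ)

/-- The `n`-simplices of the singular simplicial set, as continuous maps from the standard
simplex. -/
noncomputable def simplexEquiv : (TopCat.toSSet.obj X).obj (Opposite.op (SimplexCategory.mk n)) ≃
    C(stdSimplex ℝ (Fin (n + 1)), X) :=
  X.toSSetObjEquiv _

/-- The inclusion of the `n`-chains of the singular chain complex into the module of singular chains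
of all degrees. -/
noncomputable def toSingChain : (singularChainComplex R X).X n →ₗ[R] SingChain R X :=
  Finsupp.lmapDomain R R fun s ↦ ⟨n, simplexEquiv X n s⟩

lemma toSingChain_single
    (s : (TopCat.toSSet.obj X).obj (Opposite.op (SimplexCategory.mk n))) :
    toSingChain R X n (Finsupp.single s 1) = ofSimplex R (simplexEquiv X n s) :=
  Finsupp.mapDomain_single

lemma toSingChain_injective : Function.Injective (toSingChain R X n) :=
  Finsupp.mapDomain_injective fun s t h ↦ (simplexEquiv X n).injective (by simpa using h)

lemma range_toSingChain : LinearMap.range (toSingChain R X n) = chainsIn R Set.univ n := by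
  change LinearMap.range (Finsupp.lmapDomain R R fun s ↦
    (⟨n, simplexEquiv X n s⟩ : Σ k : ℕ, C(stdSimplex ℝ (Fin (k + 1)), X))) = _
  rw [← Submodule.map_top, ← Finsupp.supported_univ, Finsupp.lmapDomain_supported, chainsIn]
  congr 1
  ext ⟨k, σ⟩
  simp only [Set.image_univ, Set.mem_range, Set.mem_ofPred_eq, Set.subset_univ, and_true]
  constructor
  · rintro ⟨s, h⟩
    exact (congrArg Sigma.fst h).symm
  · rintro rfl
    exact ⟨(simplexEquiv X k).symm σ, by rw [Equiv.apply_symm_apply]⟩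

lemma simplexEquiv_δ
    (s : (TopCat.toSSet.obj X).obj (Opposite.op (SimplexCategory.mk (n + 1)))) (i : Fin (n + 2)) :
    simplexEquiv X n ((TopCat.toSSet.obj X).δ i s) =
      (simplexEquiv X (n + 1) s).comp ⟨_, stdSimplex.continuous_map i.succAbove⟩ :=
  ContinuousMap.ext fun t ↦ TopCat.toSSetObjEquiv_δ_apply s i t

variable {R} in
lemma sum_neg_one_pow_zsmul_hom_apply {M N : ModuleCat R} {ι : Type*} (t : Finset ι) (a : ι → ℕ)
    (f : ι → (M ⟶ N)) (x : M) :
    (∑ i ∈ t, (-1 : ℤ) ^ a i • f i).hom x = ∑ i ∈ t, (-1 : R) ^ a i • (f i).hom x := by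
  rw [ModuleCat.hom_sum, LinearMap.sum_apply]
  refine Finset.sum_congr rfl fun i _ ↦ ?_
  rw [ModuleCat.hom_zsmul, LinearMap.smul_apply, ← Int.cast_smul_eq_zsmul R, Int.cast_pow,
    Int.cast_neg, Int.cast_one]

lemma singularChainComplex_d_single
    (s : (TopCat.toSSet.obj X).obj (Opposite.op (SimplexCategory.mk (n + 1)))) :
    ((singularChainComplex R X).d (n + 1) n).hom (Finsupp.single s 1) =
      (∑ i : Fin (n + 2), (-1 : R) ^ (i : ℕ) •
        Finsupp.single ((TopCat.toSSet.obj X).δ i s) 1 : _ →₀ R) := by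
  have d_eq : (singularChainComplex R X).d (n + 1) n = _ :=
    AlgebraicTopology.AlternatingFaceMapComplex.obj_d_eq (TopCat.toSSet.obj X ⋙ ModuleCat.free R) n
  refine (congrArg (fun f ↦ f.hom (Finsupp.single s 1)) d_eq).trans ?_
  refine (sum_neg_one_pow_zsmul_hom_apply _ _ _ _).trans (Finset.sum_congr rfl fun i _ ↦ ?_)
  exact congrArg _ Finsupp.mapDomain_single

lemma singBoundary_toSingChain_succ (z : (singularChainComplex R X).X (n + 1)) :
    singBoundary (toSingChain R X (n + 1) z) =
      toSingChain R X n (((singularChainComplex R X).d (n + 1) n).hom z) := by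
  suffices singBoundary ∘ₗ toSingChain R X (n + 1) =
      toSingChain R X n ∘ₗ ((singularChainComplex R X).d (n + 1) n).hom from
    LinearMap.congr_fun this z
  refine Finsupp.lhom_ext' fun s ↦ LinearMap.ext_ring ?_
  change singBoundary (toSingChain R X (n + 1) (Finsupp.single s 1)) =
    toSingChain R X n (((singularChainComplex R X).d (n + 1) n).hom (Finsupp.single s 1))
  rw [toSingChain_single, singBoundary_ofSimplex_succ, singularChainComplex_d_single]
  refine Eq.trans ?_ (map_sum (toSingChain R X n) _ _).symm
  refine Finset.sum_congr rfl fun i _ ↦ ?_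
  rw [← simplexEquiv_δ, ← toSingChain_single]
  exact (map_smul (toSingChain R X n) _ _).symm

lemma singBoundary_toSingChain_zero (z : (singularChainComplex R X).X 0) :
    singBoundary (toSingChain R X 0 z) = 0 := by
  suffices singBoundary ∘ₗ toSingChain R X 0 = 0 from LinearMap.congr_fun this z
  refine Finsupp.lhom_ext' fun s ↦ LinearMap.ext_ring ?_
  change singBoundary (toSingChain R X 0 (Finsupp.single s 1)) = 0
  rw [toSingChain_single, singBoundary_ofSimplex_zero]

lemma singBoundary_toSingChain_eq_zero_iff (z : (singularChainComplex R X).X n) :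
    singBoundary (toSingChain R X n z) = 0 ↔
      ((singularChainComplex R X).d n (n - 1)).hom z = 0 := by
  cases n with
  | zero =>
    rw [singBoundary_toSingChain_zero, HomologicalComplex.shape _ _ _ (by simp)]
    exact iff_of_true rfl rfl
  | succ n =>
    rw [singBoundary_toSingChain_succ, map_eq_zero_iff _ (toSingChain_injective R X n)]
    rfl

lemma map_toSingChain_ker :
    (LinearMap.ker ((singularChainComplex R X).d n (n - 1)).hom).map (toSingChain R X n) =
      relCycles singBoundary (chainsIn R Set.univ) (chainsIn R ∅) n := by
  ext y
  rw [mem_relCycles, ← range_toSingChain]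
  constructor
  · rintro ⟨z, hz, rfl⟩
    rw [(singBoundary_toSingChain_eq_zero_iff R X n z).2 hz]
    exact ⟨⟨z, rfl⟩, zero_mem _⟩
  · rintro ⟨⟨z, rfl⟩, hz⟩
    exact ⟨z, (singBoundary_toSingChain_eq_zero_iff R X n z).1 (eq_zero_of_mem_chainsIn_empty hz),
      rfl⟩

lemma map_toSingChain_range :
    (LinearMap.range ((singularChainComplex R X).d (n + 1) n).hom).map (toSingChain R X n) =
      relBoundaries singBoundary (chainsIn R Set.univ) (chainsIn R ∅) n := by
  ext y
  rw [mem_relBoundaries, ← range_toSingChain]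
  constructor
  · rintro ⟨_, ⟨w, rfl⟩, rfl⟩
    exact ⟨0, zero_mem _, _, ⟨w, rfl⟩, by rw [zero_add, singBoundary_toSingChain_succ]⟩
  · rintro ⟨a, ha, _, ⟨w, rfl⟩, rfl⟩
    rw [eq_zero_of_mem_chainsIn_empty ha, zero_add, singBoundary_toSingChain_succ]
    exact ⟨_, ⟨w, rfl⟩, rfl⟩

/-- Relative cycles of the pair `(X, ∅)` are the cycles of the singular chain complex. -/
noncomputable def cyclesEquiv : LinearMap.ker ((singularChainComplex R X).d n (n - 1)).hom ≃ₗ[R]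
    relCycles (singBoundary (R := R) (X := X)) (chainsIn R Set.univ) (chainsIn R ∅) n :=
  (Submodule.equivMapOfInjective _ (toSingChain_injective R X n) _).trans
    (LinearEquiv.ofEq _ _ (map_toSingChain_ker R X n))

lemma map_cyclesEquiv_range :
    (LinearMap.range ((singularChainComplex R X).sc' (n + 1) n (n - 1)).moduleCatToCycles).map
        (cyclesEquiv R X n).toLinearMap =
      (relBoundaries singBoundary (chainsIn R Set.univ) (chainsIn R ∅) n).submoduleOf _ := by
  ext y
  rw [← map_toSingChain_range]
  constructor
  · rintro ⟨_, ⟨w, rfl⟩, rfl⟩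
    exact ⟨_, ⟨w, rfl⟩, rfl⟩
  · rintro ⟨_, ⟨w, rfl⟩, h⟩
    exact ⟨_, ⟨w, rfl⟩, Subtype.ext h⟩

/-- The homology of the singular chain complex is the homology of the pair `(X, ∅)`. -/
noncomputable def homologyEquiv :
    (singularChainComplex R X).homology n ≃ₗ[R] PairHomology R (Set.univ : Set X) ∅ n :=
  (((singularChainComplex R X).homologyIsoSc' (n + 1) n (n - 1) (ChainComplex.prev ℕ n)
      (by cases n <;> simp)).trans
    (ShortComplex.moduleCatHomologyIso _)).toLinearEquiv.trans
  (Submodule.Quotient.equiv _ _ (cyclesEquiv R X n) (map_cyclesEquiv_range R X n))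

lemma finrank_singularCohomology {F : Type} [Field F] :
    Module.finrank F (singularCohomology F X n) =
      Module.finrank F (PairHomology F (Set.univ : Set X) ∅ n) :=
  (finrank_singularCohomology_eq_homology X n).trans (homologyEquiv F X n).finrank_eq

end Comparison

theorem poincare_poly_grassmannian_even_general {F : Type} [Field F] (h2 : (2 : F) ≠ 0) {m j : ℕ}
    (hjm : j ≤ m) {P : Polynomial ℤ} (hP : P * (qFact j * qFact (m - j)) = qFact m) (i : ℕ) :
    (Module.finrank F (singularCohomology F (TopCat.of (Grassmannian (2 * j) (2 * m))) i) : ℤ) =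
      (P.comp (X ^ 4)).coeff i := by
  rw [finrank_singularCohomology, eq_inversionPoly_of_mul_qFact hjm hP, coeff_inversionPoly_comp,
    Nat.cast_inj]
  exact Module.finrank_eq_of_rank_eq (rank_pairHomology_grassmannian_even h2 j m i)

/-- The Poincaré polynomial of the real Grassmannian `Gr(2j, 2m)` over `ℚ` equals
the Gaussian binomial coefficient `[m choose j]` evaluated at `t^4`:
`Σ_i dim_ℚ H^i(Gr(2j, 2m); ℚ) tⁱ = [m choose j]_{t^4}`, stated coefficientwise.
Here `B` is the Gaussian binomial coefficient, characterized by
`B a b * ([b]_q! [a-b]_q!) = [a]_q!`. -/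
theorem poincare_poly_grassmannian_even (m j : ℕ) (hjm : j ≤ m)
    (B : ℕ → ℕ → Polynomial ℤ)
    (hB : ∀ a b : ℕ, b ≤ a → B a b * (qFact b * qFact (a - b)) = qFact a) :
    ∀ i : ℕ,
      (Module.finrank ℚ
        (singularCohomology ℚ (TopCat.of (Grassmannian (2 * j) (2 * m))) i) : ℤ)
        = ((B m j).comp (X ^ 4)).coeff i :=
  poincare_poly_grassmannian_even_general two_ne_zero hjm (hB m j hjm)
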